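/- arXiv:1110.1689 — 2 statements merged into one kernel-verified Lean document; each statement's English description precedes it below -/
import Mathlib

section
/- Assume that W_J is finite. Let w ∈ W and let w' = π_{J,δ}(w) ∈ W^J. Then there exists x ∈ W_{I(J,w',δ)} such that w →_{J,δ} w' x and w' x is an element of minimal length in the orbit W_J ·_δ {w} of w under δ-twisted partial conjugation. -/
open CoxeterSystem

variable {B : Type*} [Finite B] {W : Type*} [Group W] {M : CoxeterMatrix B}

namespace PartialConjugation

/-- The standard parabolic subgroup `W_J` of `W`, generated by the simple
reflections indexed by `J`. -/
def parab (cs : CoxeterSystem M W) (J : Set B) : Subgroup W :=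
  Subgroup.closure (cs.simple '' J)

/-- The simple reflection `s_j` (for `j ∈ J`), viewed as an element of `W_J`. -/
def sJ (cs : CoxeterSystem M W) (J : Set B) (j : B) (hj : j ∈ J) : parab cs J :=
  ⟨cs.simple j, Subgroup.subset_closure ⟨j, hj, rfl⟩⟩

/-- `w ∈ W^J`: `w` is a minimal length representative of its left coset `w W_J`. -/
def IsMinRep (cs : CoxeterSystem M W) (J : Set B) (w : W) : Prop :=
  ∀ v ∈ parab cs J, cs.length w ≤ cs.length (w * v)

variable (cs : CoxeterSystem M W) (J J' : Set B) (δ : parab cs J ≃* parab cs J')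

/-- `δ` carries the set of simple reflections indexed by `J` onto the set of
simple reflections indexed by `J'`. -/
def MapsSimples : Prop :=
  (∀ j, ∀ hj : j ∈ J, ∃ j' ∈ J', (δ (sJ cs J j hj) : W) = cs.simple j') ∧
  (∀ j' ∈ J', ∃ j, ∃ hj : j ∈ J, (δ (sJ cs J j hj) : W) = cs.simple j')

/-- `K` is a `w`-special subset of `J`. -/
def WSpecial (w : W) (K : Set B) : Prop :=
  K ⊆ J ∧ ∀ k ∈ K, ∃ j, ∃ hjJ : j ∈ J, j ∈ K ∧
    w * cs.simple k * w⁻¹ = (δ (sJ cs J j hjJ) : W)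

/-- The set `I(J, w, δ)`: the union of all `w`-special subsets of `J`. -/
def Iset (w : W) : Set B := ⋃₀ {K | WSpecial cs J J' δ w K}

/-- The set `W_J ·_δ V = {δ(u) v u⁻¹ : u ∈ W_J, v ∈ V}`. -/
def orbSet (V : Set W) : Set W :=
  {x | ∃ u : parab cs J, ∃ v ∈ V, x = (δ u : W) * v * (u : W)⁻¹}

/-- The orbit of `x` under the `δ`-twisted partial conjugation action of `W_J`. -/
def orbitOf (x : W) : Set W := orbSet cs J J' δ {x}

/-- The coset `w W_{I(J,w,δ)}`. -/
def coset (w : W) : Set W :=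
  {x | ∃ v ∈ parab cs (Iset cs J J' δ w), x = w * v}

/-- Elementary step `v →_i v'` of `δ`-twisted conjugation: `v' = δ(s_i) v s_i`
with `i ∈ J` and `ℓ(v') ≤ ℓ(v)`. -/
def StepRel (v v' : W) : Prop :=
  ∃ i, ∃ hi : i ∈ J, v' = (δ (sJ cs J i hi) : W) * v * cs.simple i ∧
    cs.length v' ≤ cs.length v

/-- The relation `v →_{J,δ} v'`. -/
def ToRel : W → W → Prop := Relation.ReflTransGen (StepRel cs J J' δ)

/-- The relation `v ≈_{J,δ} v'`. -/
def Approx (v v' : W) : Prop := ToRel cs J J' δ v v' ∧ ToRel cs J J' δ v' v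

/-- The Bruhat order on `W`. -/
def bruhatLE (cs : CoxeterSystem M W) : W → W → Prop :=
  Relation.ReflTransGen
    (fun a b => ∃ t, cs.IsReflection t ∧ b = a * t ∧ cs.length a < cs.length b)

/-- The set of minimal length elements in the orbit of `x`. -/
def orbMin (x : W) : Set W :=
  {y ∈ orbitOf cs J J' δ x | ∀ z ∈ orbitOf cs J J' δ x, cs.length y ≤ cs.length z}


section Geo
variable {B : Type*} [Fintype B] [DecidableEq B] {W : Type*} [Group W]

/-- Entries of the Tits form. -/
noncomputable def kk (M : CoxeterMatrix B) (i j : B) : ℝ := -Real.cos (Real.pi / M i j)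

lemma kk_self (M : CoxeterMatrix B) (i : B) : kk M i i = 1 := by
  simp [kk]

lemma kk_symm (M : CoxeterMatrix B) (i j : B) : kk M i j = kk M j i := by
  simp [kk, M.symmetric i j]

/-- The Tits form. -/
noncomputable def bil (M : CoxeterMatrix B) : (B → ℝ) →ₗ[ℝ] (B → ℝ) →ₗ[ℝ] ℝ :=
  Matrix.toLinearMap₂' ℝ (Matrix.of (kk M))

/-- Simple roots. -/
abbrev al (i : B) : B → ℝ := Pi.single i 1

lemma bil_al (M : CoxeterMatrix B) (i j : B) : bil M (al i) (al j) = kk M i j := by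
  simp [bil, al, Matrix.toLinearMap₂'_apply, Pi.single_apply]

lemma bil_symm (M : CoxeterMatrix B) (v w : B → ℝ) : bil M v w = bil M w v := by
  simp only [bil, Matrix.toLinearMap₂'_apply, Matrix.of_apply]
  rw [Finset.sum_comm]
  refine Finset.sum_congr rfl fun i _ => Finset.sum_congr rfl fun j _ => ?_
  rw [kk_symm]; simp only [smul_eq_mul]; ring

/-- The reflections of the geometric representation. -/
noncomputable def rf (M : CoxeterMatrix B) (i : B) : Module.End ℝ (B → ℝ) :=
  LinearMap.id - (2 : ℝ) • (bil M (al i)).smulRight (al i)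

lemma rf_apply (M : CoxeterMatrix B) (i : B) (v : B → ℝ) :
    rf M i v = v - (2 * bil M (al i) v) • al i := by
  simp [rf, smul_smul]

lemma rf_al (M : CoxeterMatrix B) (i : B) : rf M i (al i) = - al i := by
  rw [rf_apply, bil_al, kk_self]; module

lemma rf_rf (M : CoxeterMatrix B) (i : B) (v : B → ℝ) : rf M i (rf M i v) = v := by
  rw [rf_apply M i (rf M i v), rf_apply]
  simp only [map_sub, map_smul, bil_al, kk_self, smul_eq_mul]
  module

lemma bil_rf (M : CoxeterMatrix B) (i : B) (v w : B → ℝ) :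
    bil M (rf M i v) (rf M i w) = bil M v w := by
  simp only [rf_apply, map_sub, map_smul, LinearMap.sub_apply, LinearMap.smul_apply, bil_al,
    kk_self, smul_eq_mul]
  rw [bil_symm M v (al i)]; ring

lemma rf_apply_ne (M : CoxeterMatrix B) {i k : B} (h : k ≠ i) (v : B → ℝ) :
    rf M i v k = v k := by
  rw [rf_apply]; simp [al, h]

/-- Dihedral coefficients. -/
noncomputable def cc (m k : ℕ) : ℝ :=
  if m = 0 then k else Real.sin (k * (Real.pi / m)) / Real.sin (Real.pi / m)

lemma cc_zero (m : ℕ) : cc m 0 = 0 := by simp [cc]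

lemma sin_pos_of (m : ℕ) (h : 2 ≤ m) : 0 < Real.sin (Real.pi / m) := by
  have : (2 : ℝ) ≤ m := by exact_mod_cast h
  apply Real.sin_pos_of_pos_of_lt_pi
  · positivity
  · rw [div_lt_iff₀ (by linarith)]; nlinarith [Real.pi_pos]

lemma cc_one (m : ℕ) (h : m ≠ 1) : cc m 1 = 1 := by
  unfold cc
  split_ifs with h0
  · simp
  · have := sin_pos_of m (by omega)
    rw [Nat.cast_one, one_mul, div_self this.ne']

lemma cc_rec (m k : ℕ) :
    cc m (k + 2) = 2 * Real.cos (Real.pi / m) * cc m (k + 1) - cc m k := by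
  unfold cc
  split_ifs with h0
  · subst h0; simp; ring
  · rw [← mul_div_assoc (2 * Real.cos (Real.pi / m)), ← sub_div]
    congr 1
    push_cast
    have e1 : ((k : ℝ) + 2) * (Real.pi / m) = (k + 1) * (Real.pi / m) + Real.pi / m := by ring
    have e2 : (k : ℝ) * (Real.pi / m) = (k + 1) * (Real.pi / m) - Real.pi / m := by ring
    rw [e1, e2, Real.sin_add, Real.sin_sub]; ring

lemma cc_nonneg (m k : ℕ) (h : m ≠ 0 → k ≤ m) : 0 ≤ cc m k := by
  unfold cc
  split_ifs with h0
  · positivity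
  · have hm : (0 : ℝ) < m := by exact_mod_cast Nat.pos_of_ne_zero h0
    have hm1 : (1 : ℝ) ≤ m := by exact_mod_cast Nat.pos_of_ne_zero h0
    have hk : (k : ℝ) ≤ m := by exact_mod_cast h h0
    apply div_nonneg
    · apply Real.sin_nonneg_of_nonneg_of_le_pi
      · positivity
      · rw [← mul_div_assoc, div_le_iff₀ hm]; nlinarith [Real.pi_pos]
    · apply Real.sin_nonneg_of_nonneg_of_le_pi
      · positivity
      · rw [div_le_iff₀ hm]; nlinarith [Real.pi_pos]

lemma cc_period (m k : ℕ) (h : m ≠ 0) : cc m (k + 2 * m) = cc m k := by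
  unfold cc
  rw [if_neg h, if_neg h]
  congr 1
  have hm : (m : ℝ) ≠ 0 := by exact_mod_cast h
  have : ((k + 2 * m : ℕ) : ℝ) * (Real.pi / m) = k * (Real.pi / m) + 2 * Real.pi := by
    push_cast; field_simp
  rw [this, Real.sin_add_two_pi]

lemma cc_m (m : ℕ) (h : m ≠ 0) : cc m m = 0 := by
  unfold cc
  rw [if_neg h]
  have hm : (m : ℝ) ≠ 0 := by exact_mod_cast h
  rw [mul_div_cancel₀ _ hm, Real.sin_pi, zero_div]

lemma cc_pred (m : ℕ) (h : 2 ≤ m) : cc m (m - 1) = 1 := by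
  unfold cc
  rw [if_neg (by omega)]
  have hm : (m : ℝ) ≠ 0 := by exact_mod_cast (by omega : m ≠ 0)
  have : ((m - 1 : ℕ) : ℝ) * (Real.pi / m) = Real.pi - Real.pi / m := by
    rw [Nat.cast_sub (by omega)]; field_simp; simp
  rw [this, Real.sin_pi_sub, div_self (sin_pos_of m h).ne']

lemma rf_j_e (M : CoxeterMatrix B) (i j : B) (a b : ℝ) :
    rf M j (a • al i + b • al j) =
      a • al i + (2 * Real.cos (Real.pi / M i j) * a - b) • al j := by
  rw [rf_apply]
  simp only [map_add, map_smul, bil_al, kk_self, smul_eq_mul]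
  rw [kk_symm, kk]
  module

lemma rf_i_e (M : CoxeterMatrix B) (i j : B) (a b : ℝ) :
    rf M i (a • al i + b • al j) =
      (2 * Real.cos (Real.pi / M i j) * b - a) • al i + b • al j := by
  rw [rf_apply]
  simp only [map_add, map_smul, bil_al, kk_self, smul_eq_mul]
  rw [kk]
  module

lemma rf_rot (M : CoxeterMatrix B) (i j : B) (k : ℕ) :
    (rf M i * rf M j) (cc (M i j) (k + 1) • al i + cc (M i j) k • al j) =
      cc (M i j) (k + 3) • al i + cc (M i j) (k + 2) • al j := by
  rw [Module.End.mul_apply, rf_j_e, ← cc_rec, rf_i_e, ← cc_rec]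

lemma rf_rot_pow (M : CoxeterMatrix B) (i j : B) (n k : ℕ) :
    ((rf M i * rf M j) ^ n) (cc (M i j) (k + 1) • al i + cc (M i j) k • al j) =
      cc (M i j) (k + 2 * n + 1) • al i + cc (M i j) (k + 2 * n) • al j := by
  induction n with
  | zero => simp
  | succ n ih =>
    rw [pow_succ', Module.End.mul_apply, ih, rf_rot]
    rfl

lemma rf_pow_mem (M : CoxeterMatrix B) (i j : B) (n : ℕ) (v : B → ℝ) :
    ∃ a b : ℝ, ((rf M i * rf M j) ^ n) v = v + a • al i + b • al j := by
  induction n with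
  | zero => exact ⟨0, 0, by simp⟩
  | succ n ih =>
    obtain ⟨a, b, h⟩ := ih
    rw [pow_succ', Module.End.mul_apply, h, Module.End.mul_apply, rf_apply M j, rf_apply M i]
    generalize bil M (al j) _ = x
    generalize bil M (al i) _ = y
    exact ⟨a - 2 * y, b - 2 * x, by module⟩

lemma bil_rf_pow (M : CoxeterMatrix B) (i j : B) (n : ℕ) (v w : B → ℝ) :
    bil M (((rf M i * rf M j) ^ n) v) (((rf M i * rf M j) ^ n) w) = bil M v w := by
  induction n with
  | zero => simp
  | succ n ih =>
    rw [pow_succ', Module.End.mul_apply, Module.End.mul_apply, Module.End.mul_apply,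
      Module.End.mul_apply, bil_rf, bil_rf, ih]

lemma rf_liftable (M : CoxeterMatrix B) : M.IsLiftable (rf M) := by
  intro i j
  by_cases hij : i = j
  · subst hij
    rw [M.diagonal, pow_one]
    apply LinearMap.ext
    intro v
    exact rf_rf M i v
  · by_cases hm : M i j = 0
    · rw [hm, pow_zero]
    have h1 : M i j ≠ 1 := M.off_diagonal i j hij
    have h2 : 2 ≤ M i j := by omega
    set R := (rf M i * rf M j) with hR
    have hi : (R ^ M i j) (al i) = al i := by
      have := rf_rot_pow M i j (M i j) 0
      rw [zero_add, cc_one _ h1, cc_zero, add_right_comm, cc_period _ _ hm, cc_one _ h1,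
        cc_period _ _ hm, cc_zero] at this
      simpa using this
    have hj : (R ^ M i j) (al j) = al j := by
      have := rf_rot_pow M i j (M i j) (M i j - 1)
      rw [add_right_comm, cc_period _ _ hm, cc_period _ _ hm, Nat.sub_add_cancel (by omega),
        cc_m _ hm, cc_pred _ h2] at this
      simpa using this
    apply LinearMap.ext
    intro v
    obtain ⟨a, b, h⟩ := rf_pow_mem M i j (M i j) v
    have e1 := bil_rf_pow M i j (M i j) (al i) v
    have e2 := bil_rf_pow M i j (M i j) (al j) v
    rw [← hR] at h e1 e2
    rw [hi, h] at e1
    rw [hj, h] at e2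
    simp only [map_add, map_smul, bil_al, kk_self, smul_eq_mul] at e1 e2
    rw [kk_symm M j i] at e2
    have hs := sin_pos_of _ h2
    have hsc := Real.sin_sq_add_cos_sq (Real.pi / M i j)
    have hk : kk M i j ^ 2 < 1 := by
      unfold kk; nlinarith
    have ea : a * (1 - kk M i j ^ 2) = 0 := by linear_combination e1 - kk M i j * e2
    have ha : a = 0 := by
      rcases mul_eq_zero.1 ea with h | h
      · exact h
      · linarith
    have hb : b = 0 := by rw [ha] at e2; linarith
    rw [h, ha, hb]
    simp

variable {M : CoxeterMatrix B}

/-- The geometric representation. -/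
noncomputable def rep (cs : CoxeterSystem M W) : W →* Module.End ℝ (B → ℝ) :=
  cs.lift ⟨rf M, rf_liftable M⟩

lemma rep_simple (cs : CoxeterSystem M W) (i : B) : rep cs (cs.simple i) = rf M i :=
  cs.lift_apply_simple _ i

lemma rep_simple_apply (cs : CoxeterSystem M W) (i : B) (v : B → ℝ) :
    rep cs (cs.simple i) v = v - (2 * bil M (al i) v) • al i := by
  rw [rep_simple, rf_apply]

lemma rep_mul (cs : CoxeterSystem M W) (x y : W) (v : B → ℝ) :
    rep cs (x * y) v = rep cs x (rep cs y v) := by rw [map_mul]; rfl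

lemma rep_one (cs : CoxeterSystem M W) (v : B → ℝ) : rep cs 1 v = v := by rw [map_one]; rfl

lemma rep_inv_rep (cs : CoxeterSystem M W) (x : W) (v : B → ℝ) :
    rep cs x⁻¹ (rep cs x v) = v := by rw [← rep_mul, inv_mul_cancel, rep_one]

lemma rep_rep_inv (cs : CoxeterSystem M W) (x : W) (v : B → ℝ) :
    rep cs x (rep cs x⁻¹ v) = v := by rw [← rep_mul, mul_inv_cancel, rep_one]

lemma rep_injective (cs : CoxeterSystem M W) (x : W) : Function.Injective (rep cs x) :=
  fun a b h => by rw [← rep_inv_rep cs x a, h, rep_inv_rep]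

lemma bil_rep (cs : CoxeterSystem M W) (x : W) (v w : B → ℝ) :
    bil M (rep cs x v) (rep cs x w) = bil M v w := by
  induction x using cs.simple_induction_left generalizing v w with
  | one => simp [rep_one]
  | mul_simple_left x i ih => rw [rep_mul, rep_mul, rep_simple, bil_rf, ih]

/-- Nonnegative vectors. -/
def Pos (v : B → ℝ) : Prop := ∀ b, 0 ≤ v b

lemma pos_al (i : B) : Pos (al i) := by
  intro b; by_cases h : b = i <;> simp [al, Pi.single_apply, h]

lemma alt_al (cs : CoxeterSystem M W) (i j : B) (hij : i ≠ j) (k : ℕ) :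
    rep cs (cs.wordProd (alternatingWord i j k)) (al i) =
      (if Even k then cc (M i j) (k + 1) • al i + cc (M i j) k • al j
        else cc (M i j) k • al i + cc (M i j) (k + 1) • al j) := by
  have h1 := M.off_diagonal i j hij
  have key : ∀ n : ℕ, rep cs ((cs.simple i * cs.simple j) ^ n) (al i) =
      cc (M i j) (2 * n + 1) • al i + cc (M i j) (2 * n) • al j := by
    intro n
    have := rf_rot_pow M i j n 0
    rw [zero_add, cc_one _ h1, cc_zero, zero_smul, add_zero, one_smul, zero_add] at this
    rw [map_pow, map_mul, rep_simple, rep_simple, this]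
  rw [cs.prod_alternatingWord_eq_mul_pow]
  split_ifs with hk
  · rw [one_mul, key, Nat.two_mul_div_two_of_even hk]
  · rw [rep_mul, key, rep_simple, rf_j_e, ← cc_rec]
    have := Nat.two_mul_div_two_add_one_of_odd (Nat.not_even_iff_odd.1 hk)
    rw [show 2 * (k / 2) + 2 = k + 1 by omega, this]

lemma alt_al_pos (cs : CoxeterSystem M W) (i j : B) (hij : i ≠ j) (k : ℕ)
    (hk : M i j ≠ 0 → k < M i j) :
    ∃ a b : ℝ, 0 ≤ a ∧ 0 ≤ b ∧
      rep cs (cs.wordProd (alternatingWord i j k)) (al i) = a • al i + b • al j := by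
  rw [alt_al cs i j hij]
  have h1 := cc_nonneg (M i j) k (fun h => (hk h).le)
  have h2 := cc_nonneg (M i j) (k + 1) (fun h => (hk h))
  split_ifs
  · exact ⟨_, _, h2, h1, rfl⟩
  · exact ⟨_, _, h1, h2, rfl⟩

/-- Tits' theorem. -/
theorem tits (cs : CoxeterSystem M W) (w : W) (i : B)
    (h : cs.length w < cs.length (w * cs.simple i)) : Pos (rep cs w (al i)) := by
  induction hn : cs.length w using Nat.strong_induction_on generalizing w i with
  | _ n IH =>
  subst hn
  by_cases hw : w = 1
  · subst hw; rw [rep_one]; exact pos_al i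
  obtain ⟨j, hj⟩ := cs.exists_rightDescent_of_ne_one hw
  rw [cs.isRightDescent_iff] at hj
  have hij : i ≠ j := by rintro rfl; omega
  let P : ℕ → Prop := fun k => ∃ v, w = v * cs.wordProd (alternatingWord i j k) ∧
    cs.length w = cs.length v + k
  have hP1 : P 1 := ⟨w * cs.simple j, by simp [alternatingWord], by omega⟩
  classical
  have hbd : ∀ k, P k → k ≤ cs.length w := by rintro k ⟨v, _, h⟩; omega
  set k := Nat.findGreatest P (cs.length w) with hkdef
  have hPk : P k := Nat.findGreatest_spec (hbd 1 hP1) hP1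
  have hk1 : 1 ≤ k := Nat.le_findGreatest (hbd 1 hP1) hP1
  have hmax : ¬ P (k + 1) := fun hh => by
    have := Nat.le_findGreatest (hbd _ hh) hh
    omega
  obtain ⟨v, hv, hl⟩ := hPk
  have hkm : M i j ≠ 0 → k < M i j := by
    intro hm
    by_contra hge
    push Not at hge
    -- k ≥ m: then w has right descent i
    have hlen : ∀ p q : B, ∀ n, M p q ≤ n → M p q ≠ 0 →
        ∃ u : W, cs.wordProd (alternatingWord p q n) = u * cs.wordProd (alternatingWord p q (M p q)) ∧
          cs.length u ≤ n - M p q := by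
      intro p q n hn hm
      induction n, hn using Nat.le_induction with
      | base => exact ⟨1, by simp, by simp⟩
      | succ n hn ih =>
        obtain ⟨u, hu, hul⟩ := ih
        rw [alternatingWord_succ', cs.wordProd_cons, hu]
        refine ⟨cs.simple (if Even n then q else p) * u, by rw [mul_assoc], ?_⟩
        have := cs.length_mul_le (cs.simple (if Even n then q else p)) u
        rw [cs.length_simple] at this
        omega
    obtain ⟨u, hu, hul⟩ := hlen i j k hge hm
    have hb := cs.wordProd_braidWord_eq i j
    unfold braidWord at hb
    rw [hu, hb] at hv
    obtain ⟨m', hm'⟩ : ∃ m', M j i = m' + 1 := ⟨M j i - 1, by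
      have := M.symmetric i j; omega⟩
    rw [hm', alternatingWord_succ, cs.wordProd_concat] at hv
    have e : w * cs.simple i = v * (u * cs.wordProd (alternatingWord i j m')) := by
      rw [hv]; simp [mul_assoc]
    have l1 := cs.length_mul_le v (u * cs.wordProd (alternatingWord i j m'))
    have l2 := cs.length_mul_le u (cs.wordProd (alternatingWord i j m'))
    have l3 := cs.length_wordProd_le (alternatingWord i j m')
    rw [length_alternatingWord] at l3
    rw [← e] at l1
    have := M.symmetric i j
    omega
  obtain ⟨a, b, ha, hb, hab⟩ := alt_al_pos cs i j hij k hkm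
  have desc : cs.length v < cs.length (v * cs.simple i) ∧
      cs.length v < cs.length (v * cs.simple j) := by
    have next : cs.length v < cs.length (v * cs.simple (if Even k then j else i)) := by
      by_contra hcon
      have hd := cs.length_mul_simple v (if Even k then j else i)
      apply hmax
      refine ⟨v * cs.simple (if Even k then j else i), ?_, by omega⟩
      rw [alternatingWord_succ', cs.wordProd_cons, hv]
      simp [mul_assoc]
    have prev : cs.length v < cs.length (v * cs.simple (if Even k then i else j)) := by
      by_contra hcon
      have hd := cs.length_mul_simple v (if Even k then i else j)
      obtain ⟨k', hk'⟩ : ∃ k', k = k' + 1 := ⟨k - 1, by omega⟩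
      rw [hk', alternatingWord_succ', cs.wordProd_cons] at hv
      have e : (if Even k' then j else i) = (if Even k then i else j) := by
        by_cases h : Even k' <;> simp [h, hk', Nat.even_add_one]
      rw [e, ← mul_assoc] at hv
      have l1 := cs.length_mul_le (v * cs.simple (if Even k then i else j))
        (cs.wordProd (alternatingWord i j k'))
      have l3 := cs.length_wordProd_le (alternatingWord i j k')
      rw [length_alternatingWord] at l3
      rw [← hv] at l1
      omega
    by_cases h : Even k <;> simp only [h, if_true, if_false] at next prev
    · exact ⟨prev, next⟩
    · exact ⟨next, prev⟩
  have h1 := IH _ (by omega) v i desc.1 rfl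
  have h2 := IH _ (by omega) v j desc.2 rfl
  rw [hv, rep_mul, hab]
  intro c
  simp only [map_add, map_smul, Pi.add_apply, Pi.smul_apply, smul_eq_mul]
  have := mul_nonneg ha (h1 c)
  have := mul_nonneg hb (h2 c)
  linarith

end Geo

section Arr
variable {V : Type*} [NormedAddCommGroup V] [InnerProductSpace ℝ V]

/-- A finite symmetric reduced set of normals stable under an isometry. -/
structure Arr (Φ : Finset V) (g : V ≃ₗᵢ[ℝ] V) : Prop where
  neg : ∀ a ∈ Φ, -a ∈ Φ
  map : ∀ a ∈ Φ, g a ∈ Φ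
  red : ∀ a ∈ Φ, ∀ b ∈ Φ, ∀ c : ℝ, b = c • a → b = a ∨ b = -a
  nz : (0 : V) ∉ Φ

/-- Sign of a point with respect to a hyperplane. -/
noncomputable def sg (u a : V) : ℝ := Real.sign (inner ℝ u a)

/-- Points off all hyperplanes. -/
def Gen (Φ : Finset V) (u : V) : Prop := ∀ a ∈ Φ, inner ℝ u a ≠ 0

/-- Signed displacement count. -/
noncomputable def DD (Φ : Finset V) (g : V ≃ₗᵢ[ℝ] V) (u : V) : ℝ :=
  ∑ b ∈ Φ, sg u b * sg u (g b)

/-- Elementary moves. -/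
def AStep (Φ : Finset V) (g : V ≃ₗᵢ[ℝ] V) (u u' : V) : Prop :=
  Gen Φ u ∧ Gen Φ u' ∧ (∃ a, ∀ b ∈ Φ, b ≠ a → b ≠ -a → sg u b = sg u' b) ∧
    DD Φ g u ≤ DD Φ g u'

lemma sg_neg (u a : V) : sg u (-a) = - sg u a := by
  simp [sg, Real.sign_neg]

lemma sg_sq {u a : V} (h : inner ℝ u a ≠ 0) : sg u a * sg u a = 1 := by
  unfold sg
  rcases lt_or_gt_of_ne h with h | h
  · rw [Real.sign_of_neg h]; norm_num
  · rw [Real.sign_of_pos h]; norm_num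

lemma rsign_eq {x y : ℝ} (h : 0 < x * y) : Real.sign x = Real.sign y := by
  rcases pos_and_pos_or_neg_and_neg_of_mul_pos h with ⟨h1, h2⟩ | ⟨h1, h2⟩
  · rw [Real.sign_of_pos h1, Real.sign_of_pos h2]
  · rw [Real.sign_of_neg h1, Real.sign_of_neg h2]

lemma rsign_ne {x y : ℝ} (h : x * y < 0) : Real.sign x = - Real.sign y := by
  rw [← Real.sign_neg]; apply rsign_eq; linarith

lemma mul_pos_of_rsign {x y : ℝ} (hx : x ≠ 0) (h : Real.sign x = Real.sign y) : 0 < x * y := by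
  rcases lt_or_gt_of_ne hx with hx | hx <;> rcases lt_trichotomy y 0 with hy | hy | hy
  · exact mul_pos_of_neg_of_neg hx hy
  · rw [Real.sign_of_neg hx, hy, Real.sign_zero] at h; norm_num at h
  · rw [Real.sign_of_neg hx, Real.sign_of_pos hy] at h; norm_num at h
  · rw [Real.sign_of_pos hx, Real.sign_of_neg hy] at h; norm_num at h
  · rw [Real.sign_of_pos hx, hy, Real.sign_zero] at h; norm_num at h
  · exact mul_pos hx hy

lemma rsign_sum {s x y : ℝ} (h : 0 < s * (x + y)) :
    0 ≤ Real.sign s * (Real.sign x + Real.sign y) := by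
  rcases lt_trichotomy s 0 with hs | hs | hs
  · have : x + y < 0 := by nlinarith
    rw [Real.sign_of_neg hs]
    rcases lt_trichotomy x 0 with hx | hx | hx <;> rcases lt_trichotomy y 0 with hy | hy | hy <;>
      simp [Real.sign_of_neg, Real.sign_of_pos, Real.sign_zero, hx, hy] <;> linarith
  · subst hs; simp at h
  · have : 0 < x + y := by nlinarith
    rw [Real.sign_of_pos hs]
    rcases lt_trichotomy x 0 with hx | hx | hx <;> rcases lt_trichotomy y 0 with hy | hy | hy <;>
      simp [Real.sign_of_neg, Real.sign_of_pos, Real.sign_zero, hx, hy] <;> linarith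

lemma sum_g {Φ : Finset V} {g : V ≃ₗᵢ[ℝ] V} (hm : ∀ a ∈ Φ, g a ∈ Φ) (F : V → ℝ) :
    ∑ b ∈ Φ, F (g b) = ∑ b ∈ Φ, F b := by
  classical
  have : Φ.image g = Φ := by
    apply Finset.eq_of_subset_of_card_le
    · intro x hx
      obtain ⟨a, ha, rfl⟩ := Finset.mem_image.1 hx
      exact hm a ha
    · rw [Finset.card_image_of_injective _ g.injective]
  conv_rhs => rw [← this]
  rw [Finset.sum_image (fun a _ b _ h => g.injective h)]

lemma symm_mem {Φ : Finset V} {g : V ≃ₗᵢ[ℝ] V} (hm : ∀ a ∈ Φ, g a ∈ Φ) {a : V} (ha : a ∈ Φ) :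
    g.symm a ∈ Φ := by
  classical
  have : Φ.image g = Φ := by
    apply Finset.eq_of_subset_of_card_le
    · intro x hx
      obtain ⟨a, ha, rfl⟩ := Finset.mem_image.1 hx
      exact hm a ha
    · rw [Finset.card_image_of_injective _ g.injective]
  rw [← this] at ha
  obtain ⟨b, hb, rfl⟩ := Finset.mem_image.1 ha
  simpa using hb

lemma DD_congr {Φ : Finset V} {g : V ≃ₗᵢ[ℝ] V} (hm : ∀ a ∈ Φ, g a ∈ Φ) {u u' : V}
    (h : ∀ b ∈ Φ, sg u b = sg u' b) : DD Φ g u = DD Φ g u' := by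
  unfold DD
  exact Finset.sum_congr rfl fun b hb => by rw [h b hb, h _ (hm b hb)]

lemma crossing {Φ : Finset V} {g : V ≃ₗᵢ[ℝ] V} (hA : Arr Φ g) {u u' h a : V}
    (ha : a ∈ Φ) (h0 : inner ℝ h a = 0)
    (hu : ∀ b ∈ Φ, b ≠ a → b ≠ -a → sg u b = sg h b)
    (hu' : ∀ b ∈ Φ, b ≠ a → b ≠ -a → sg u' b = sg h b)
    (hop : inner ℝ u a * inner ℝ u' a < 0)
    (hT : 0 < inner ℝ u' a * (inner ℝ h (g a) + inner ℝ h (g.symm a))) :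
    DD Φ g u ≤ DD Φ g u' := by
  classical
  have hne : g a ≠ a ∧ g a ≠ -a := by
    constructor
    · intro e
      have e' : g.symm a = a := by rw [g.symm_apply_eq, e]
      rw [e, e', h0] at hT; simp at hT
    · intro e
      have e' : g.symm a = -a := by rw [g.symm_apply_eq, map_neg, e, neg_neg]
      rw [e, e', inner_neg_right, h0] at hT; simp at hT
  have hne' : g.symm a ≠ a ∧ g.symm a ≠ -a := by
    constructor
    · intro e
      rw [g.symm_apply_eq] at e; exact hne.1 e.symm
    · intro e
      rw [g.symm_apply_eq, map_neg] at e; apply hne.2; rw [← neg_eq_iff_eq_neg] at e; exact e.symm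
  set η : V → ℝ := fun b => sg u' b - sg u b with hη
  have hη0 : ∀ b ∈ Φ, b ≠ a → b ≠ -a → η b = 0 := fun b hb h1 h2 => by
    simp only [hη]; rw [hu b hb h1 h2, hu' b hb h1 h2, sub_self]
  have e1 : DD Φ g u' - DD Φ g u =
      ∑ b ∈ Φ, (η b * sg u (g b) + sg u (g.symm (g b)) * η (g b) + η b * η (g b)) := by
    unfold DD
    rw [← Finset.sum_sub_distrib]
    refine Finset.sum_congr rfl fun b hb => ?_
    simp only [hη, g.symm_apply_apply]; ring
  have e2 : ∑ b ∈ Φ, η b * η (g b) = 0 := by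
    apply Finset.sum_eq_zero
    intro b hb
    by_cases h1 : b = a
    · subst h1; rw [hη0 (g b) (hA.map b hb) hne.1 hne.2, mul_zero]
    by_cases h2 : b = -a
    · subst h2
      rw [hη0 (g (-a)) (hA.map _ hb), mul_zero]
      · rw [map_neg]; intro e; exact hne.2 (neg_eq_iff_eq_neg.1 e)
      · rw [map_neg]; intro e; exact hne.1 (neg_injective e)
    · rw [hη0 b hb h1 h2, zero_mul]
  have e3 : DD Φ g u' - DD Φ g u = ∑ b ∈ Φ, η b * (sg u (g b) + sg u (g.symm b)) := by
    rw [e1, Finset.sum_add_distrib, e2, add_zero, Finset.sum_add_distrib,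
      sum_g hA.map (fun b => sg u (g.symm b) * η b), ← Finset.sum_add_distrib]
    exact Finset.sum_congr rfl fun b _ => by ring
  have key : 0 ≤ η a * (sg u (g a) + sg u (g.symm a)) := by
    rw [hu _ (hA.map a ha) hne.1 hne.2, hu _ (symm_mem hA.map ha) hne'.1 hne'.2]
    have : η a = 2 * sg u' a := by
      have := rsign_ne hop
      simp only [hη, sg]; rw [this]; ring
    rw [this]
    have := rsign_sum hT
    unfold sg
    linarith
  have : 0 ≤ DD Φ g u' - DD Φ g u := by
    rw [e3]
    apply Finset.sum_nonneg
    intro b hb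
    by_cases h1 : b = a
    · subst h1; exact key
    by_cases h2 : b = -a
    · subst h2
      have e : η (-a) = - η a := by simp only [hη, sg_neg]; ring
      rw [e, map_neg, map_neg, sg_neg, sg_neg]
      linarith
    · rw [hη0 b hb h1 h2, zero_mul]
  linarith

/-! ### Sign changes along a rotation -/

lemma sign_cos (y : ℝ) (h : Real.cos y ≠ 0) :
    Real.sign (Real.cos y) = (-1 : ℝ) ^ ⌊y / Real.pi + 1 / 2⌋ := by
  set n := ⌊y / Real.pi + 1 / 2⌋ with hn
  have h1 := Int.floor_le (y / Real.pi + 1 / 2)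
  have h2 := Int.lt_floor_add_one (y / Real.pi + 1 / 2)
  rw [← hn] at h1 h2
  have hp := Real.pi_pos
  have hy : y / Real.pi * Real.pi = y := by field_simp
  have hc : Real.cos y = (-1) ^ n * Real.cos (y - n * Real.pi) := by
    rw [Real.cos_sub_int_mul_pi, ← mul_assoc, ← mul_zpow]; norm_num
  have hpos : 0 ≤ Real.cos (y - n * Real.pi) := by
    apply Real.cos_nonneg_of_mem_Icc
    constructor <;> nlinarith
  have hpos' : 0 < Real.cos (y - n * Real.pi) := by
    apply lt_of_le_of_ne hpos
    intro e; rw [← e, mul_zero] at hc; exact h hc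
  rcases Int.even_or_odd n with he | ho
  · rw [he.neg_one_zpow] at hc ⊢
    rw [hc, one_mul, Real.sign_of_pos hpos']
  · rw [ho.neg_one_zpow] at hc ⊢
    rw [hc, Real.sign_of_neg (by linarith)]

lemma sign_sum_bound (R φ θ : ℝ) (h0 : 0 ≤ θ) (hπ : θ ≤ Real.pi) (a : ℕ → ℝ)
    (ha : ∀ k : ℕ, a k = R * Real.cos (φ + k * θ)) (hne : ∀ k, a k ≠ 0) (N : ℕ) :
    |∑ k ∈ Finset.range N, Real.sign (a k) * Real.sign (a (k + 1)) - N * (1 - 2 * (θ / Real.pi))|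
      ≤ 2 := by
  have hp := Real.pi_pos
  have hR : R ≠ 0 := by intro e; apply hne 0; rw [ha, e, zero_mul]
  set F : ℕ → ℤ := fun k => ⌊(φ + k * θ) / Real.pi + 1 / 2⌋ with hF
  have ht0 : 0 ≤ θ / Real.pi := by positivity
  have ht1 : θ / Real.pi ≤ 1 := by rw [div_le_one hp]; exact hπ
  have hx : ∀ k : ℕ, (φ + (k + 1 : ℕ) * θ) / Real.pi + 1 / 2 =
      (φ + k * θ) / Real.pi + 1 / 2 + θ / Real.pi := by intro k; push_cast; ring
  have hcos : ∀ k : ℕ, Real.cos (φ + k * θ) ≠ 0 := fun k e => hne k (by rw [ha, e, mul_zero])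
  have term : ∀ k, Real.sign (a k) * Real.sign (a (k + 1)) = 1 - 2 * ((F (k + 1) : ℝ) - F k) := by
    intro k
    have s1 : Real.sign (a k) * Real.sign (a (k + 1)) =
        Real.sign (Real.cos (φ + k * θ)) * Real.sign (Real.cos (φ + (k + 1 : ℕ) * θ)) := by
      rw [ha, ha]
      rcases lt_or_gt_of_ne hR with h | h
      · have : ∀ x, Real.sign (R * x) = - Real.sign x := by
          intro x
          rcases lt_trichotomy x 0 with hx | hx | hx
          · rw [Real.sign_of_neg hx, Real.sign_of_pos (mul_pos_of_neg_of_neg h hx)]; norm_num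
          · simp [hx]
          · rw [Real.sign_of_pos hx, Real.sign_of_neg (mul_neg_of_neg_of_pos h hx)]
        rw [this, this]; ring
      · have : ∀ x, Real.sign (R * x) = Real.sign x := by
          intro x
          rcases lt_trichotomy x 0 with hx | hx | hx
          · rw [Real.sign_of_neg hx, Real.sign_of_neg (mul_neg_of_pos_of_neg h hx)]
          · simp [hx]
          · rw [Real.sign_of_pos hx, Real.sign_of_pos (mul_pos h hx)]
        rw [this, this]
    rw [s1, sign_cos _ (hcos k), sign_cos _ (hcos (k + 1))]
    have f1 := Int.floor_le ((φ + k * θ) / Real.pi + 1 / 2)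
    have f2 := Int.lt_floor_add_one ((φ + k * θ) / Real.pi + 1 / 2)
    have g1 := Int.floor_le ((φ + (k + 1 : ℕ) * θ) / Real.pi + 1 / 2)
    have g2 := Int.lt_floor_add_one ((φ + (k + 1 : ℕ) * θ) / Real.pi + 1 / 2)
    change (-1 : ℝ) ^ F k * (-1) ^ F (k + 1) = _
    change (F k : ℝ) ≤ _ at f1
    change _ < (F k : ℝ) + 1 at f2
    change (F (k + 1) : ℝ) ≤ _ at g1
    change _ < (F (k + 1) : ℝ) + 1 at g2
    rw [hx] at g1 g2
    have i1 : F (k + 1) < F k + 2 := by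
      have : (F (k + 1) : ℝ) < F k + 2 := by linarith
      exact_mod_cast this
    have i2 : F k < F (k + 1) + 1 := by
      have : (F k : ℝ) < F (k + 1) + 1 := by linarith
      exact_mod_cast this
    have : F (k + 1) = F k ∨ F (k + 1) = F k + 1 := by omega
    have hsq : (-1 : ℝ) ^ F k * (-1) ^ F k = 1 := by
      rw [← mul_zpow]; norm_num
    rcases this with e | e
    · rw [e, hsq]; ring
    · rw [e, zpow_add₀ (by norm_num), zpow_one, ← mul_assoc, hsq]; push_cast; ring
  have tot : ∑ k ∈ Finset.range N, Real.sign (a k) * Real.sign (a (k + 1)) =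
      N - 2 * ((F N : ℝ) - F 0) := by
    rw [Finset.sum_congr rfl fun k _ => term k, Finset.sum_sub_distrib, ← Finset.mul_sum,
      Finset.sum_range_sub (fun k => (F k : ℝ))]
    simp
  have f1 := Int.floor_le ((φ + N * θ) / Real.pi + 1 / 2)
  have f2 := Int.lt_floor_add_one ((φ + N * θ) / Real.pi + 1 / 2)
  have g1 := Int.floor_le ((φ + (0 : ℕ) * θ) / Real.pi + 1 / 2)
  have g2 := Int.lt_floor_add_one ((φ + (0 : ℕ) * θ) / Real.pi + 1 / 2)
  change (F N : ℝ) ≤ _ at f1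
  change _ < (F N : ℝ) + 1 at f2
  change (F 0 : ℝ) ≤ _ at g1
  change _ < (F 0 : ℝ) + 1 at g2
  have hxN : (φ + N * θ) / Real.pi = (φ + (0 : ℕ) * θ) / Real.pi + N * (θ / Real.pi) := by
    push_cast; ring
  rw [hxN] at f1 f2
  rw [tot, abs_le]
  constructor <;> linarith

lemma rec_cos (θ : ℝ) (a : ℕ → ℝ)
    (hrec : ∀ k, a (k + 2) = 2 * Real.cos θ * a (k + 1) - a k)
    (hdeg : Real.sin θ = 0 → a 1 = Real.cos θ * a 0) :
    ∃ R φ : ℝ, ∀ k : ℕ, a k = R * Real.cos (φ + k * θ) := by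
  obtain ⟨A, C, h0, h1⟩ : ∃ A C : ℝ, a 0 = A ∧ a 1 = A * Real.cos θ - C * Real.sin θ := by
    by_cases hs : Real.sin θ = 0
    · exact ⟨a 0, 0, rfl, by rw [hdeg hs]; ring⟩
    · exact ⟨a 0, (a 0 * Real.cos θ - a 1) / Real.sin θ, rfl, by field_simp; ring⟩
  let z : ℂ := ⟨A, C⟩
  refine ⟨‖z‖, Complex.arg z, ?_⟩
  have hA : ‖z‖ * Real.cos (Complex.arg z) = A := Complex.norm_mul_cos_arg z
  have hC : ‖z‖ * Real.sin (Complex.arg z) = C := Complex.norm_mul_sin_arg z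
  have key : ∀ k : ℕ, a k = ‖z‖ * Real.cos (Complex.arg z + k * θ) ∧
      a (k + 1) = ‖z‖ * Real.cos (Complex.arg z + (k + 1 : ℕ) * θ) := by
    intro k
    induction k with
    | zero =>
      constructor
      · simp [hA, h0]
      · rw [zero_add, h1, Nat.cast_one, one_mul, Real.cos_add, ← hA, ← hC]; ring
    | succ k ih =>
      refine ⟨ih.2, ?_⟩
      rw [hrec, ih.1, ih.2]
      push_cast
      have e1 : Complex.arg z + ((k : ℝ) + 1 + 1) * θ = (Complex.arg z + (k + 1) * θ) + θ := by ring
      have e2 : Complex.arg z + (k : ℝ) * θ = (Complex.arg z + (k + 1) * θ) - θ := by ring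
      rw [e1, e2, Real.cos_add _ θ, Real.cos_sub _ θ]; ring
  exact fun k => (key k).1

lemma eig_const {Ψ : Finset V} {g : V ≃ₗᵢ[ℝ] V} (hm : ∀ a ∈ Ψ, g a ∈ Ψ) (l : ℝ) {p : V}
    (hp : g p + g.symm p = l • p) (hreg : ∀ a ∈ Ψ, inner ℝ p a ≠ 0) :
    DD Ψ g p = Ψ.card * (1 - 2 * (Real.arccos (l / 2) / Real.pi)) := by
  rcases Ψ.eq_empty_or_nonempty with he | ⟨a0, ha0⟩
  · subst he; simp [DD]
  have hp0 : p ≠ 0 := by rintro rfl; exact hreg a0 ha0 (by simp)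
  have hpp : 0 < inner ℝ p p := real_inner_self_pos.2 hp0
  have hgp : inner ℝ (g p) p + inner ℝ (g.symm p) p = l * inner ℝ p p := by
    rw [← inner_add_left, hp, real_inner_smul_left]
  have hsym : inner ℝ (g.symm p) p = inner ℝ (g p) p := by
    rw [← g.inner_map_map, g.apply_symm_apply, real_inner_comm]
  have hgn : inner ℝ (g p) (g p) = inner ℝ p p := g.inner_map_map p p
  have hl1 : l / 2 ≤ 1 := by
    have := real_inner_self_nonneg (x := g p - p)
    rw [inner_sub_sub_self] at this
    simp only [hgn] at this
    rw [real_inner_comm (g p) p] at this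
    nlinarith
  have hl2 : -1 ≤ l / 2 := by
    have := real_inner_self_nonneg (x := g p + p)
    rw [inner_add_add_self] at this
    simp only [hgn] at this
    rw [real_inner_comm (g p) p] at this
    nlinarith
  set θ := Real.arccos (l / 2) with hθ
  have hcos : Real.cos θ = l / 2 := Real.cos_arccos hl2 hl1
  have hdeg : Real.sin θ = 0 → g.symm p = Real.cos θ • p := by
    intro hs
    have hc : Real.cos θ ^ 2 = 1 := by
      have := Real.sin_sq_add_cos_sq θ; rw [hs] at this; linarith
    have : inner ℝ (g.symm p - Real.cos θ • p) (g.symm p - Real.cos θ • p) = 0 := by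
      rw [inner_sub_sub_self]
      simp only [real_inner_smul_left, real_inner_smul_right, g.symm.inner_map_map]
      rw [real_inner_comm (g.symm p) p, hsym]
      have e : inner ℝ (g p) p = Real.cos θ * inner ℝ p p := by rw [hcos]; linarith
      rw [e]; linear_combination (-inner ℝ p p) * hc
    exact sub_eq_zero.1 (inner_self_eq_zero.1 this)
  have hmem : ∀ (k : ℕ) a, a ∈ Ψ → (g ^ k) a ∈ Ψ := by
    intro k a ha
    induction k with
    | zero => simpa using ha
    | succ k ih => rw [pow_succ']; exact hm _ ih
  have hb : ∀ a ∈ Ψ, ∀ N : ℕ, |∑ k ∈ Finset.range N, sg p ((g ^ k) a) * sg p ((g ^ (k + 1)) a)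
      - N * (1 - 2 * (θ / Real.pi))| ≤ 2 := by
    intro a ha N
    have hsucc : ∀ k : ℕ, (g ^ (k + 1)) a = g ((g ^ k) a) := fun k => by rw [pow_succ']; rfl
    have hmv : ∀ x, inner ℝ p (g x) = inner ℝ (g.symm p) x := by
      intro x; rw [← g.symm.inner_map_map p (g x), g.symm_apply_apply]
    obtain ⟨R, φ, hR⟩ := rec_cos θ (fun k => inner ℝ p ((g ^ k) a)) (by
      intro k
      have e1 : inner ℝ p ((g ^ (k + 2)) a) = inner ℝ (g.symm p) ((g ^ (k + 1)) a) := by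
        rw [hsucc (k + 1), hmv]
      have e2 : inner ℝ p ((g ^ k) a) = inner ℝ (g p) ((g ^ (k + 1)) a) := by
        rw [hsucc k, g.inner_map_map]
      have e3 : inner ℝ (g p) ((g ^ (k + 1)) a) + inner ℝ (g.symm p) ((g ^ (k + 1)) a) =
          l * inner ℝ p ((g ^ (k + 1)) a) := by
        rw [← inner_add_left, hp, real_inner_smul_left]
      rw [e1, e2, hcos]; linarith) (by
      intro hs
      simp only [pow_one, pow_zero]
      rw [hmv, hdeg hs, real_inner_smul_left]; rfl)
    exact sign_sum_bound R φ θ (Real.arccos_nonneg _) (Real.arccos_le_pi _) _ hR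
      (fun k => hreg _ (hmem k a ha)) N
  have hN : ∀ N : ℕ, |(N : ℝ) * (DD Ψ g p - Ψ.card * (1 - 2 * (θ / Real.pi)))| ≤ 2 * Ψ.card := by
    intro N
    have e1 : (N : ℝ) * DD Ψ g p =
        ∑ a ∈ Ψ, ∑ k ∈ Finset.range N, sg p ((g ^ k) a) * sg p ((g ^ (k + 1)) a) := by
      rw [Finset.sum_comm]
      have : ∀ k ∈ Finset.range N, ∑ a ∈ Ψ, sg p ((g ^ k) a) * sg p ((g ^ (k + 1)) a) =
          DD Ψ g p := by
        intro k _
        have := sum_g (g := g ^ k) (fun a ha => hmem k a ha) (fun b => sg p b * sg p (g b))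
        rw [DD, ← this]
        refine Finset.sum_congr rfl fun b _ => ?_
        rw [pow_succ']; rfl
      rw [Finset.sum_congr rfl this]; simp
    have e2 : (N : ℝ) * (DD Ψ g p - Ψ.card * (1 - 2 * (θ / Real.pi))) =
        ∑ a ∈ Ψ, (∑ k ∈ Finset.range N, sg p ((g ^ k) a) * sg p ((g ^ (k + 1)) a)
          - N * (1 - 2 * (θ / Real.pi))) := by
      rw [mul_sub, e1, Finset.sum_sub_distrib]; simp; ring
    rw [e2]
    refine (Finset.abs_sum_le_sum_abs _ _).trans ?_
    refine (Finset.sum_le_sum fun a ha => hb a ha N).trans ?_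
    simp; linarith
  by_contra hne
  have hx : 0 < |DD Ψ g p - Ψ.card * (1 - 2 * (θ / Real.pi))| := abs_pos.2 (sub_ne_zero.2 hne)
  obtain ⟨N, hN'⟩ := exists_nat_gt (2 * (Ψ.card : ℝ) /
    |DD Ψ g p - Ψ.card * (1 - 2 * (θ / Real.pi))|)
  rw [div_lt_iff₀ hx] at hN'
  have := hN N
  rw [abs_mul, Nat.abs_cast] at this
  linarith

end Arr

section Flow
open MeasureTheory Filter Topology
variable {V : Type*} [NormedAddCommGroup V] [InnerProductSpace ℝ V]
variable {ι : Type*} [Fintype ι]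

/-- Spectral multiplier. -/
noncomputable def spc (b : OrthonormalBasis ι ℝ V) (c : ι → ℝ) (v : V) : V :=
  ∑ i, (c i * inner ℝ (b i) v) • b i

lemma inner_spc (b : OrthonormalBasis ι ℝ V) (c : ι → ℝ) (v a : V) :
    inner ℝ (spc b c v) a = ∑ i, c i * inner ℝ (b i) v * inner ℝ (b i) a := by
  simp only [spc, sum_inner, real_inner_smul_left]

lemma b_spc (b : OrthonormalBasis ι ℝ V) (c : ι → ℝ) (v : V) (i : ι) :
    inner ℝ (b i) (spc b c v) = c i * inner ℝ (b i) v := by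
  classical
  rw [real_inner_comm, inner_spc, Finset.sum_eq_single i]
  · simp [b.inner_eq_one]
  · intro j _ hj; rw [b.inner_eq_zero hj, mul_zero]
  · simp

lemma ext_b (b : OrthonormalBasis ι ℝ V) {x y : V} (h : ∀ i, inner ℝ (b i) x = inner ℝ (b i) y) :
    x = y := by
  apply b.repr.injective
  ext i
  rw [b.repr_apply_apply, b.repr_apply_apply, h i]

lemma spc_spc (b : OrthonormalBasis ι ℝ V) (c d : ι → ℝ) (v : V) :
    spc b c (spc b d v) = spc b (fun i => c i * d i) v :=
  ext_b b fun i => by simp only [b_spc]; ring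

lemma inner_spc_comm (b : OrthonormalBasis ι ℝ V) (c : ι → ℝ) (v a : V) :
    inner ℝ (spc b c v) a = inner ℝ v (spc b c a) := by
  rw [real_inner_comm (spc b c a) v, inner_spc, inner_spc]
  exact Finset.sum_congr rfl fun i _ => by ring

/-- Linear flow. -/
noncomputable def fl (b : OrthonormalBasis ι ℝ V) (μ : ι → ℝ) (t : ℝ) (v : V) : V :=
  spc b (fun i => Real.exp (t * μ i)) v

lemma fl_zero (b : OrthonormalBasis ι ℝ V) (μ : ι → ℝ) (v : V) : fl b μ 0 v = v :=
  ext_b b fun i => by simp [fl, b_spc]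

lemma fl_neg (b : OrthonormalBasis ι ℝ V) (μ : ι → ℝ) (t : ℝ) (v : V) :
    fl b μ (-t) (fl b μ t v) = v :=
  ext_b b fun i => by
    simp only [fl, b_spc]
    rw [← mul_assoc, ← Real.exp_add]; simp

lemma fl_deriv (b : OrthonormalBasis ι ℝ V) (μ : ι → ℝ) (t : ℝ) (v a : V) :
    HasDerivAt (fun t => inner ℝ (fl b μ t v) a) (inner ℝ (fl b μ t v) (spc b μ a)) t := by
  simp only [fl, inner_spc, b_spc]
  have h : ∀ i ∈ Finset.univ, HasDerivAt
      (fun t => Real.exp (t * μ i) * inner ℝ (b i) v * inner ℝ (b i) a)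
      (Real.exp (t * μ i) * inner ℝ (b i) v * (μ i * inner ℝ (b i) a)) t := by
    intro i _
    have := (((hasDerivAt_id t).mul_const (μ i)).exp.mul_const (inner ℝ (b i) v)).mul_const
      (inner ℝ (b i) a)
    have e : Real.exp (t * μ i) * inner ℝ (b i) v * (μ i * inner ℝ (b i) a) =
      Real.exp (id t * μ i) * (1 * μ i) * inner ℝ (b i) v * inner ℝ (b i) a := by
      simp only [id]; ring
    rw [e]; exact this
  exact HasDerivAt.fun_sum h

lemma fl_eig (b : OrthonormalBasis ι ℝ V) (μ : ι → ℝ) (t : ℝ) (v a : V) (c : ℝ)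
    (h : spc b μ a = c • a) : inner ℝ (fl b μ t v) a = Real.exp (t * c) * inner ℝ v a := by
  rw [fl, inner_spc_comm]
  have : spc b (fun i => Real.exp (t * μ i)) a = Real.exp (t * c) • a := by
    apply ext_b b
    intro i
    have hi : inner ℝ (b i) (spc b μ a) = inner ℝ (b i) (c • a) := by rw [h]
    rw [b_spc, real_inner_smul_right] at hi
    rw [b_spc, real_inner_smul_right]
    by_cases h0 : inner ℝ (b i) a = 0
    · rw [h0]; simp
    · rw [mul_right_cancel₀ h0 hi]
  rw [this, real_inner_smul_right]

lemma bad_null [FiniteDimensional ℝ V] [MeasurableSpace V] [BorelSpace V] (m : Measure V)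
    [m.IsAddHaarMeasure]
    (b : OrthonormalBasis ι ℝ V) (μ : ι → ℝ) {a c : V} (ha : a ≠ 0) (hc : ∀ r : ℝ, c ≠ r • a) :
    m {v | ∃ t, inner ℝ (fl b μ t v) a = 0 ∧ inner ℝ (fl b μ t v) c = 0} = 0 := by
  have haa : inner ℝ a a ≠ 0 := (real_inner_self_pos.2 ha).ne'
  set c' : V := c - (inner ℝ c a / inner ℝ a a) • a with hc'
  have hc0 : c' ≠ 0 := fun e => hc _ (sub_eq_zero.1 e)
  have hac : inner ℝ a c' = 0 := by
    rw [hc', inner_sub_right, real_inner_smul_right, real_inner_comm a c]; field_simp; ring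
  let H : Submodule ℝ V := LinearMap.ker (innerₛₗ ℝ c')
  have hH : ∀ y, y ∈ H ↔ inner ℝ c' y = 0 := fun y => by
    simp [H]
  have hH0 : m H = 0 := by
    apply Measure.addHaar_submodule
    intro e
    have : c' ∈ H := by rw [e]; trivial
    rw [hH] at this
    exact hc0 (inner_self_eq_zero.1 this)
  let Ψ : V → V := fun y => fl b μ (-(inner ℝ y a)) (y - (inner ℝ y a / inner ℝ a a) • a)
  have hd : Differentiable ℝ Ψ := by
    have e : Ψ = fun y => ∑ i, (Real.exp (-(inner ℝ y a) * μ i) *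
      innerSL ℝ (b i) (y - (inner ℝ y a / inner ℝ a a) • a)) • b i := by
      funext y; simp only [Ψ, fl, spc, innerSL_apply_apply]
    have e' : ∀ y : V, inner ℝ y a = innerSL ℝ a y := fun y => by
      rw [innerSL_apply_apply, real_inner_comm]
    rw [e]
    simp only [e']
    fun_prop
  have hnull : m (Ψ '' H) = 0 :=
    addHaar_image_eq_zero_of_differentiableOn_of_addHaar_eq_zero m hd.differentiableOn hH0
  refine measure_mono_null ?_ hnull
  rintro v ⟨t, h1, h2⟩
  refine ⟨fl b μ t v + (t / inner ℝ a a) • a, ?_, ?_⟩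
  · change _ ∈ H
    rw [hH, inner_add_right, real_inner_smul_right, real_inner_comm a c', hac, hc',
      inner_sub_left, real_inner_smul_left, real_inner_comm _ c, h2, real_inner_comm (fl b μ t v) a, h1]
    ring
  · have e : inner ℝ (fl b μ t v + (t / inner ℝ a a) • a) a = t := by
      rw [inner_add_left, h1, real_inner_smul_left]; field_simp; ring
    simp only [Ψ]
    rw [e, add_sub_cancel_right, fl_neg]

lemma avoid [FiniteDimensional ℝ V] (b : OrthonormalBasis ι ℝ V) (μ : ι → ℝ)
    (P : Set (V × V)) (hPf : P.Finite) (hP : ∀ q ∈ P, q.1 ≠ 0 ∧ ∀ r : ℝ, q.2 ≠ r • q.1)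
    (G : Set V) (hGf : G.Finite) (hG : ∀ x ∈ G, x ≠ 0) (U : Set V) (hU : IsOpen U)
    (hne : U.Nonempty) :
    ∃ v ∈ U, (∀ q ∈ P, ∀ t, inner ℝ (fl b μ t v) q.1 = 0 → inner ℝ (fl b μ t v) q.2 ≠ 0) ∧
      ∀ x ∈ G, inner ℝ v x ≠ 0 := by
  let _ : MeasurableSpace V := borel V
  have _ : BorelSpace V := ⟨rfl⟩
  let m : Measure V := Measure.addHaar
  have h1 : m (⋃ q ∈ P, {v | ∃ t, inner ℝ (fl b μ t v) q.1 = 0 ∧ inner ℝ (fl b μ t v) q.2 = 0}) = 0 :=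
    (measure_biUnion_null_iff hPf.countable).2 fun q hq => bad_null m b μ (hP q hq).1 (hP q hq).2
  have h2 : m (⋃ x ∈ G, {v | inner ℝ v x = 0}) = 0 := by
    refine (measure_biUnion_null_iff hGf.countable).2 fun x hx => ?_
    let H : Submodule ℝ V := LinearMap.ker (innerₛₗ ℝ x)
    have hH : ∀ y, y ∈ H ↔ inner ℝ x y = 0 := fun y => by simp [H]
    have e : {v | inner ℝ v x = 0} = (H : Set V) := by
      ext y; change _ ↔ y ∈ H; rw [hH, real_inner_comm]; rfl
    rw [e]
    apply Measure.addHaar_submodule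
    intro e
    have : x ∈ H := by rw [e]; trivial
    rw [hH] at this
    exact hG x hx (inner_self_eq_zero.1 this)
  have h3 := hU.measure_pos m hne
  by_contra hcon
  push Not at hcon
  have : U ⊆ (⋃ q ∈ P, {v | ∃ t, inner ℝ (fl b μ t v) q.1 = 0 ∧ inner ℝ (fl b μ t v) q.2 = 0}) ∪
      (⋃ x ∈ G, {v | inner ℝ v x = 0}) := by
    intro v hv
    by_cases h : ∀ q ∈ P, ∀ t, inner ℝ (fl b μ t v) q.1 = 0 → inner ℝ (fl b μ t v) q.2 ≠ 0
    · right
      obtain ⟨x, hx, h⟩ := hcon v hv h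
      exact Set.mem_biUnion hx h
    · left
      push Not at h
      obtain ⟨q, hq, t, h1, h2⟩ := h
      exact Set.mem_biUnion hq ⟨t, h1, h2⟩
  exact h3.ne' (measure_mono_null this (measure_union_null h1 h2))

lemma deriv_sign {f : ℝ → ℝ} {t d : ℝ} (h : HasDerivAt f d t) (h0 : f t = 0) (hd : d ≠ 0) :
    ∀ᶠ x in 𝓝[>] t, 0 < f x * d := by
  have h1 : Tendsto (slope f t) (𝓝[>] t) (𝓝 d) :=
    (hasDerivAt_iff_tendsto_slope.1 h).mono_left (nhdsWithin_mono _ fun x hx => ne_of_gt hx)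
  have h2 : Tendsto (fun x => slope f t x * d) (𝓝[>] t) (𝓝 (d * d)) := h1.mul_const d
  have h3 := h2.eventually (lt_mem_nhds (mul_self_pos.2 hd))
  filter_upwards [h3, self_mem_nhdsWithin] with x hx hxt
  have hxt' : 0 < x - t := sub_pos.2 hxt
  rw [slope_def_field, h0, sub_zero] at hx
  have : f x * d = (f x / (x - t) * d) * (x - t) := by field_simp
  rw [this]; positivity

lemma follow [FiniteDimensional ℝ V] {Φ : Finset V} {g : V ≃ₗᵢ[ℝ] V} (hA : Arr Φ g)
    (b : OrthonormalBasis ι ℝ V) (μ : ι → ℝ) (hb : ∀ x, spc b μ x = g x + g.symm x)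
    {u v : V} (hu : Gen Φ u) (hv : ∀ a ∈ Φ, 0 < inner ℝ v a * inner ℝ u a)
    (h1 : ∀ a ∈ Φ, ∀ c ∈ Φ, (∀ r : ℝ, c ≠ r • a) → ∀ t, inner ℝ (fl b μ t v) a = 0 →
      inner ℝ (fl b μ t v) c ≠ 0)
    (h2 : ∀ a ∈ Φ, (∀ r : ℝ, spc b μ a ≠ r • a) → ∀ t, inner ℝ (fl b μ t v) a = 0 →
      inner ℝ (fl b μ t v) (spc b μ a) ≠ 0) (T : ℝ) (hT : 0 ≤ T) :
    ∃ u', Relation.ReflTransGen (AStep Φ g) u u' ∧ Gen Φ u' ∧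
      ∀ a ∈ Φ, 0 ≤ inner ℝ (fl b μ T v) a * inner ℝ u' a := by
  classical
  set S : Set ℝ := {t | ∃ u', Relation.ReflTransGen (AStep Φ g) u u' ∧ Gen Φ u' ∧
      ∀ a ∈ Φ, 0 ≤ inner ℝ (fl b μ t v) a * inner ℝ u' a} with hS
  have hcont : ∀ a, Continuous fun t => inner ℝ (fl b μ t v) a := fun a =>
    continuous_iff_continuousAt.2 fun t => (fl_deriv b μ t v a).continuousAt
  have hcl : IsClosed S := by
    have e : S = ⋃ P ∈ {P : Finset V | P ∈ Φ.powerset ∧ ∃ u',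
        Relation.ReflTransGen (AStep Φ g) u u' ∧ Gen Φ u' ∧ ∀ a ∈ Φ, (a ∈ P ↔ 0 < inner ℝ u' a)},
        {t | ∀ a ∈ Φ, 0 ≤ inner ℝ (fl b μ t v) a * (if a ∈ P then 1 else -1)} := by
      ext t
      simp only [hS, Set.mem_ofPred_eq, Set.mem_iUnion, exists_prop]
      constructor
      · rintro ⟨u', r, hG, h⟩
        refine ⟨Φ.filter fun a => 0 < inner ℝ u' a,
          ⟨Finset.mem_powerset.2 (Finset.filter_subset _ _), u', r, hG, fun a ha => by simp [ha]⟩, ?_⟩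
        intro a ha
        have := h a ha
        have hne := hG a ha
        by_cases hp : 0 < inner ℝ u' a
        · rw [if_pos (by simp [ha, hp])]; nlinarith
        · rw [if_neg (by simp [ha, hp])]
          have : inner ℝ u' a < 0 := lt_of_le_of_ne (not_lt.1 hp) hne
          nlinarith
      · rintro ⟨P, ⟨-, u', r, hG, hP⟩, h⟩
        refine ⟨u', r, hG, fun a ha => ?_⟩
        have := h a ha
        have hne := hG a ha
        by_cases hp : 0 < inner ℝ u' a
        · rw [if_pos ((hP a ha).2 hp)] at this; nlinarith
        · rw [if_neg (by rw [hP a ha]; exact hp)] at this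
          have : inner ℝ u' a < 0 := lt_of_le_of_ne (not_lt.1 hp) hne
          nlinarith
    rw [e]
    refine Set.Finite.isClosed_biUnion ?_ fun P _ => ?_
    · exact (Φ.powerset.finite_toSet).subset fun P hP => hP.1
    · simp only [Set.ofPred_forall]
      refine isClosed_biInter fun a _ => ?_
      exact isClosed_le continuous_const ((hcont a).mul continuous_const)
  have main : Set.Icc 0 T ⊆ S := by
    refine IsClosed.Icc_subset_of_forall_mem_nhdsWithin (hcl.inter isClosed_Icc) ?_ ?_
    · exact ⟨u, .refl, hu, fun a ha => by rw [fl_zero]; exact (hv a ha).le⟩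
    rintro t ⟨⟨u1, r, hG, hle⟩, -⟩
    have pers : ∀ a ∈ Φ, inner ℝ (fl b μ t v) a ≠ 0 → ∀ᶠ x in 𝓝[>] t,
        0 < inner ℝ (fl b μ x v) a * inner ℝ (fl b μ t v) a := by
      intro a _ hne
      have : Tendsto (fun x => inner ℝ (fl b μ x v) a * inner ℝ (fl b μ t v) a) (𝓝[>] t)
          (𝓝 (inner ℝ (fl b μ t v) a * inner ℝ (fl b μ t v) a)) :=
        (((hcont a).tendsto t).mono_left nhdsWithin_le_nhds).mul_const _
      exact this.eventually (lt_mem_nhds (mul_self_pos.2 hne))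
    have same : ∀ a ∈ Φ, inner ℝ (fl b μ t v) a ≠ 0 → sg u1 a = sg (fl b μ t v) a := by
      intro a ha hne
      apply rsign_eq
      have := hle a ha
      rw [mul_comm]
      exact lt_of_le_of_ne this (mul_ne_zero hne (hG a ha)).symm
    by_cases hz : ∀ a ∈ Φ, inner ℝ (fl b μ t v) a ≠ 0
    · have := (Finset.eventually_all Φ).2 fun a ha => pers a ha (hz a ha)
      filter_upwards [this] with x hx
      refine ⟨u1, r, hG, fun a ha => ?_⟩
      have e1 := same a ha (hz a ha)
      have e2 : sg (fl b μ x v) a = sg (fl b μ t v) a := rsign_eq (hx a ha)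
      refine (mul_pos_of_rsign ?_ (e2.trans e1.symm)).le
      intro e; have := hx a ha; rw [e] at this; simp at this
    push Not at hz
    obtain ⟨a, ha, h0⟩ := hz
    have hne : ∀ c ∈ Φ, c ≠ a → c ≠ -a → inner ℝ (fl b μ t v) c ≠ 0 := by
      intro c hc n1 n2
      refine h1 a ha c hc ?_ t h0
      intro k e
      rcases hA.red a ha c hc k e with h | h
      · exact n1 h
      · exact n2 h
    have hTa : ∀ k : ℝ, spc b μ a ≠ k • a := by
      intro k e
      rw [fl_eig b μ t v a k e] at h0
      have := hv a ha
      rcases mul_eq_zero.1 h0 with h | h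
      · exact (Real.exp_pos _).ne' h
      · rw [h] at this; simp at this
    have hd := h2 a ha hTa t h0
    have ev1 := deriv_sign (fl_deriv b μ t v a) h0 hd
    have ev2 : ∀ᶠ x in 𝓝[>] t, ∀ c ∈ Φ, c ≠ a → c ≠ -a →
        0 < inner ℝ (fl b μ x v) c * inner ℝ (fl b μ t v) c := by
      refine (Finset.eventually_all Φ).2 fun c hc => ?_
      by_cases n1 : c = a
      · exact Eventually.of_forall fun _ h => absurd n1 h
      by_cases n2 : c = -a
      · exact Eventually.of_forall fun _ _ h => absurd n2 h
      filter_upwards [pers c hc (hne c hc n1 n2)] with x hx _ _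
      exact hx
    filter_upwards [ev1, ev2] with x hx1 hx2
    have hxa : inner ℝ (fl b μ x v) a ≠ 0 := by
      intro e; rw [e] at hx1; simp at hx1
    have hGx : Gen Φ (fl b μ x v) := by
      intro c hc
      by_cases n1 : c = a
      · subst n1; exact hxa
      by_cases n2 : c = -a
      · subst n2; rw [inner_neg_right, neg_ne_zero]; exact hxa
      intro e; have := hx2 c hc n1 n2; rw [e] at this; simp at this
    have s1 : ∀ c ∈ Φ, c ≠ a → c ≠ -a → sg u1 c = sg (fl b μ t v) c := fun c hc n1 n2 =>
      same c hc (hne c hc n1 n2)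
    have s2 : ∀ c ∈ Φ, c ≠ a → c ≠ -a → sg (fl b μ x v) c = sg (fl b μ t v) c :=
      fun c hc n1 n2 => rsign_eq (hx2 c hc n1 n2)
    rcases lt_or_gt_of_ne (mul_ne_zero (hG a ha) hxa) with hlt | hgt
    · refine ⟨fl b μ x v, r.tail ⟨hG, hGx, ⟨a, fun c hc n1 n2 => ?_⟩, ?_⟩, hGx,
        fun c _ => mul_self_nonneg _⟩
      · rw [s1 c hc n1 n2, s2 c hc n1 n2]
      · refine crossing hA ha h0 s1 s2 hlt ?_
        rw [← inner_add_right, ← hb]; exact hx1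
    · refine ⟨u1, r, hG, fun c hc => ?_⟩
      by_cases n1 : c = a
      · subst n1; rw [mul_comm]; exact hgt.le
      by_cases n2 : c = -a
      · subst n2; rw [inner_neg_right, inner_neg_right, neg_mul_neg, mul_comm]; exact hgt.le
      exact (mul_pos_of_rsign (hGx c hc) ((s2 c hc n1 n2).trans (s1 c hc n1 n2).symm)).le
  exact main ⟨hT, le_rfl⟩

lemma flow [FiniteDimensional ℝ V] {Φ : Finset V} {g : V ≃ₗᵢ[ℝ] V} (hA : Arr Φ g)
    (hne : Φ.Nonempty) : ∃ l : ℝ, (∃ a ∈ Φ, ∃ e, g e + g.symm e = l • e ∧ inner ℝ e a ≠ 0) ∧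
      ∀ u, Gen Φ u → ∃ u' p, Relation.ReflTransGen (AStep Φ g) u u' ∧ Gen Φ u' ∧
        g p + g.symm p = l • p ∧
        ∀ a ∈ Φ, (∃ e, g e + g.symm e = l • e ∧ inner ℝ e a ≠ 0) →
          inner ℝ p a ≠ 0 ∧ sg u' a = sg p a := by
  classical
  let T : V →ₗ[ℝ] V := (g.toLinearEquiv : V →ₗ[ℝ] V) + (g.symm.toLinearEquiv : V →ₗ[ℝ] V)
  have hTa : ∀ x, T x = g x + g.symm x := fun x => rfl
  have hT : T.IsSymmetric := by
    intro x y
    rw [hTa, hTa, inner_add_left, inner_add_right, add_comm]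
    congr 1
    · rw [← g.inner_map_map, g.apply_symm_apply]
    · rw [← g.symm.inner_map_map, g.symm_apply_apply]
  let b := hT.eigenvectorBasis rfl
  let μ := hT.eigenvalues rfl
  have hbi : ∀ i, T (b i) = μ i • b i := fun i => by
    have := hT.apply_eigenvectorBasis rfl i
    exact this
  have hb : ∀ x, spc b μ x = g x + g.symm x := by
    intro x
    rw [← hTa]
    apply ext_b b
    intro i
    rw [b_spc, ← hT, hbi, real_inner_smul_left]
  obtain ⟨a0, ha0⟩ := hne
  let I := Finset.univ.filter fun i => ∃ a ∈ Φ, inner ℝ (b i) a ≠ 0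
  have hI : I.Nonempty := by
    by_contra h
    rw [Finset.not_nonempty_iff_eq_empty, Finset.filter_eq_empty_iff] at h
    apply hA.nz
    have : a0 = 0 := by
      apply ext_b b
      intro i
      have := h (Finset.mem_univ i)
      push Not at this
      rw [this a0 ha0, inner_zero_right]
    rwa [← this]
  obtain ⟨i0, hi0, hmax⟩ := Finset.exists_max_image I μ hI
  have hmax' : ∀ i, ∀ a ∈ Φ, inner ℝ (b i) a ≠ 0 → μ i ≤ μ i0 := fun i a ha h =>
    hmax i (Finset.mem_filter.2 ⟨Finset.mem_univ _, a, ha, h⟩)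
  refine ⟨μ i0, ?_, ?_⟩
  · obtain ⟨a, ha, h⟩ := (Finset.mem_filter.1 hi0).2
    exact ⟨a, ha, b i0, hbi i0, h⟩
  intro u hu
  let χ : Fin (Module.finrank ℝ V) → ℝ := fun i => if μ i = μ i0 then 1 else 0
  have hE : ∀ a, (∃ e, g e + g.symm e = μ i0 • e ∧ inner ℝ e a ≠ 0) → spc b χ a ≠ 0 := by
    rintro a ⟨e, he, hea⟩ h0
    apply hea
    have h3 : spc b χ e = e := by
      apply ext_b b
      intro i
      have : inner ℝ (b i) (spc b μ e) = inner ℝ (b i) (μ i0 • e) := by rw [hb, he]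
      rw [b_spc, real_inner_smul_right] at this
      rw [b_spc]
      by_cases hz : inner ℝ (b i) e = 0
      · rw [hz, mul_zero]
      · simp only [χ]; rw [if_pos (mul_right_cancel₀ hz this), one_mul]
    rw [← h3, inner_spc_comm, h0, inner_zero_right]
  obtain ⟨v, hvU, hvP, hvG⟩ := avoid b μ
    {q | q.1 ∈ Φ ∧ (q.2 ∈ Φ ∨ q.2 = spc b μ q.1) ∧ ∀ r : ℝ, q.2 ≠ r • q.1}
    (by
      have : ((Φ ×ˢ (Φ ∪ Φ.image (spc b μ)) : Finset (V × V)) : Set (V × V)).Finite :=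
        Finset.finite_toSet _
      refine this.subset ?_
      rintro ⟨x, y⟩ ⟨h1, h2, -⟩
      simp only [Finset.coe_product, Set.mem_prod, Finset.mem_coe, Finset.mem_union,
        Finset.mem_image]
      refine ⟨h1, ?_⟩
      rcases h2 with h | h
      · exact Or.inl h
      · exact Or.inr ⟨x, h1, h.symm⟩)
    (by
      rintro ⟨x, y⟩ ⟨h1, -, h3⟩
      exact ⟨fun e => hA.nz (by rw [← e]; exact h1), h3⟩)
    {x | x ∈ Φ.image (spc b χ) ∧ x ≠ 0}
    ((Finset.finite_toSet (Φ.image (spc b χ))).subset fun x hx => hx.1)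
    (fun x hx => hx.2)
    {v | ∀ a ∈ Φ, 0 < inner ℝ v a * inner ℝ u a}
    (by
      simp only [Set.ofPred_forall]
      refine isOpen_biInter_finset fun a _ => ?_
      exact isOpen_lt continuous_const (by fun_prop))
    ⟨u, fun a ha => mul_self_pos.2 (hu a ha)⟩
  have hlim : ∀ a ∈ Φ, Tendsto (fun t => Real.exp (-(t * μ i0)) * inner ℝ (fl b μ t v) a) atTop
      (𝓝 (inner ℝ (spc b χ v) a)) := by
    intro a ha
    simp only [fl, inner_spc, Finset.mul_sum]
    refine tendsto_finsetSum _ fun i _ => ?_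
    by_cases hz : inner ℝ (b i) a = 0
    · simp [hz]
    have hle := hmax' i a ha hz
    have e : ∀ t, Real.exp (-(t * μ i0)) * (Real.exp (t * μ i) * inner ℝ (b i) v * inner ℝ (b i) a)
        = Real.exp (t * (μ i - μ i0)) * (inner ℝ (b i) v * inner ℝ (b i) a) := by
      intro t
      have : Real.exp (t * (μ i - μ i0)) = Real.exp (-(t * μ i0)) * Real.exp (t * μ i) := by
        rw [← Real.exp_add]; congr 1; ring
      rw [this]; ring
    rw [mul_assoc (χ i)]
    simp only [e]
    refine Tendsto.mul_const _ ?_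
    simp only [χ]
    by_cases hm : μ i = μ i0
    · rw [if_pos hm, hm]; simp
    · rw [if_neg hm]
      refine Real.tendsto_exp_atBot.comp ?_
      exact tendsto_id.atTop_mul_const_of_neg (sub_neg.2 (lt_of_le_of_ne hle hm))
  have hev : ∀ᶠ t in atTop, ∀ a ∈ Φ, (∃ e, g e + g.symm e = μ i0 • e ∧ inner ℝ e a ≠ 0) →
      0 < inner ℝ (fl b μ t v) a * inner ℝ (spc b χ v) a := by
    refine (Finset.eventually_all Φ).2 fun a ha => ?_
    by_cases h : ∃ e, g e + g.symm e = μ i0 • e ∧ inner ℝ e a ≠ 0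
    · have hn : inner ℝ (spc b χ v) a ≠ 0 := by
        rw [inner_spc_comm]
        exact hvG _ ⟨Finset.mem_image_of_mem _ ha, hE a h⟩
      have := ((hlim a ha).mul_const (inner ℝ (spc b χ v) a)).eventually
        (lt_mem_nhds (mul_self_pos.2 hn))
      filter_upwards [this] with t ht _
      rw [mul_assoc] at ht
      exact pos_of_mul_pos_right ht (Real.exp_pos _).le
    · exact Eventually.of_forall fun _ h' => absurd h' h
  obtain ⟨t, ht, ht0⟩ := (hev.and (eventually_ge_atTop 0)).exists
  obtain ⟨u', r, hG, hu'⟩ := follow hA b μ hb hu hvU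
    (fun a ha c hc h => hvP (a, c) ⟨ha, Or.inl hc, h⟩)
    (fun a ha h => hvP (a, spc b μ a) ⟨ha, Or.inr rfl, h⟩) t ht0
  refine ⟨u', spc b χ v, r, hG, ?_, ?_⟩
  · rw [← hb]
    apply ext_b b
    intro i
    rw [b_spc, real_inner_smul_right, b_spc]
    simp only [χ]
    by_cases hm : μ i = μ i0
    · rw [hm]
    · rw [if_neg hm]; ring
  · intro a ha h
    have h1 := ht a ha h
    have h2 : inner ℝ (spc b χ v) a ≠ 0 := by intro e; rw [e] at h1; simp at h1
    have h3 : inner ℝ (fl b μ t v) a ≠ 0 := by intro e; rw [e] at h1; simp at h1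
    refine ⟨h2, ?_⟩
    have h4 : sg (fl b μ t v) a = sg (spc b χ v) a := rsign_eq h1
    rw [← h4]
    apply rsign_eq
    rw [mul_comm]
    exact lt_of_le_of_ne (hu' a ha) (mul_ne_zero h3 (hG a ha)).symm

end Flow

section ThmA
open Filter Topology
variable {V : Type*} [NormedAddCommGroup V] [InnerProductSpace ℝ V]

lemma perturb (Φ : Finset V) (p z : V) : ∃ Z : V,
    (∀ a ∈ Φ, inner ℝ p a = 0 → sg Z a = sg z a) ∧
    ∀ a ∈ Φ, inner ℝ p a ≠ 0 → sg Z a = sg p a := by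
  have hev : ∀ᶠ ε in 𝓝[>] (0 : ℝ), ∀ a ∈ Φ, inner ℝ p a ≠ 0 →
      0 < (inner ℝ p a + ε * inner ℝ z a) * inner ℝ p a := by
    refine (Finset.eventually_all Φ).2 fun a _ => ?_
    by_cases h : inner ℝ p a = 0
    · exact Eventually.of_forall fun _ h' => absurd h h'
    have hc : Continuous fun ε : ℝ => (inner ℝ p a + ε * inner ℝ z a) * inner ℝ p a := by fun_prop
    have := (hc.tendsto 0).mono_left (nhdsWithin_le_nhds (s := Set.Ioi (0 : ℝ)))
    simp only [zero_mul, add_zero] at this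
    filter_upwards [this.eventually (lt_mem_nhds (mul_self_pos.2 h))] with ε hε _
    exact hε
  obtain ⟨ε, h1, h2⟩ := (hev.and self_mem_nhdsWithin).exists
  have h2 : 0 < ε := h2
  refine ⟨p + ε • z, fun a _ h0 => ?_, fun a ha h0 => ?_⟩
  · unfold sg
    rw [inner_add_left, h0, zero_add, real_inner_smul_left]
    rcases lt_trichotomy (inner ℝ z a) 0 with h | h | h
    · rw [Real.sign_of_neg h, Real.sign_of_neg (mul_neg_of_pos_of_neg h2 h)]
    · rw [h, mul_zero]
    · rw [Real.sign_of_pos h, Real.sign_of_pos (mul_pos h2 h)]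
  · unfold sg
    apply rsign_eq
    rw [inner_add_left, real_inner_smul_left]
    exact h1 a ha h0

lemma ne_zero_of_sg {u v a : V} (h : inner ℝ v a ≠ 0) (e : sg u a = sg v a) : inner ℝ u a ≠ 0 := by
  intro h0
  have := sg_sq h
  rw [← e, sg, h0, Real.sign_zero] at this
  simp at this

theorem thmA [FiniteDimensional ℝ V] (g : V ≃ₗᵢ[ℝ] V) (n : ℕ) :
    ∀ Φ : Finset V, Φ.card = n → Arr Φ g → ∃ m : ℝ, ∀ u, Gen Φ u →
      ∃ u', Relation.ReflTransGen (AStep Φ g) u u' ∧ Gen Φ u' ∧ DD Φ g u' = m := by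
  classical
  induction n using Nat.strong_induction_on with
  | _ n ih =>
  intro Φ hcard hA
  rcases Φ.eq_empty_or_nonempty with he | hne
  · subst he
    exact ⟨0, fun u hu => ⟨u, .refl, hu, by simp [DD]⟩⟩
  obtain ⟨l, ⟨a0, ha0, e0, he0, hea0⟩, hfl⟩ := flow hA hne
  set P : V → Prop := fun a => ∀ e, g e + g.symm e = l • e → inner ℝ e a = 0 with hP
  have hPg : ∀ a, P a → P (g a) := by
    intro a ha e he
    have : inner ℝ e (g a) = inner ℝ (g.symm e) a := by
      rw [← g.symm.inner_map_map, g.symm_apply_apply]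
    rw [this]
    apply ha
    rw [← map_smul, ← he, map_add, g.apply_symm_apply, g.symm_apply_apply]
  have hPg' : ∀ a, P (g a) → P a := by
    intro a ha e he
    rw [← g.inner_map_map]
    apply ha
    rw [← map_smul, ← he, map_add, g.apply_symm_apply, g.symm_apply_apply]
  set ΦE := Φ.filter P with hΦE
  set Ψ := Φ.filter (fun a => ¬ P a) with hΨ
  have hAE : Arr ΦE g := by
    refine ⟨?_, ?_, ?_, ?_⟩
    · intro a ha
      rw [hΦE, Finset.mem_filter] at ha ⊢
      exact ⟨hA.neg a ha.1, fun e he => by rw [inner_neg_right, ha.2 e he, neg_zero]⟩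
    · intro a ha
      rw [hΦE, Finset.mem_filter] at ha ⊢
      exact ⟨hA.map a ha.1, hPg a ha.2⟩
    · intro a ha c hc
      exact hA.red a (Finset.mem_filter.1 ha).1 c (Finset.mem_filter.1 hc).1
    · intro h; exact hA.nz (Finset.mem_filter.1 h).1
  have hΨm : ∀ a ∈ Ψ, g a ∈ Ψ := by
    intro a ha
    rw [hΨ, Finset.mem_filter] at ha ⊢
    exact ⟨hA.map a ha.1, fun h => ha.2 (hPg' a h)⟩
  have hlt : ΦE.card < n := by
    rw [← hcard]
    apply Finset.card_lt_card
    rw [Finset.filter_ssubset]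
    exact ⟨a0, ha0, fun h => hea0 (h e0 he0)⟩
  obtain ⟨m, hm⟩ := ih _ hlt ΦE rfl hAE
  have hDD : ∀ u, DD Φ g u = DD ΦE g u + DD Ψ g u := by
    intro u
    simp only [DD, hΦE, hΨ]
    rw [Finset.sum_filter_add_sum_filter_not]
  refine ⟨m + Ψ.card * (1 - 2 * (Real.arccos (l / 2) / Real.pi)), ?_⟩
  intro u hu
  obtain ⟨u', p, r, hG, hp, hpu⟩ := hfl u hu
  have hpΨ : ∀ a ∈ Ψ, inner ℝ p a ≠ 0 ∧ sg u' a = sg p a := by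
    intro a ha
    rw [hΨ, Finset.mem_filter] at ha
    apply hpu a ha.1
    have := ha.2
    simp only [hP] at this
    push Not at this
    exact this
  have hpE : ∀ a ∈ ΦE, inner ℝ p a = 0 := fun a ha => (Finset.mem_filter.1 ha).2 p hp
  have hsplit : ∀ a ∈ Φ, a ∈ ΦE ∨ a ∈ Ψ := by
    intro a ha
    by_cases h : P a
    · exact Or.inl (Finset.mem_filter.2 ⟨ha, h⟩)
    · exact Or.inr (Finset.mem_filter.2 ⟨ha, h⟩)
  obtain ⟨y, ry, hGy, hDy⟩ := hm u' (fun a ha => hG a (Finset.mem_filter.1 ha).1)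
  have lift : ∀ y, Relation.ReflTransGen (AStep ΦE g) u' y → Gen ΦE y →
      ∃ Y, Relation.ReflTransGen (AStep Φ g) u' Y ∧ Gen Φ Y ∧ (∀ a ∈ ΦE, sg Y a = sg y a) ∧
        ∀ a ∈ Ψ, sg Y a = sg p a := by
    intro y hy
    induction hy with
    | refl => exact fun _ => ⟨u', .refl, hG, fun _ _ => rfl, fun a ha => (hpΨ a ha).2⟩
    | @tail y z _ hyz ih =>
      intro hGz
      obtain ⟨hGy, -, ⟨a, ha⟩, hle⟩ := hyz
      obtain ⟨Y, rY, hGY, h1, h2⟩ := ih hGy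
      obtain ⟨Z, hZ1, hZ2⟩ := perturb Φ p z
      have h1' : ∀ a ∈ ΦE, sg Z a = sg z a := fun a ha =>
        hZ1 a (Finset.mem_filter.1 ha).1 (hpE a ha)
      have h2' : ∀ a ∈ Ψ, sg Z a = sg p a := fun a ha =>
        hZ2 a (Finset.mem_filter.1 ha).1 (hpΨ a ha).1
      have hGZ : Gen Φ Z := by
        intro c hc
        rcases hsplit c hc with h | h
        · exact ne_zero_of_sg (hGz c h) (h1' c h)
        · exact ne_zero_of_sg (hpΨ c h).1 (h2' c h)
      refine ⟨Z, rY.tail ⟨hGY, hGZ, ⟨a, ?_⟩, ?_⟩, hGZ, h1', h2'⟩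
      · intro c hc n1 n2
        rcases hsplit c hc with h | h
        · rw [h1 c h, h1' c h]; exact ha c h n1 n2
        · rw [h2 c h, h2' c h]
      · rw [hDD, hDD, DD_congr hAE.map h1, DD_congr hAE.map h1', DD_congr hΨm h2,
          DD_congr hΨm h2']
        linarith
  obtain ⟨Y, rY, hGY, h1, h2⟩ := lift y ry hGy
  refine ⟨Y, r.trans rY, hGY, ?_⟩
  rw [hDD, DD_congr hAE.map h1, DD_congr hΨm h2, hDy,
    eig_const hΨm l hp fun a ha => (hpΨ a ha).1]

end ThmA

section Par
variable {B : Type*} [Fintype B] [DecidableEq B] {W : Type*} [Group W] {M : CoxeterMatrix B}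
  (cs : CoxeterSystem M W)

lemma not_pos_both {v : B → ℝ} (hv : v ≠ 0) (h : Pos v) (h' : Pos (-v)) : False := by
  apply hv
  funext b
  have h1 := h b
  have h2 := h' b
  simp only [Pi.neg_apply] at h2
  exact le_antisymm (by simpa using h2) h1

lemma al_ne_zero (i : B) : (al i : B → ℝ) ≠ 0 := by
  intro h; have := congrFun h i; simp at this

lemma root_ne_zero (w : W) (i : B) : rep cs w (al i) ≠ 0 := by
  intro h
  apply al_ne_zero i
  apply rep_injective cs w
  rw [h, map_zero]

lemma neg_of_desc (w : W) (i : B) (h : cs.length (w * cs.simple i) < cs.length w) :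
    Pos (-(rep cs w (al i))) := by
  have := tits cs (w * cs.simple i) i (by simpa using h)
  rwa [rep_mul, rep_simple_apply, ← rf_apply, rf_al, map_neg] at this

lemma pos_iff (w : W) (i : B) :
    Pos (rep cs w (al i)) ↔ cs.length w < cs.length (w * cs.simple i) := by
  constructor
  · intro h
    by_contra hn
    refine not_pos_both (root_ne_zero cs w i) h (neg_of_desc cs w i ?_)
    rcases cs.length_mul_simple w i with h1 | h1 <;> omega
  · exact tits cs w i

lemma root_dich (w : W) (i : B) : Pos (rep cs w (al i)) ∨ Pos (-(rep cs w (al i))) := by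
  rcases cs.length_mul_simple w i with h1 | h1
  · left; exact tits cs w i (by omega)
  · right; exact neg_of_desc cs w i (by omega)

lemma bil_root (w : W) (i : B) : bil M (rep cs w (al i)) (rep cs w (al i)) = 1 := by
  rw [bil_rep, bil_al, kk_self]

lemma eq_al_of_smul {w : W} {i j : B} {c : ℝ} (h : rep cs w (al j) = c • al i) :
    c = 1 ∨ c = -1 := by
  have := bil_root cs w j
  rw [h] at this
  simp only [map_smul, LinearMap.smul_apply, bil_al, kk_self, smul_eq_mul, mul_one] at this
  exact mul_self_eq_one_iff.1 this

lemma simple_pos (w : W) (i j : B) (h : Pos (rep cs w (al j))) (hne : rep cs w (al j) ≠ al i) :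
    Pos (rep cs (cs.simple i) (rep cs w (al j))) := by
  set β := rep cs w (al j) with hβ
  by_cases hk : ∃ k, k ≠ i ∧ β k ≠ 0
  · obtain ⟨k, hki, hk⟩ := hk
    rw [hβ, ← rep_mul]
    refine (root_dich cs _ _).resolve_right fun hneg => ?_
    have h1 := hneg k
    rw [rep_mul, ← hβ, rep_simple, Pi.neg_apply, rf_apply_ne M hki] at h1
    have h2 := h k
    exact hk (le_antisymm (by linarith) h2)
  · push Not at hk
    exfalso
    have e : β = β i • al i := by
      funext k
      by_cases hki : k = i
      · subst hki; simp
      · rw [hk k hki]; simp [hki]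
    rcases eq_al_of_smul cs (hβ.symm.trans e) with h1 | h1
    · rw [h1, one_smul] at e; exact hne e
    · have := h i; rw [h1] at this; norm_num at this

lemma eq_one_of_pos (w : W) (h : ∀ i, Pos (rep cs w (al i))) : w = 1 := by
  by_contra hne
  obtain ⟨i, hi⟩ := cs.exists_rightDescent_of_ne_one hne
  have := (pos_iff cs w i).1 (h i)
  unfold CoxeterSystem.IsRightDescent at hi
  omega

lemma rep_faithful {x y : W} (h : ∀ v, rep cs x v = rep cs y v) : x = y := by
  rw [← mul_inv_eq_one]
  apply eq_one_of_pos cs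
  intro i
  rw [rep_mul, h, rep_rep_inv]
  exact pos_al i

lemma conj_of_al {w : W} {i j : B} (h : rep cs w (al j) = al i) :
    w * cs.simple j = cs.simple i * w := by
  apply rep_faithful cs
  intro v
  rw [rep_mul, rep_mul, rep_simple_apply, rep_simple_apply, map_sub, map_smul, h]
  congr 3
  rw [← h, bil_rep]

lemma rep_parab_off {K : Set B} {u : W} (hu : u ∈ parab cs K) (v : B → ℝ) {k : B} (hk : k ∉ K) :
    rep cs u v k = v k := by
  induction hu using Subgroup.closure_induction generalizing v with
  | mem x hx =>
    obtain ⟨i, hi, rfl⟩ := hx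
    rw [rep_simple]
    exact rf_apply_ne M (fun e => hk (by rw [e]; exact hi)) v
  | one => rw [rep_one]
  | mul x y _ _ hx hy => rw [rep_mul, hx, hy]
  | inv x _ hx => rw [← hx (rep cs x⁻¹ v), rep_rep_inv]

lemma parab_pos_off {K : Set B} {u : W} (hu : u ∈ parab cs K) {i : B} (hi : i ∉ K) :
    Pos (rep cs u (al i)) := by
  refine (root_dich cs _ _).resolve_right fun hneg => ?_
  have := hneg i
  rw [Pi.neg_apply, rep_parab_off cs hu _ hi] at this
  simp at this
  linarith

lemma desc_mem {K : Set B} {u : W} (hu : u ∈ parab cs K) {i : B}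
    (h : cs.length (u * cs.simple i) < cs.length u) : i ∈ K := by
  by_contra hi
  have := (pos_iff cs u i).1 (parab_pos_off cs hu hi)
  omega

lemma simple_mem {K : Set B} {i : B} (hi : i ∈ K) : cs.simple i ∈ parab cs K :=
  Subgroup.subset_closure ⟨i, hi, rfl⟩

/-- Peel off a last letter. -/
lemma parab_peel {K : Set B} {u : W} (hu : u ∈ parab cs K) (hne : u ≠ 1) :
    ∃ i ∈ K, ∃ u' ∈ parab cs K, u = u' * cs.simple i ∧ cs.length u = cs.length u' + 1 := by
  obtain ⟨i, hi⟩ := cs.exists_rightDescent_of_ne_one hne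
  unfold CoxeterSystem.IsRightDescent at hi
  have hK := desc_mem cs hu hi
  refine ⟨i, hK, u * cs.simple i, mul_mem hu (simple_mem cs hK), by simp, ?_⟩
  rcases cs.length_mul_simple u i with h1 | h1 <;> omega

lemma pos_sum (a : W) {K : Set B} (ha : ∀ i ∈ K, Pos (rep cs a (al i))) {v : B → ℝ} (hv : Pos v)
    (hK : ∀ k, k ∉ K → v k = 0) : Pos (rep cs a v) := by
  have e : v = ∑ k, v k • (al k : B → ℝ) := by
    funext b; simp [Finset.sum_apply, Pi.single_apply]
  rw [e, map_sum]
  intro b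
  rw [Finset.sum_apply]
  apply Finset.sum_nonneg
  intro k _
  rw [map_smul, Pi.smul_apply, smul_eq_mul]
  by_cases hk : k ∈ K
  · exact mul_nonneg (hv k) (ha k hk b)
  · rw [hK k hk, zero_mul]

lemma parab_supp {K : Set B} {u : W} (hu : u ∈ parab cs K) {i : B} (hi : i ∈ K) :
    ∀ k, k ∉ K → rep cs u (al i) k = 0 := by
  intro k hk
  rw [rep_parab_off cs hu _ hk]
  simp [show k ≠ i from fun e => hk (e ▸ hi)]

lemma length_add_of_pos {K : Set B} {a : W} (ha : ∀ i ∈ K, Pos (rep cs a (al i))) (n : ℕ) :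
    ∀ u ∈ parab cs K, cs.length u = n → cs.length (a * u) = cs.length a + cs.length u := by
  induction n with
  | zero => intro u _ h; rw [cs.length_eq_zero_iff] at h; simp [h]
  | succ n ih =>
    intro u hu hn
    obtain ⟨i, hi, u', hu', rfl, hl⟩ := parab_peel cs hu (by rintro rfl; simp at hn)
    have h1 := ih u' hu' (by omega)
    have h2 : Pos (rep cs (a * u') (al i)) := by
      rw [rep_mul]
      apply pos_sum cs a ha
      · rw [pos_iff]; omega
      · exact parab_supp cs hu' hi
    have h3 := (pos_iff cs _ _).1 h2
    rw [← mul_assoc]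
    rcases cs.length_mul_simple (a * u') i with h4 | h4 <;> omega

lemma minRep_iff {K : Set B} {a : W} : IsMinRep cs K a ↔ ∀ i ∈ K, Pos (rep cs a (al i)) := by
  constructor
  · intro h i hi
    rw [pos_iff]
    have := h _ (simple_mem cs hi)
    rcases cs.length_mul_simple a i with h4 | h4 <;> omega
  · intro h v hv
    rw [length_add_of_pos cs h _ v hv rfl]; omega

lemma length_add {K : Set B} {a u : W} (ha : IsMinRep cs K a) (hu : u ∈ parab cs K) :
    cs.length (a * u) = cs.length a + cs.length u :=
  length_add_of_pos cs ((minRep_iff cs).1 ha) _ u hu rfl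

lemma exists_decomp (K : Set B) (n : ℕ) : ∀ v : W, cs.length v = n →
    ∃ a b, IsMinRep cs K a ∧ b ∈ parab cs K ∧ v = a * b := by
  induction n using Nat.strong_induction_on with
  | _ n ih =>
  intro v hn
  by_cases h : ∀ i ∈ K, Pos (rep cs v (al i))
  · exact ⟨v, 1, (minRep_iff cs).2 h, one_mem _, by simp⟩
  · push Not at h
    obtain ⟨i, hi, h⟩ := h
    rw [pos_iff] at h
    obtain ⟨a, b, ha, hb, e⟩ := ih (cs.length (v * cs.simple i)) (by
      rcases cs.length_mul_simple v i with h4 | h4 <;> omega) _ rfl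
    exact ⟨a, b * cs.simple i, ha, mul_mem hb (simple_mem cs hi), by
      rw [← mul_assoc, ← e]; simp⟩

lemma deodhar {K : Set B} {a : W} (ha : IsMinRep cs K a) (i : B) :
    IsMinRep cs K (cs.simple i * a) ∨ ∃ j ∈ K, cs.simple i * a = a * cs.simple j := by
  by_cases h : ∃ j ∈ K, rep cs a (al j) = al i
  · obtain ⟨j, hj, h⟩ := h
    exact Or.inr ⟨j, hj, (conj_of_al cs h).symm⟩
  · push Not at h
    left
    rw [minRep_iff] at ha ⊢
    intro j hj
    rw [rep_mul]
    exact simple_pos cs a i j (ha j hj) (h j hj)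

lemma decomp_unique {K : Set B} {a a' b b' : W} (ha : IsMinRep cs K a) (ha' : IsMinRep cs K a')
    (hb : b ∈ parab cs K) (hb' : b' ∈ parab cs K) (e : a * b = a' * b') : a = a' ∧ b = b' := by
  have hc : b * b'⁻¹ ∈ parab cs K := mul_mem hb (inv_mem hb')
  have e' : a' = a * (b * b'⁻¹) := by rw [← mul_assoc, e]; simp
  have e'' : a = a' * (b * b'⁻¹)⁻¹ := by rw [e', mul_inv_cancel_right]
  have h1 := length_add cs ha hc
  have h2 := length_add cs ha' (inv_mem hc)
  rw [← e'] at h1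
  rw [← e''] at h2
  have h3 : cs.length (b * b'⁻¹) = 0 := by omega
  rw [cs.length_eq_zero_iff] at h3
  refine ⟨by rw [e', h3, mul_one], mul_inv_eq_one.1 h3⟩

lemma wordProd_mem {K : Set B} (ω : List B) (h : ∀ i ∈ ω, i ∈ K) : cs.wordProd ω ∈ parab cs K := by
  induction ω with
  | nil => simp [one_mem]
  | cons i ω ih =>
    rw [cs.wordProd_cons]
    exact mul_mem (simple_mem cs (h i (by simp))) (ih fun j hj => h j (by simp [hj]))

lemma exists_word {K : Set B} (n : ℕ) : ∀ u ∈ parab cs K, cs.length u = n →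
    ∃ ω : List B, (∀ i ∈ ω, i ∈ K) ∧ ω.length = n ∧ cs.wordProd ω = u := by
  induction n with
  | zero =>
    intro u _ h; rw [cs.length_eq_zero_iff] at h
    exact ⟨[], by simp, rfl, by simp [h]⟩
  | succ n ih =>
    intro u hu hn
    obtain ⟨i, hi, u', hu', rfl, hl⟩ := parab_peel cs hu (by rintro rfl; simp at hn)
    obtain ⟨ω, h1, h2, h3⟩ := ih u' hu' (by omega)
    refine ⟨ω ++ [i], ?_, by simp [h2], by rw [cs.wordProd_append, h3]; simp⟩
    intro j hj
    rcases List.mem_append.1 hj with h | h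
    · exact h1 j h
    · simp at h; rw [h]; exact hi

lemma letters_mem {K : Set B} (ω : List B) : cs.length (cs.wordProd ω) = ω.length →
    cs.wordProd ω ∈ parab cs K → ∀ i ∈ ω, i ∈ K := by
  induction ω using List.reverseRecOn with
  | nil => simp
  | append_singleton ω i ih =>
    intro h hm
    rw [cs.wordProd_append, cs.wordProd_singleton] at h hm
    have hl := cs.length_wordProd_le ω
    simp only [List.length_append, List.length_singleton] at h
    have h0 : cs.length (cs.wordProd ω) = ω.length := by
      rcases cs.length_mul_simple (cs.wordProd ω) i with h4 | h4 <;> omega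
    have hi : i ∈ K := by
      apply desc_mem cs hm
      rw [cs.simple_mul_simple_cancel_right]; omega
    have := ih h0 (by
      have := mul_mem hm (simple_mem cs hi)
      rwa [cs.simple_mul_simple_cancel_right] at this)
    intro j hj
    rcases List.mem_append.1 hj with h | h
    · exact this j h
    · simp at h; rw [h]; exact hi

end Par

section He
variable {B : Type*} [Fintype B] [DecidableEq B] {W : Type*} [Group W] {M : CoxeterMatrix B}
  (cs : CoxeterSystem M W) {J J' : Set B} {δ : parab cs J ≃* parab cs J'}

def LetterMap (cs : CoxeterSystem M W) (J J' : Set B) (δ : parab cs J ≃* parab cs J')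
    (d : B → B) : Prop :=
  ∀ j, ∀ hj : j ∈ J, d j ∈ J' ∧ (δ (sJ cs J j hj) : W) = cs.simple (d j)

lemma exists_letterMap (hδ : MapsSimples cs J J' δ) : ∃ d, LetterMap cs J J' δ d := by
  classical
  choose f h1 h2 using hδ.1
  refine ⟨fun j => if h : j ∈ J then f j h else j, fun j hj => ?_⟩
  simp only [hj, dif_pos]
  exact ⟨h1 j hj, h2 j hj⟩

lemma simple_inj {i j : B} (h : cs.simple i = cs.simple j) : i = j := by
  by_contra hne
  have h1 : rep cs (cs.simple i) (al i) i = rep cs (cs.simple j) (al i) i := by rw [h]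
  rw [rep_simple, rep_simple, rf_al, rf_apply_ne M hne] at h1
  simp at h1
  linarith

variable {d : B → B}

lemma delta_word (hd : LetterMap cs J J' δ d) (ω : List B) (h : ∀ i ∈ ω, i ∈ J) (hm : cs.wordProd ω ∈ parab cs J) :
    (δ ⟨cs.wordProd ω, hm⟩ : W) = cs.wordProd (ω.map d) := by
  induction ω with
  | nil =>
    have : (⟨cs.wordProd [], hm⟩ : parab cs J) = 1 := by ext; simp
    rw [this]; simp
  | cons i ω ih =>
    have hi : i ∈ J := h i (by simp)
    have hω : ∀ j ∈ ω, j ∈ J := fun j hj => h j (by simp [hj])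
    have hm' := wordProd_mem cs ω hω
    have : (⟨cs.wordProd (i :: ω), hm⟩ : parab cs J) = sJ cs J i hi * ⟨cs.wordProd ω, hm'⟩ := by
      ext; simp [sJ, cs.wordProd_cons]
    rw [this, map_mul, List.map_cons, cs.wordProd_cons, Subgroup.coe_mul, (hd i hi).2, ih hω hm']

lemma delta_length (hd : LetterMap cs J J' δ d) (u : parab cs J) :
    cs.length (δ u : W) ≤ cs.length (u : W) := by
  obtain ⟨ω, h1, h2, h3⟩ := exists_word cs _ (u : W) u.2 rfl
  have e : u = ⟨cs.wordProd ω, wordProd_mem cs ω h1⟩ := by ext; exact h3.symm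
  have : (δ u : W) = cs.wordProd (ω.map d) := by
    rw [e]; exact delta_word cs hd ω h1 _
  rw [this, ← h2]
  have := cs.length_wordProd_le (ω.map d)
  simpa using this

lemma special_of_closed (hd : LetterMap cs J J' δ d) {a : W} {K : Set B} (hK : K ⊆ J)
    (h : ∀ i ∈ K, ∃ j ∈ K, cs.simple (d i) * a = a * cs.simple j) :
    WSpecial cs J J' δ a K := by
  refine ⟨hK, ?_⟩
  choose f hf1 hf2 using h
  let F : K → K := fun i => ⟨f i i.2, hf1 i i.2⟩
  have hinj : Function.Injective F := by
    intro i j hij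
    have e : f i i.2 = f j j.2 := congrArg Subtype.val hij
    have h1 := hf2 i i.2
    have h2 := hf2 j j.2
    rw [e, ← h2] at h1
    have h3 := mul_right_cancel h1
    rw [← (hd i (hK i.2)).2, ← (hd j (hK j.2)).2] at h3
    have h4 := δ.injective (Subtype.ext h3)
    have h5 : cs.simple i = cs.simple j := congrArg Subtype.val h4
    exact Subtype.ext (simple_inj cs h5)
  have hsurj := Finite.injective_iff_surjective.1 hinj
  intro k hk
  obtain ⟨i, hi⟩ := hsurj ⟨k, hk⟩
  have e : f i i.2 = k := congrArg Subtype.val hi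
  refine ⟨i, hK i.2, i.2, ?_⟩
  have h1 := hf2 i i.2
  rw [e] at h1
  rw [(hd i (hK i.2)).2, ← h1]; simp

lemma special_le {a : W} {K : Set B} (h : WSpecial cs J J' δ a K) : K ⊆ Iset cs J J' δ a :=
  Set.subset_sUnion_of_mem h

lemma Iset_special (a : W) : WSpecial cs J J' δ a (Iset cs J J' δ a) := by
  constructor
  · rintro i ⟨K, hK, hi⟩; exact hK.1 hi
  · rintro k ⟨K, hK, hk⟩
    obtain ⟨j, hj, hjK, e⟩ := hK.2 k hk
    exact ⟨j, hj, ⟨K, hK, hjK⟩, e⟩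

lemma parab_mono {K L : Set B} (h : K ⊆ L) : parab cs K ≤ parab cs L :=
  Subgroup.closure_mono (Set.image_mono h)

lemma step_of (hd : LetterMap cs J J' δ d) {v v' : W} {i : B} (hi : i ∈ J)
    (e : v' = cs.simple (d i) * v * cs.simple i) (hl : cs.length v' ≤ cs.length v) :
    StepRel cs J J' δ v v' := ⟨i, hi, by rw [(hd i hi).2]; exact e, hl⟩

/-- Every element flows into some `a W_{I(J,a,δ)}`. -/
lemma part1 (hd : LetterMap cs J J' δ d) (v : W) : ∃ a x, IsMinRep cs J a ∧
    x ∈ parab cs (Iset cs J J' δ a) ∧ ToRel cs J J' δ v (a * x) := by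
  classical
  let P : ℕ → Prop := fun n => ∃ a b, IsMinRep cs J a ∧ b ∈ parab cs J ∧
    ToRel cs J J' δ v (a * b) ∧ cs.length b = n
  have hex : ∃ n, P n := by
    obtain ⟨a, b, ha, hb, e⟩ := exists_decomp cs J _ v rfl
    exact ⟨_, a, b, ha, hb, by rw [← e]; exact .refl, rfl⟩
  obtain ⟨a, b, ha, hb, hr, hn⟩ := Nat.find_spec hex
  set n := Nat.find hex with hnn
  have hmin : ∀ a' b', IsMinRep cs J a' → b' ∈ parab cs J → ToRel cs J J' δ v (a' * b') →
      n ≤ cs.length b' := fun a' b' h1 h2 h3 => Nat.find_min' hex ⟨a', b', h1, h2, h3, rfl⟩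
  let Q : List B → Prop := fun ω => (∀ i ∈ ω, i ∈ J) ∧ ω.length = n ∧
    ToRel cs J J' δ v (a * cs.wordProd ω)
  have rot : ∀ ω i, Q (ω ++ [i]) → ∃ j, cs.simple (d i) * a = a * cs.simple j ∧ Q (j :: ω) := by
    rintro ω i ⟨h1, h2, h3⟩
    have hi : i ∈ J := h1 i (by simp)
    have hω : ∀ k ∈ ω, k ∈ J := fun k hk => h1 k (by simp [hk])
    have hm := wordProd_mem cs _ h1
    have hlen : cs.length (cs.wordProd (ω ++ [i])) = n :=
      le_antisymm (by rw [← h2]; exact cs.length_wordProd_le _) (hmin a _ ha hm h3)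
    have hmω := wordProd_mem cs ω hω
    have hle := cs.length_wordProd_le ω
    simp only [List.length_append, List.length_singleton] at h2
    have e0 : cs.simple (d i) * (a * cs.wordProd (ω ++ [i])) * cs.simple i =
        cs.simple (d i) * a * cs.wordProd ω := by
      rw [cs.wordProd_append, cs.wordProd_singleton]; simp [mul_assoc]
    have hstep : ToRel cs J J' δ v (cs.simple (d i) * a * cs.wordProd ω) := by
      refine h3.tail (step_of cs hd hi e0.symm ?_)
      rw [length_add cs ha hm, hlen, mul_assoc]
      have h5 := length_add cs ha hmω
      rcases cs.length_simple_mul (a * cs.wordProd ω) (d i) with h4 | h4 <;> omega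
    rcases deodhar cs ha (d i) with h | ⟨j, hj, h⟩
    · have := hmin _ _ h hmω hstep
      omega
    · refine ⟨j, h, ?_, by simp [← h2], ?_⟩
      · intro k hk
        rcases List.mem_cons.1 hk with rfl | hk
        · exact hj
        · exact hω k hk
      · rw [h] at hstep
        rw [cs.wordProd_cons, ← mul_assoc]; exact hstep
  let K : Set B := {i | ∃ ω, Q ω ∧ i ∈ ω}
  have hKJ : K ⊆ J := by rintro i ⟨ω, h, hi⟩; exact h.1 i hi
  have rot2 : ∀ (ω2 ω1 : List B) (i : B), Q (ω1 ++ [i] ++ ω2) →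
      ∃ j ∈ K, cs.simple (d i) * a = a * cs.simple j := by
    intro ω2
    induction ω2 using List.reverseRecOn with
    | nil =>
      intro ω1 i h
      rw [List.append_nil] at h
      obtain ⟨j, e, hq⟩ := rot _ _ h
      exact ⟨j, ⟨_, hq, by simp⟩, e⟩
    | append_singleton ω2 k ih =>
      intro ω1 i h
      rw [← List.append_assoc] at h
      obtain ⟨j, e, hq⟩ := rot _ _ h
      exact ih (j :: ω1) i (by simpa using hq)
  have hsp : WSpecial cs J J' δ a K := by
    apply special_of_closed cs hd hKJ
    rintro i ⟨ω, hq, hi⟩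
    obtain ⟨ω1, ω2, rfl⟩ := List.append_of_mem hi
    exact rot2 ω2 ω1 i (by simpa using hq)
  obtain ⟨ω, h1, h2, h3⟩ := exists_word cs _ b hb hn
  have hQ : Q ω := ⟨h1, h2, by rw [h3]; exact hr⟩
  refine ⟨a, b, ha, ?_, hr⟩
  rw [← h3]
  exact wordProd_mem cs ω fun i hi => special_le cs hsp ⟨ω, hQ, hi⟩

/-- Pushing a word through a minimal representative. -/
lemma push (d : B → B) {a0 : W} (ha0 : IsMinRep cs J a0) (ω : List B)
    (hω : ∀ i ∈ ω, i ∈ J) :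
    ∃ a c, IsMinRep cs J a ∧ c ∈ parab cs J ∧ cs.wordProd (ω.map d) * a0 = a * c ∧
      (cs.length (cs.wordProd (ω.map d) * a0) = ω.length + cs.length a0 →
        cs.length a0 ≤ cs.length a ∧ (cs.length a = cs.length a0 → a = a0 ∧
          ∃ ω' : List B, cs.wordProd ω' = c ∧ ω'.length = ω.length ∧
            ∀ i ∈ ω, ∃ j ∈ ω', cs.simple (d i) * a0 = a0 * cs.simple j)) := by
  induction ω with
  | nil => exact ⟨a0, 1, ha0, one_mem _, by simp, fun _ => ⟨le_rfl, fun _ => ⟨rfl, [], by simp⟩⟩⟩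
  | cons i ω ih =>
    obtain ⟨a, c, ha, hc, e, hl⟩ := ih fun k hk => hω k (by simp [hk])
    have e1 : cs.wordProd ((i :: ω).map d) * a0 = cs.simple (d i) * a * c := by
      rw [List.map_cons, cs.wordProd_cons, mul_assoc, e, mul_assoc]
    have hle : cs.length (cs.wordProd (ω.map d) * a0) ≤ ω.length + cs.length a0 := by
      refine (cs.length_mul_le _ _).trans ?_
      have := cs.length_wordProd_le (ω.map d)
      simp at this; omega
    have red : cs.length (cs.wordProd ((i :: ω).map d) * a0) = (i :: ω).length + cs.length a0 →
        cs.length (cs.wordProd (ω.map d) * a0) = ω.length + cs.length a0 ∧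
        cs.length (cs.simple (d i) * (a * c)) = cs.length (a * c) + 1 := by
      intro h
      rw [e1, mul_assoc] at h
      rw [e] at hle ⊢
      simp only [List.length_cons] at h
      rcases cs.length_simple_mul (a * c) (d i) with h4 | h4
      · exact ⟨by omega, h4⟩
      · omega
    rcases deodhar cs ha (d i) with h | ⟨j, hj, h⟩
    · refine ⟨cs.simple (d i) * a, c, h, hc, e1, fun hh => ?_⟩
      obtain ⟨r1, r2⟩ := red hh
      rw [← mul_assoc, length_add cs h hc, length_add cs ha hc] at r2
      have := (hl r1).1
      exact ⟨by omega, fun _ => by omega⟩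
    · refine ⟨a, cs.simple j * c, ha, mul_mem (simple_mem cs hj) hc, by
        rw [e1, h, mul_assoc], fun hh => ?_⟩
      obtain ⟨r1, r2⟩ := red hh
      refine ⟨(hl r1).1, fun hla => ?_⟩
      obtain ⟨rfl, ω', h1, h2, h3⟩ := (hl r1).2 hla
      refine ⟨rfl, j :: ω', by rw [cs.wordProd_cons, h1], by simp [h2], ?_⟩
      intro k hk
      rcases List.mem_cons.1 hk with rfl | hk
      · exact ⟨j, by simp, h⟩
      · obtain ⟨l, hl, e⟩ := h3 k hk
        exact ⟨l, by simp [hl], e⟩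

lemma fwd (hd : LetterMap cs J J' δ d) {a : W} {K : Set B} (h : WSpecial cs J J' δ a K) :
    ∀ i ∈ K, ∃ j ∈ K, cs.simple (d i) * a = a * cs.simple j := by
  obtain ⟨hK, h⟩ := h
  choose f hJ hf1 hf2 using h
  let F : K → K := fun i => ⟨f i i.2, hf1 i i.2⟩
  have hinj : Function.Injective F := by
    intro i j hij
    have e : f i i.2 = f j j.2 := congrArg Subtype.val hij
    have h1 := hf2 i i.2
    have h2 := hf2 j j.2
    rw [(hd _ _).2] at h1 h2
    rw [e, ← h2] at h1
    exact Subtype.ext (simple_inj cs (mul_left_cancel (mul_right_cancel h1)))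
  have hsurj := Finite.injective_iff_surjective.1 hinj
  intro k hk
  obtain ⟨i, hi⟩ := hsurj ⟨k, hk⟩
  have e : f i i.2 = k := congrArg Subtype.val hi
  refine ⟨i, i.2, ?_⟩
  have h1 := hf2 i i.2
  rw [(hd _ _).2, e] at h1
  rw [← h1]; simp

lemma minRep_of_no_desc {K : Set B} {u : W}
    (h : ∀ i ∈ K, ¬ cs.length (u * cs.simple i) < cs.length u) : IsMinRep cs K u := by
  rw [minRep_iff]
  intro i hi
  rw [pos_iff]
  have := h i hi
  rcases cs.length_mul_simple u i with h4 | h4 <;> omega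

lemma part2_aux (hd : LetterMap cs J J' δ d) {a a' x x' : W} (ha : IsMinRep cs J a)
    (ha' : IsMinRep cs J a') (hx : x ∈ parab cs J) (hx' : x' ∈ parab cs J) (u : parab cs J)
    (e : (δ u : W) * a * x = a' * x' * u)
    (hl : cs.length (a' * x' * u) = cs.length (u : W) + cs.length a + cs.length x) :
    cs.length a ≤ cs.length a' ∧ (cs.length a' = cs.length a → a' = a ∧
      ∃ ω ω' : List B, (∀ i ∈ ω, i ∈ J) ∧ cs.wordProd ω = u ∧ cs.wordProd ω' = x' * u * x⁻¹ ∧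
        cs.length (cs.wordProd ω') = ω'.length ∧
        ∀ i ∈ ω, ∃ j ∈ ω', cs.simple (d i) * a = a * cs.simple j) := by
  obtain ⟨ω, h1, h2, h3⟩ := exists_word cs _ (u : W) u.2 rfl
  have e0 : u = ⟨cs.wordProd ω, wordProd_mem cs ω h1⟩ := by ext; exact h3.symm
  have hw : (δ u : W) = cs.wordProd (ω.map d) := by
    rw [e0]; exact delta_word cs hd ω h1 _
  obtain ⟨b, c, hb, hc, e1, h⟩ := push cs d ha ω h1
  rw [hw, e1, mul_assoc, mul_assoc] at e
  obtain ⟨rfl, e2⟩ := decomp_unique cs hb ha' (mul_mem hc hx) (mul_mem hx' u.2) e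
  have hlen : cs.length (cs.wordProd (ω.map d) * a) = ω.length + cs.length a := by
    apply le_antisymm
    · refine (cs.length_mul_le _ _).trans ?_
      have := cs.length_wordProd_le (ω.map d)
      simp at this; omega
    · have h5 := cs.length_mul_le (cs.wordProd (ω.map d) * a) x
      rw [e1, mul_assoc, e, ← mul_assoc, hl] at h5
      rw [e1]; omega
  obtain ⟨g1, g2⟩ := h hlen
  refine ⟨g1, fun heq => ?_⟩
  obtain ⟨rfl, ω', k1, k2, k3⟩ := g2 heq
  refine ⟨rfl, ω, ω', h1, h3, ?_, ?_, k3⟩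
  · rw [k1, ← e2]; simp
  · rw [e1, length_add cs hb hc] at hlen
    rw [k1]; omega

lemma part2 (hd : LetterMap cs J J' δ d) {a a' : W} (ha : IsMinRep cs J a)
    (ha' : IsMinRep cs J a') (n : ℕ) : ∀ (u : parab cs J) (x x' : W), cs.length (u : W) = n →
    x ∈ parab cs (Iset cs J J' δ a) → x' ∈ parab cs (Iset cs J J' δ a') →
    (δ u : W) * a * x = a' * x' * u →
    a' = a ∧ ∃ r : parab cs J, (r : W) ∈ parab cs (Iset cs J J' δ a) ∧
      (δ r : W) * a * x = a * x' * r := by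
  induction n using Nat.strong_induction_on with
  | _ n ih =>
  intro u x x' hn hx hx' e
  have sp := Iset_special (δ := δ) cs a
  have sp' := Iset_special (δ := δ) cs a'
  have hxJ := parab_mono cs sp.1 hx
  have hxJ' := parab_mono cs sp'.1 hx'
  by_cases hA : ∃ i ∈ Iset cs J J' δ a', cs.length ((u : W)⁻¹ * cs.simple i) < cs.length (u : W)⁻¹
  · obtain ⟨i, hi, hlt⟩ := hA
    obtain ⟨j, hj, ej⟩ := fwd cs hd sp' i hi
    have hiJ := sp'.1 hi
    have hs := (hd i hiJ).2
    obtain ⟨rfl, r, hr, er⟩ := ih (cs.length ((sJ cs J i hiJ * u : parab cs J) : W)) (by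
      have : ((sJ cs J i hiJ * u : parab cs J) : W) = ((u : W)⁻¹ * cs.simple i)⁻¹ := by
        simp [sJ]
      rw [this, cs.length_inv]; rw [cs.length_inv u] at hlt; omega)
      (sJ cs J i hiJ * u) x (cs.simple j * x' * cs.simple i) rfl hx
      (mul_mem (mul_mem (simple_mem cs hj) hx') (simple_mem cs hi)) (by
        rw [map_mul, Subgroup.coe_mul, hs, mul_assoc, mul_assoc, ← mul_assoc (δ u : W), e]
        have : ((sJ cs J i hiJ * u : parab cs J) : W) = cs.simple i * u := rfl
        rw [this]
        simp only [mul_assoc, cs.simple_mul_simple_cancel_left]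
        rw [← mul_assoc, ej, mul_assoc])
    refine ⟨rfl, sJ cs J i hiJ * r, mul_mem (simple_mem cs hi) hr, ?_⟩
    rw [map_mul, Subgroup.coe_mul, hs, mul_assoc, mul_assoc, ← mul_assoc (δ r : W), er]
    have : ((sJ cs J i hiJ * r : parab cs J) : W) = cs.simple i * r := rfl
    rw [this]
    simp only [← mul_assoc]
    rw [mul_assoc _ a' (cs.simple j), ← ej]
    simp [mul_assoc]
  by_cases hB : ∃ i ∈ Iset cs J J' δ a, cs.length ((u : W) * cs.simple i) < cs.length (u : W)
  · obtain ⟨i, hi, hlt⟩ := hB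
    obtain ⟨j, hj, ej⟩ := fwd cs hd sp i hi
    have hiJ := sp.1 hi
    have hs := (hd i hiJ).2
    have hc : ∀ y : parab cs J, ((y * sJ cs J i hiJ : parab cs J) : W) = y * cs.simple i :=
      fun y => rfl
    obtain ⟨rfl, r, hr, er⟩ := ih (cs.length ((u * sJ cs J i hiJ : parab cs J) : W)) (by
      rw [hc]; omega)
      (u * sJ cs J i hiJ) (cs.simple j * x * cs.simple i) x' rfl
      (mul_mem (mul_mem (simple_mem cs hj) hx) (simple_mem cs hi)) hx' (by
        rw [map_mul, Subgroup.coe_mul, hs, hc, ← mul_assoc (a' * x'), ← e]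
        simp only [← mul_assoc]
        rw [mul_assoc _ a (cs.simple j), ← ej]
        simp [mul_assoc])
    refine ⟨rfl, r * sJ cs J i hiJ, mul_mem hr (simple_mem cs hi), ?_⟩
    rw [map_mul, Subgroup.coe_mul, hs, hc, ← mul_assoc (a' * x'), ← er]
    simp only [mul_assoc, cs.simple_mul_simple_self, mul_one]
    rw [← mul_assoc (cs.simple (d i)), ej, mul_assoc]
  push Not at hA hB
  have mA : IsMinRep cs (Iset cs J J' δ a') (u : W)⁻¹ :=
    minRep_of_no_desc cs fun i hi => not_lt.2 (hA i hi)
  have mB : IsMinRep cs (Iset cs J J' δ a) (u : W) :=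
    minRep_of_no_desc cs fun i hi => not_lt.2 (hB i hi)
  have e' : (δ u⁻¹ : W) * a' * x' = a * x * (u⁻¹ : parab cs J) := by
    have : (δ u : W) * (a * x) = a' * x' * u := by rw [← mul_assoc]; exact e
    rw [map_inv, Subgroup.coe_inv, Subgroup.coe_inv, mul_assoc, inv_mul_eq_iff_eq_mul,
      ← mul_assoc (δ u : W), this, mul_inv_cancel_right]
  have l1 : cs.length (a' * x' * u) = cs.length a' + cs.length x' + cs.length (u : W) := by
    rw [mul_assoc, length_add cs ha' (mul_mem hxJ' u.2)]
    have := length_add cs mA (inv_mem hx')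
    rw [← mul_inv_rev, cs.length_inv, cs.length_inv, cs.length_inv] at this
    omega
  have l2 : cs.length (a * x * (u⁻¹ : parab cs J)) =
      cs.length a + cs.length x + cs.length (u : W) := by
    rw [mul_assoc, length_add cs ha (mul_mem hxJ (u⁻¹).2), Subgroup.coe_inv]
    have := length_add cs mB (inv_mem hx)
    rw [← cs.length_inv (x * (u : W)⁻¹), mul_inv_rev, inv_inv]
    rw [cs.length_inv] at this
    omega
  have l3 : cs.length (a' * x' * u) ≤ cs.length (u : W) + cs.length a + cs.length x := by
    rw [← e]
    have h1 := cs.length_mul_le ((δ u : W) * a) x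
    have h2 := cs.length_mul_le (δ u : W) a
    have h3 := delta_length cs hd u
    omega
  have l4 : cs.length (a * x * (u⁻¹ : parab cs J)) ≤
      cs.length (u : W) + cs.length a' + cs.length x' := by
    rw [← e']
    have h1 := cs.length_mul_le ((δ u⁻¹ : W) * a') x'
    have h2 := cs.length_mul_le (δ u⁻¹ : W) a'
    have h3 := delta_length cs hd u⁻¹
    rw [Subgroup.coe_inv, cs.length_inv] at h3
    omega
  obtain ⟨m1, m2⟩ := part2_aux cs hd ha ha' hxJ hxJ' u e (by omega)
  obtain ⟨m3, -⟩ := part2_aux cs hd ha' ha hxJ' hxJ u⁻¹ e' (by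
    rw [Subgroup.coe_inv, cs.length_inv]
    rw [Subgroup.coe_inv] at l2 l4
    omega)
  obtain ⟨rfl, ω, ω', q1, q2, q3, q4, q5⟩ := m2 (le_antisymm m3 m1)
  refine ⟨rfl, u, ?_, e⟩
  let K : Set B := Iset cs J J' δ a' ∪ {i | i ∈ ω}
  have hIK : Iset cs J J' δ a' ⊆ K := Set.subset_union_left
  have huK : (u : W) ∈ parab cs K := by
    rw [← q2]; exact wordProd_mem cs ω fun i hi => Or.inr hi
  have hK : WSpecial cs J J' δ a' K := by
    apply special_of_closed cs hd
    · rintro i (hi | hi)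
      · exact sp.1 hi
      · exact q1 i hi
    · rintro i (hi | hi)
      · obtain ⟨j, hj, ej⟩ := fwd cs hd sp i hi
        exact ⟨j, hIK hj, ej⟩
      · obtain ⟨j, hj, ej⟩ := q5 i hi
        refine ⟨j, letters_mem cs ω' q4 ?_ j hj, ej⟩
        rw [q3]
        exact mul_mem (mul_mem (parab_mono cs hIK hx') huK) (inv_mem (parab_mono cs hIK hx))
  exact parab_mono cs (special_le cs hK) huK

end He

section RootsI
variable {B : Type*} [Fintype B] [DecidableEq B] {W : Type*} [Group W] {M : CoxeterMatrix B}
  (cs : CoxeterSystem M W)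

/-- Roots of a parabolic subgroup. -/
def Rt (I : Set B) : Set (B → ℝ) := {v | ∃ u ∈ parab cs I, ∃ i ∈ I, v = rep cs u (al i)}

variable {I : Set B}

lemma rt_al {i : B} (hi : i ∈ I) : (al i : B → ℝ) ∈ Rt cs I :=
  ⟨1, one_mem _, i, hi, (rep_one cs _).symm⟩

lemma rt_rep {u : W} (hu : u ∈ parab cs I) {v : B → ℝ} (hv : v ∈ Rt cs I) :
    rep cs u v ∈ Rt cs I := by
  obtain ⟨u', hu', i, hi, rfl⟩ := hv
  exact ⟨u * u', mul_mem hu hu', i, hi, by rw [rep_mul]⟩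

lemma rt_neg {v : B → ℝ} (hv : v ∈ Rt cs I) : -v ∈ Rt cs I := by
  obtain ⟨u', hu', i, hi, rfl⟩ := hv
  refine ⟨u' * cs.simple i, mul_mem hu' (simple_mem cs hi), i, hi, ?_⟩
  rw [rep_mul, rep_simple, rf_al, map_neg]

lemma rt_dich {v : B → ℝ} (hv : v ∈ Rt cs I) : Pos v ∨ Pos (-v) := by
  obtain ⟨u', hu', i, hi, rfl⟩ := hv
  exact root_dich cs _ _

lemma rt_ne {v : B → ℝ} (hv : v ∈ Rt cs I) : v ≠ 0 := by
  obtain ⟨u', hu', i, hi, rfl⟩ := hv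
  exact root_ne_zero cs _ _

lemma rt_bil {v : B → ℝ} (hv : v ∈ Rt cs I) : bil M v v = 1 := by
  obtain ⟨u', hu', i, hi, rfl⟩ := hv
  exact bil_root cs _ _

lemma rt_supp {v : B → ℝ} (hv : v ∈ Rt cs I) : ∀ k, k ∉ I → v k = 0 := by
  obtain ⟨u', hu', i, hi, rfl⟩ := hv
  exact parab_supp cs hu' hi

lemma rt_finite (hf : (parab cs I : Set W).Finite) : (Rt cs I).Finite := by
  have : Rt cs I ⊆ (fun p : W × B => rep cs p.1 (al p.2)) '' ((parab cs I : Set W) ×ˢ Set.univ) := by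
    rintro v ⟨u, hu, i, hi, rfl⟩
    exact ⟨(u, i), ⟨hu, trivial⟩, rfl⟩
  exact ((hf.prod Set.finite_univ).image _).subset this

open Classical in
/-- Sign of a root. -/
noncomputable def ep (v : B → ℝ) : ℝ := if Pos v then 1 else -1

lemma ep_pos {v : B → ℝ} (h : Pos v) : ep v = 1 := if_pos h

lemma ep_neg {v : B → ℝ} (hv : v ∈ Rt cs I) : ep (-v) = - ep v := by
  rcases rt_dich cs hv with h | h
  · have : ¬ Pos (-v) := fun h' => not_pos_both (rt_ne cs hv) h h'
    simp [ep, h, this]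
  · have : ¬ Pos v := fun h' => not_pos_both (rt_ne cs hv) h' h
    simp [ep, h, this]

lemma ep_sq (v : B → ℝ) : ep v = 1 ∨ ep v = -1 := by
  unfold ep; split_ifs <;> simp

lemma ep_simple {i : B} (hi : i ∈ I) {v : B → ℝ} (hv : v ∈ Rt cs I) (h1 : v ≠ al i)
    (h2 : v ≠ - al i) : ep (rep cs (cs.simple i) v) = ep v := by
  have key : ∀ v ∈ Rt cs I, Pos v → v ≠ al i → ep (rep cs (cs.simple i) v) = ep v := by
    rintro v ⟨u, hu, j, hj, rfl⟩ hp hne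
    rw [ep_pos hp, ep_pos (simple_pos cs u i j hp hne)]
  rcases rt_dich cs hv with h | h
  · exact key v hv h h1
  · have := key (-v) (rt_neg cs hv) h (fun e => h2 (by rw [← e, neg_neg]))
    rw [map_neg, ep_neg cs hv, ep_neg cs (rt_rep cs (simple_mem cs hi) hv)] at this
    linarith

variable [Fintype (Rt cs I)]

/-- Permutation of roots. -/
noncomputable def rperm {u : W} (hu : u ∈ parab cs I) : Rt cs I ≃ Rt cs I where
  toFun v := ⟨rep cs u v, rt_rep cs hu v.2⟩
  invFun v := ⟨rep cs u⁻¹ v, rt_rep cs (inv_mem hu) v.2⟩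
  left_inv v := by ext1; exact rep_inv_rep cs u _
  right_inv v := by ext1; exact rep_rep_inv cs u _

lemma sum_flip {E : Type*} [AddCommGroup E] [Module ℝ E] {i : B} (hi : i ∈ I)
    (h : (B → ℝ) → E) :
    ∑ v : Rt cs I, (ep (v : B → ℝ) - ep (rep cs (cs.simple i) v)) • h v =
      (2 : ℝ) • h (al i) - (2 : ℝ) • h (- al i) := by
  classical
  have hne : (⟨al i, rt_al cs hi⟩ : Rt cs I) ≠ ⟨- al i, rt_neg cs (rt_al cs hi)⟩ := by
    intro e
    have := congrFun (congrArg Subtype.val e) i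
    simp at this; linarith
  rw [← Finset.sum_subset (Finset.subset_univ
    ({⟨al i, rt_al cs hi⟩, ⟨- al i, rt_neg cs (rt_al cs hi)⟩} : Finset (Rt cs I)))]
  · rw [Finset.sum_pair hne]
    simp only
    rw [map_neg, rep_simple, rf_al, neg_neg, ep_neg cs (rt_al cs hi), ep_pos (pos_al i)]
    module
  · intro v _ hv
    simp only [Finset.mem_insert, Finset.mem_singleton, not_or] at hv
    rw [ep_simple cs hi v.2 (fun e => hv.1 (Subtype.ext e)) (fun e => hv.2 (Subtype.ext e))]
    simp

/-- Counting lemma: signs versus length. -/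
lemma count_len (n : ℕ) : ∀ y ∈ parab cs I, cs.length y = n →
    ∑ v : Rt cs I, ep (v : B → ℝ) * ep (rep cs y v) = Fintype.card (Rt cs I) - 4 * n := by
  induction n with
  | zero =>
    intro y _ h
    rw [cs.length_eq_zero_iff] at h
    subst h
    have : ∀ v : Rt cs I, ep (v : B → ℝ) * ep (rep cs 1 v) = 1 := by
      intro v
      rw [rep_one]
      rcases ep_sq (v : B → ℝ) with h | h <;> rw [h] <;> norm_num
    rw [Finset.sum_congr rfl fun v _ => this v, Finset.sum_const, Finset.card_univ]; simp
  | succ n ih =>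
    intro y hy hl
    have hne : y ≠ 1 := by rintro rfl; simp at hl
    obtain ⟨i, hi, y', hy', rfl, hl'⟩ := parab_peel cs hy hne
    have h1 := ih y' hy' (by omega)
    have h2 := sum_flip cs hi (fun v => ep (rep cs y' v))
    have h3 : ∑ v : Rt cs I, ep (v : B → ℝ) * ep (rep cs (y' * cs.simple i) v) =
        ∑ v : Rt cs I, ep (rep cs (cs.simple i) v) * ep (rep cs y' v) := by
      rw [← Equiv.sum_comp (rperm cs (simple_mem cs hi))]
      refine Finset.sum_congr rfl fun v _ => ?_
      simp only [rperm, Equiv.coe_fn_mk]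
      rw [rep_mul, ← rep_mul cs (cs.simple i) (cs.simple i), cs.simple_mul_simple_self, rep_one]
    simp only [smul_eq_mul, sub_mul, Finset.sum_sub_distrib] at h2
    rw [h3]
    have hp : Pos (rep cs y' (al i)) := (pos_iff cs y' i).2 (by omega)
    rw [h1, map_neg, ep_neg cs (rt_rep cs hy' (rt_al cs hi)), ep_pos hp] at h2
    push_cast
    linarith

/-- Signed sum of roots. -/
noncomputable def rho (cs : CoxeterSystem M W) (I : Set B) [Fintype (Rt cs I)] : B → ℝ :=
  ∑ v : Rt cs I, ep (v : B → ℝ) • (v : B → ℝ)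

lemma rep_rho {i : B} (hi : i ∈ I) :
    rep cs (cs.simple i) (rho cs I) = rho cs I - (4 : ℝ) • al i := by
  have h2 := sum_flip cs hi (fun v => v)
  have h3 : rep cs (cs.simple i) (rho cs I) =
      ∑ v : Rt cs I, ep (rep cs (cs.simple i) v) • (v : B → ℝ) := by
    unfold rho
    rw [map_sum, ← Equiv.sum_comp (rperm cs (simple_mem cs hi))]
    refine Finset.sum_congr rfl fun v _ => ?_
    simp only [rperm, Equiv.coe_fn_mk]
    rw [map_smul, ← rep_mul cs (cs.simple i) (cs.simple i), cs.simple_mul_simple_self, rep_one]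
  simp only [sub_smul, Finset.sum_sub_distrib] at h2
  rw [h3]
  have : rho cs I = ∑ v : Rt cs I, ep (v : B → ℝ) • (v : B → ℝ) := rfl
  rw [← this] at h2
  rw [eq_sub_iff_add_eq, ← eq_sub_iff_add_eq', h2]
  module

lemma bil_rho {i : B} (hi : i ∈ I) : bil M (al i) (rho cs I) = 2 := by
  have h := rep_rho cs hi
  rw [rep_simple_apply] at h
  have := congrFun h i
  simp at this
  linarith

lemma vec_sum {v : B → ℝ} : v = ∑ k, v k • (al k : B → ℝ) := by
  funext b; simp [Finset.sum_apply, Pi.single_apply]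

lemma bil_rho_pos {v : B → ℝ} (hv : v ∈ Rt cs I) (hp : Pos v) : 0 < bil M v (rho cs I) := by
  have e : bil M v (rho cs I) = ∑ k, v k * 2 := by
    conv_lhs => rw [vec_sum (v := v)]
    rw [map_sum, LinearMap.sum_apply]
    refine Finset.sum_congr rfl fun k _ => ?_
    rw [map_smul, LinearMap.smul_apply, smul_eq_mul]
    by_cases hk : k ∈ I
    · rw [bil_rho cs hk]
    · rw [rt_supp cs hv k hk]; simp
  rw [e]
  have hne := rt_ne cs hv
  obtain ⟨k, hk⟩ : ∃ k, v k ≠ 0 := by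
    by_contra h; push Not at h; exact hne (funext h)
  apply Finset.sum_pos'
  · intro j _; have := hp j; positivity
  · exact ⟨k, Finset.mem_univ k, by have := lt_of_le_of_ne (hp k) (Ne.symm hk); positivity⟩

/-- Nondegeneracy. -/
lemma nondeg (hf : (parab cs I : Set W).Finite) {v : B → ℝ} (hs : ∀ k, k ∉ I → v k = 0)
    (h : ∀ k ∈ I, bil M (al k) v = 0) : v = 0 := by
  classical
  have : Finite (parab cs I) := hf
  let _ := Fintype.ofFinite (parab cs I)
  have fix : ∀ u ∈ parab cs I, rep cs u v = v := by
    intro u hu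
    induction hu using Subgroup.closure_induction with
    | mem x hx =>
      obtain ⟨i, hi, rfl⟩ := hx
      rw [rep_simple_apply, h i hi]; simp
    | one => exact rep_one cs v
    | mul x y _ _ hx hy => rw [rep_mul, hy, hx]
    | inv x _ hx => conv_lhs => rw [← hx]
                    exact rep_inv_rep cs x v
  have zero : ∀ i ∈ I, ∑ u : parab cs I, rep cs (u : W) (al i) = 0 := by
    intro i hi
    have e : ∑ u : parab cs I, rep cs (u : W) (al i) = - ∑ u : parab cs I, rep cs (u : W) (al i) := by
      conv_lhs => rw [← Equiv.sum_comp (Equiv.mulRight (⟨cs.simple i, simple_mem cs hi⟩ : parab cs I))]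
      rw [← Finset.sum_neg_distrib]
      refine Finset.sum_congr rfl fun u _ => ?_
      simp only [Equiv.coe_mulRight, Subgroup.coe_mul]
      rw [rep_mul, rep_simple, rf_al, map_neg]
    exact self_eq_neg.1 e
  have h1 : ∑ u : parab cs I, rep cs (u : W) v = 0 := by
    have : ∀ u : parab cs I, rep cs (u : W) v = ∑ k, v k • rep cs (u : W) (al k) := by
      intro u
      conv_lhs => rw [vec_sum (v := v)]
      rw [map_sum]; simp only [map_smul]
    simp only [this]
    rw [Finset.sum_comm]
    refine Finset.sum_eq_zero fun k _ => ?_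
    rw [← Finset.smul_sum]
    by_cases hk : k ∈ I
    · rw [zero k hk, smul_zero]
    · rw [hs k hk, zero_smul]
  have h2 : ∑ u : parab cs I, rep cs (u : W) v = (Fintype.card (parab cs I) : ℝ) • v := by
    rw [Finset.sum_congr rfl fun (u : parab cs I) _ => fix (u : W) u.2, Finset.sum_const, Finset.card_univ]
    simp [← Nat.cast_smul_eq_nsmul ℝ]
  rw [h2] at h1
  refine (smul_eq_zero.1 h1).resolve_left ?_
  exact_mod_cast Fintype.card_ne_zero

end RootsI

section GKP
variable {B : Type*} [Fintype B] [DecidableEq B] {W : Type*} [Group W] {M : CoxeterMatrix B}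
  (cs : CoxeterSystem M W) {I : Set B}

/-- Linear map induced by a map of letters. -/
noncomputable def Sg (τ : B → B) : (B → ℝ) →ₗ[ℝ] (B → ℝ) :=
  Fintype.linearCombination ℝ (fun i => (al (τ i) : B → ℝ))

lemma Sg_apply (τ : B → B) (v : B → ℝ) : Sg τ v = ∑ k, v k • (al (τ k) : B → ℝ) := by
  simp [Sg, Fintype.linearCombination_apply]

lemma Sg_al (τ : B → B) (i : B) : Sg τ (al i) = al (τ i) := by
  rw [Sg_apply]
  rw [Finset.sum_eq_single i]
  · simp
  · intro b _ hb; simp [hb]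
  · simp

lemma Sg_pos (τ : B → B) {v : B → ℝ} (h : Pos v) : Pos (Sg τ v) := by
  intro b
  rw [Sg_apply, Finset.sum_apply]
  refine Finset.sum_nonneg fun k _ => ?_
  have h1 := h k
  have h2 := pos_al (τ k) b
  exact mul_nonneg h1 h2

variable {τ : B → B}

lemma bil_Sg_al (hM : ∀ i ∈ I, ∀ j ∈ I, M (τ i) (τ j) = M i j) {i : B} (hi : i ∈ I)
    {v : B → ℝ} (hv : ∀ k, k ∉ I → v k = 0) : bil M (al (τ i)) (Sg τ v) = bil M (al i) v := by
  conv_rhs => rw [vec_sum (v := v)]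
  rw [Sg_apply, map_sum, map_sum]
  refine Finset.sum_congr rfl fun k _ => ?_
  rw [map_smul, map_smul]
  by_cases hk : k ∈ I
  · rw [bil_al, bil_al, kk, kk, hM i hi k hk]
  · rw [hv k hk]; simp

lemma bil_Sg (hM : ∀ i ∈ I, ∀ j ∈ I, M (τ i) (τ j) = M i j) {u v : B → ℝ}
    (hu : ∀ k, k ∉ I → u k = 0) (hv : ∀ k, k ∉ I → v k = 0) :
    bil M (Sg τ u) (Sg τ v) = bil M u v := by
  conv_rhs => rw [vec_sum (v := u)]
  rw [Sg_apply τ u, map_sum, map_sum, LinearMap.sum_apply, LinearMap.sum_apply]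
  refine Finset.sum_congr rfl fun k _ => ?_
  rw [map_smul, map_smul, LinearMap.smul_apply, LinearMap.smul_apply]
  by_cases hk : k ∈ I
  · rw [bil_Sg_al hM hk hv]
  · rw [hu k hk]; simp

/-- Hypotheses on the twist. -/
structure Tw (cs : CoxeterSystem M W) (I : Set B) (τ : B → B) (σ : W → W) : Prop where
  map : ∀ i ∈ I, τ i ∈ I
  cox : ∀ i ∈ I, ∀ j ∈ I, M (τ i) (τ j) = M i j
  one : σ 1 = 1
  smul : ∀ i ∈ I, ∀ u ∈ parab cs I, σ (cs.simple i * u) = cs.simple (τ i) * σ u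

variable {σ : W → W}

lemma parab_ind {P : W → Prop} (h1 : P 1)
    (hs : ∀ i ∈ I, ∀ u ∈ parab cs I, P u → P (cs.simple i * u)) :
    ∀ u ∈ parab cs I, P u := by
  intro u hu
  obtain ⟨ω, h, hlen, rfl⟩ := exists_word cs _ u hu rfl
  clear hu hlen
  induction ω with
  | nil => simpa using h1
  | cons i ω ih =>
    rw [cs.wordProd_cons]
    have hω : ∀ j ∈ ω, j ∈ I := fun j hj => h j (List.mem_cons_of_mem _ hj)
    refine hs i (h i List.mem_cons_self) _ (wordProd_mem cs ω hω) (ih hω)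

lemma tw_mem (T : Tw cs I τ σ) : ∀ u ∈ parab cs I, σ u ∈ parab cs I := by
  apply parab_ind
  · rw [T.one]; exact one_mem _
  · intro i hi u hu h
    rw [T.smul i hi u hu]
    exact mul_mem (simple_mem cs (T.map i hi)) h

lemma tw_rep (T : Tw cs I τ σ) {v : B → ℝ} (hv : ∀ k, k ∉ I → v k = 0) : ∀ u ∈ parab cs I,
    Sg τ (rep cs u v) = rep cs (σ u) (Sg τ v) := by
  apply parab_ind
  · rw [T.one, rep_one, rep_one]
  · intro i hi u hu h
    have hs : ∀ k, k ∉ I → rep cs u v k = 0 := by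
      intro k hk; rw [rep_parab_off cs hu v hk, hv k hk]
    rw [T.smul i hi u hu, rep_mul, rep_mul, ← h, rep_simple_apply, rep_simple_apply, map_sub,
      map_smul, Sg_al, bil_Sg_al T.cox hi hs]

lemma tw_rt (T : Tw cs I τ σ) {v : B → ℝ} (hv : v ∈ Rt cs I) : Sg τ v ∈ Rt cs I := by
  obtain ⟨u, hu, i, hi, rfl⟩ := hv
  rw [tw_rep cs T (fun k hk => by simp [show k ≠ i from fun e => hk (e ▸ hi)]) u hu, Sg_al]
  exact ⟨_, tw_mem cs T u hu, _, T.map i hi, rfl⟩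

lemma tw_ep (T : Tw cs I τ σ) {v : B → ℝ} (hv : v ∈ Rt cs I) : ep (Sg τ v) = ep v := by
  rcases rt_dich cs hv with h | h
  · rw [ep_pos h, ep_pos (Sg_pos τ h)]
  · have h1 := ep_pos (Sg_pos τ h)
    have h2 := ep_pos h
    rw [map_neg, ep_neg cs (tw_rt cs T hv)] at h1
    rw [ep_neg cs hv] at h2
    linarith

lemma eq_of_bil (hf : (parab cs I : Set W).Finite) [Fintype (Rt cs I)] {u v : B → ℝ}
    (hu : u ∈ Rt cs I) (hv : v ∈ Rt cs I)
    (h : ∀ b ∈ Rt cs I, bil M u b = bil M v b) : u = v := by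
  rw [← sub_eq_zero]
  apply nondeg cs hf (I := I)
  · intro k hk; rw [Pi.sub_apply, rt_supp cs hu k hk, rt_supp cs hv k hk, sub_zero]
  · intro k hk
    rw [map_sub, bil_symm, bil_symm M (al k) v, h _ (rt_al cs hk), sub_self]

/-- The permutation of roots induced by the twist. -/
lemma exists_sperm (hf : (parab cs I : Set W).Finite) [Fintype (Rt cs I)] (T : Tw cs I τ σ) :
    ∃ e : Rt cs I ≃ Rt cs I, ∀ v, (e v : B → ℝ) = Sg τ v := by
  let F : Rt cs I → Rt cs I := fun v => ⟨Sg τ v, tw_rt cs T v.2⟩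
  have hF : Function.Injective F := by
    intro u v huv
    have huv' : Sg τ (u : B → ℝ) = Sg τ (v : B → ℝ) := congrArg Subtype.val huv
    ext1
    apply eq_of_bil cs hf u.2 v.2
    intro b hb
    rw [← bil_Sg T.cox (rt_supp cs u.2) (rt_supp cs hb), huv',
      bil_Sg T.cox (rt_supp cs v.2) (rt_supp cs hb)]
  exact ⟨Equiv.ofBijective F (Finite.injective_iff_bijective.1 hF), fun v => rfl⟩

section arr
variable [Fintype (Rt cs I)]

/-- Embedding of the root space in a Euclidean space. -/
noncomputable def io (cs : CoxeterSystem M W) (I : Set B) [Fintype (Rt cs I)] :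
    (B → ℝ) →ₗ[ℝ] EuclideanSpace ℝ (Rt cs I) where
  toFun v := WithLp.toLp 2 (fun b => bil M v b)
  map_add' u v := by ext b; simp
  map_smul' c v := by ext b; simp

lemma io_apply (v : B → ℝ) (b : Rt cs I) : io cs I v b = bil M v b := rfl

lemma io_inj (hf : (parab cs I : Set W).Finite) {u v : B → ℝ} (hu : u ∈ Rt cs I)
    (hv : v ∈ Rt cs I) (h : io cs I u = io cs I v) : u = v := by
  apply eq_of_bil cs hf hu hv
  intro b hb
  have := congrArg (fun f : EuclideanSpace ℝ (Rt cs I) => f ⟨b, hb⟩) h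
  exact this

lemma inner_io (f : EuclideanSpace ℝ (Rt cs I)) (v : B → ℝ) :
    inner ℝ f (io cs I v) = ∑ b : Rt cs I, f b * bil M v b := by
  rw [PiLp.inner_apply]
  refine Finset.sum_congr rfl fun b _ => ?_
  rw [io_apply]; simp [mul_comm]

open Classical in
/-- The arrangement. -/
noncomputable def Ph (cs : CoxeterSystem M W) (I : Set B) [Fintype (Rt cs I)] :
    Finset (EuclideanSpace ℝ (Rt cs I)) :=
  Finset.univ.image (fun b : Rt cs I => io cs I b)

lemma mem_Ph {a : EuclideanSpace ℝ (Rt cs I)} : a ∈ Ph cs I ↔ ∃ b ∈ Rt cs I, io cs I b = a := by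
  simp [Ph]

/-- Correspondence of generic points and group elements. -/
def Corr (cs : CoxeterSystem M W) (I : Set B) [Fintype (Rt cs I)]
    (f : EuclideanSpace ℝ (Rt cs I)) (u : W) : Prop :=
  u ∈ parab cs I ∧ ∀ b ∈ Rt cs I, sg f (io cs I b) = ep (rep cs u b)

lemma inner_rep (f : EuclideanSpace ℝ (Rt cs I)) {u : W} (hu : u ∈ parab cs I)
    (h : ∀ i ∈ I, 0 ≤ inner ℝ f (io cs I (rep cs u⁻¹ (al i)))) {b : B → ℝ} (hb : b ∈ Rt cs I)
    (hp : Pos (rep cs u b)) : 0 ≤ inner ℝ f (io cs I b) := by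
  have e : b = ∑ k, (rep cs u b k) • rep cs u⁻¹ (al k) := by
    conv_lhs => rw [← rep_inv_rep cs u b, vec_sum (v := rep cs u b)]
    rw [map_sum]; simp only [map_smul]
  rw [e, map_sum, inner_sum]
  refine Finset.sum_nonneg fun k _ => ?_
  rw [map_smul, inner_smul_right]
  by_cases hk : k ∈ I
  · exact mul_nonneg (hp k) (h k hk)
  · rw [rt_supp cs (rt_rep cs hu hb) k hk, zero_mul]

lemma exists_corr (hf : (parab cs I : Set W).Finite) {f : EuclideanSpace ℝ (Rt cs I)}
    (hg : Gen (Ph cs I) f) : ∃ u, Corr cs I f u := by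
  obtain ⟨u, hu, hmax⟩ := Set.exists_max_image (parab cs I : Set W)
    (fun u => inner ℝ f (io cs I (rep cs u⁻¹ (rho cs I)))) hf ⟨1, one_mem _⟩
  have hu' : u ∈ parab cs I := hu
  have h : ∀ i ∈ I, 0 ≤ inner ℝ f (io cs I (rep cs u⁻¹ (al i))) := by
    intro i hi
    have := hmax (cs.simple i * u) (mul_mem (simple_mem cs hi) hu')
    simp only [mul_inv_rev, cs.inv_simple] at this
    rw [rep_mul, rep_rho cs hi, map_sub, map_smul, map_sub, map_smul, inner_sub_right,
      inner_smul_right] at this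
    linarith
  have key : ∀ b ∈ Rt cs I, Pos (rep cs u b) → sg f (io cs I b) = 1 := by
    intro b hb hp
    have h1 := inner_rep cs f hu' h hb hp
    exact Real.sign_of_pos (lt_of_le_of_ne h1 (Ne.symm (hg _ ((mem_Ph cs).2 ⟨b, hb, rfl⟩))))
  refine ⟨u, hu', fun b hb => ?_⟩
  have hb' := rt_rep cs hu' hb
  rcases rt_dich cs hb' with hp | hp
  · rw [ep_pos hp, key b hb hp]
  · have h1 := ep_pos hp
    rw [← map_neg] at hp
    have := key (-b) (rt_neg cs hb) hp
    rw [map_neg, sg_neg] at this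
    rw [ep_neg cs hb'] at h1
    linarith

lemma corr_exists {u : W} (hu : u ∈ parab cs I) : ∃ f, Gen (Ph cs I) f ∧ Corr cs I f u := by
  let f : EuclideanSpace ℝ (Rt cs I) := WithLp.toLp 2 (fun b => ep (rep cs u b))
  have hin : ∀ v, inner ℝ f (io cs I v) = bil M (rep cs u v) (rho cs I) := by
    intro v
    rw [inner_io, rho, map_sum]
    conv_rhs => rw [← Equiv.sum_comp (rperm cs hu)]
    refine Finset.sum_congr rfl fun b _ => ?_
    simp only [rperm, Equiv.coe_fn_mk, map_smul, bil_rep]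
    rfl
  have key : ∀ b ∈ Rt cs I, Pos (rep cs u b) → 0 < inner ℝ f (io cs I b) := by
    intro b hb hp
    rw [hin]; exact bil_rho_pos cs (rt_rep cs hu hb) hp
  have key2 : ∀ b ∈ Rt cs I, inner ℝ f (io cs I b) ≠ 0 ∧ sg f (io cs I b) = ep (rep cs u b) := by
    intro b hb
    have hb' := rt_rep cs hu hb
    rcases rt_dich cs hb' with hp | hp
    · have := key b hb hp
      exact ⟨this.ne', by rw [ep_pos hp]; exact Real.sign_of_pos this⟩
    · have h1 := ep_pos hp
      rw [← map_neg] at hp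
      have := key (-b) (rt_neg cs hb) hp
      rw [map_neg, inner_neg_right] at this
      rw [ep_neg cs hb'] at h1
      refine ⟨by linarith, ?_⟩
      have h2 : sg f (io cs I b) = -1 := Real.sign_of_neg (by linarith)
      rw [h2]; linarith
  refine ⟨f, ?_, hu, fun b hb => (key2 b hb).2⟩
  intro a ha
  obtain ⟨b, hb, rfl⟩ := (mem_Ph cs).1 ha
  exact (key2 b hb).1

lemma corr_adj (hf : (parab cs I : Set W).Finite) {f f' : EuclideanSpace ℝ (Rt cs I)} {u u' : W}
    (h : Corr cs I f u) (h' : Corr cs I f' u')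
    (ha : ∃ a, ∀ b ∈ Ph cs I, b ≠ a → b ≠ -a → sg f b = sg f' b) :
    u' = u ∨ ∃ i ∈ I, u' = cs.simple i * u := by
  classical
  obtain ⟨hu, h⟩ := h
  obtain ⟨hu', h'⟩ := h'
  obtain ⟨a, ha⟩ := ha
  set y := u' * u⁻¹ with hy
  have hym : y ∈ parab cs I := mul_mem hu' (inv_mem hu)
  have e : u' = y * u := by simp [hy]
  have hc := count_len cs _ y hym rfl
  have h1 : ∑ v : Rt cs I, ep (v : B → ℝ) * ep (rep cs y v) =
      ∑ v : Rt cs I, ep (rep cs u v) * ep (rep cs u' v) := by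
    rw [← Equiv.sum_comp (rperm cs hu)]
    refine Finset.sum_congr rfl fun v _ => ?_
    simp only [rperm, Equiv.coe_fn_mk]
    rw [← rep_mul, ← e]
  have one : ∀ c : EuclideanSpace ℝ (Rt cs I),
      ∑ v : Rt cs I, (if io cs I v = c then (2 : ℝ) else 0) ≤ 2 := by
    intro c
    by_cases hex : ∃ v : Rt cs I, io cs I v = c
    · obtain ⟨v, hv⟩ := hex
      rw [Finset.sum_eq_single v]
      · rw [if_pos hv]
      · intro w _ hw
        rw [if_neg]
        intro hw'
        exact hw (Subtype.ext (io_inj cs hf w.2 v.2 (hw'.trans hv.symm)))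
      · simp
    · rw [Finset.sum_eq_zero]
      · norm_num
      · intro v _; rw [if_neg (fun hv => hex ⟨v, hv⟩)]
  have h2 : ∑ v : Rt cs I, (1 - ep (rep cs u v) * ep (rep cs u' v)) ≤
      ∑ v : Rt cs I, ((if io cs I v = a then (2 : ℝ) else 0) +
        (if io cs I v = -a then (2 : ℝ) else 0)) := by
    refine Finset.sum_le_sum fun v _ => ?_
    have hle : 1 - ep (rep cs u v) * ep (rep cs u' v) ≤ 2 := by
      rcases ep_sq (rep cs u v) with h1 | h1 <;> rcases ep_sq (rep cs u' v) with h2 | h2 <;>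
        rw [h1, h2] <;> norm_num
    by_cases c1 : io cs I v = a
    · rw [if_pos c1]; split_ifs <;> linarith
    · by_cases c2 : io cs I v = -a
      · rw [if_pos c2]; split_ifs <;> linarith
      · rw [if_neg c1, if_neg c2, ← h v v.2, ← h' v v.2,
          ha _ ((mem_Ph cs).2 ⟨v, v.2, rfl⟩) c1 c2, h' v v.2]
        rcases ep_sq (rep cs u' v) with h1 | h1 <;> rw [h1] <;> norm_num
  rw [Finset.sum_add_distrib, Finset.sum_sub_distrib, ← h1, hc] at h2
  have o1 := one a
  have o2 := one (-a)
  have h3 : (cs.length y : ℝ) ≤ 1 := by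
    rw [Finset.sum_const, Finset.card_univ, nsmul_eq_mul, mul_one] at h2
    linarith
  have h4 : cs.length y ≤ 1 := by exact_mod_cast h3
  by_cases hy1 : y = 1
  · left; rw [e, hy1, one_mul]
  · right
    obtain ⟨i, hi, y', _, ey, hl⟩ := parab_peel cs hym hy1
    have : y' = 1 := by rw [← cs.length_eq_zero_iff]; omega
    exact ⟨i, hi, by rw [e, ey, this, one_mul]⟩

end arr

/-- Twisted conjugation steps. -/
def TS (cs : CoxeterSystem M W) (I : Set B) (τ : B → B) (y y' : W) : Prop :=
  ∃ i ∈ I, y' = cs.simple (τ i) * y * cs.simple i ∧ cs.length y' ≤ cs.length y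

theorem gkp (hf : (parab cs I : Set W).Finite) (T : Tw cs I τ σ) {x : W} (hx : x ∈ parab cs I) :
    ∃ x' ∈ parab cs I, Relation.ReflTransGen (TS cs I τ) x x' ∧
      ∀ u ∈ parab cs I, cs.length x' ≤ cs.length (σ u * x * u⁻¹) := by
  classical
  let _ : Fintype (Rt cs I) := (rt_finite cs hf).fintype
  obtain ⟨e0, he0⟩ := exists_sperm cs hf T
  let e : Rt cs I ≃ Rt cs I := e0.trans (rperm cs (inv_mem hx))
  have he : ∀ v, (e v : B → ℝ) = rep cs x⁻¹ (Sg τ v) := by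
    intro v; simp only [e, Equiv.trans_apply, rperm, Equiv.coe_fn_mk, he0]
  let g : EuclideanSpace ℝ (Rt cs I) ≃ₗᵢ[ℝ] EuclideanSpace ℝ (Rt cs I) :=
    LinearIsometryEquiv.piLpCongrLeft 2 ℝ ℝ e
  have hg : ∀ v : Rt cs I, g (io cs I v) = io cs I (e v) := by
    intro v
    ext b
    have : g (io cs I v) b = io cs I v (e.symm b) := rfl
    rw [this, io_apply, io_apply]
    conv_rhs => rw [← e.apply_symm_apply b]
    rw [he, he, bil_rep, bil_Sg T.cox (rt_supp cs v.2) (rt_supp cs (e.symm b).2)]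
  have hA : Arr (Ph cs I) g := by
    constructor
    · intro a ha
      obtain ⟨b, hb, rfl⟩ := (mem_Ph cs).1 ha
      exact (mem_Ph cs).2 ⟨-b, rt_neg cs hb, map_neg _ _⟩
    · intro a ha
      obtain ⟨b, hb, rfl⟩ := (mem_Ph cs).1 ha
      exact (mem_Ph cs).2 ⟨e ⟨b, hb⟩, (e ⟨b, hb⟩).2, (hg ⟨b, hb⟩).symm⟩
    · intro a ha b hb c hc
      obtain ⟨a, ha', rfl⟩ := (mem_Ph cs).1 ha
      obtain ⟨b, hb', rfl⟩ := (mem_Ph cs).1 hb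
      clear ha hb
      have h1 : bil M b a = c * bil M a a :=
        congrArg (fun f : EuclideanSpace ℝ (Rt cs I) => f ⟨a, ha'⟩) hc
      have h2 : bil M b b = c * bil M a b :=
        congrArg (fun f : EuclideanSpace ℝ (Rt cs I) => f ⟨b, hb'⟩) hc
      rw [rt_bil cs ha'] at h1
      rw [rt_bil cs hb', bil_symm, h1] at h2
      have : (c - 1) * (c + 1) = 0 := by linarith
      rcases mul_eq_zero.1 this with h | h
      · left; rw [hc, show c = 1 by linarith, one_smul]
      · right; rw [hc, show c = -1 by linarith, neg_smul, one_smul]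
    · intro h0
      obtain ⟨b, hb, h⟩ := (mem_Ph cs).1 h0
      have h1 : bil M b b = 0 :=
        congrArg (fun f : EuclideanSpace ℝ (Rt cs I) => f ⟨b, hb⟩) h
      rw [rt_bil cs hb] at h1
      norm_num at h1
  obtain ⟨m, hm⟩ := thmA g _ (Ph cs I) rfl hA
  have hym : ∀ u ∈ parab cs I, σ u * x * u⁻¹ ∈ parab cs I := fun u hu =>
    mul_mem (mul_mem (tw_mem cs T u hu) hx) (inv_mem hu)
  have hDD : ∀ f u, Corr cs I f u → DD (Ph cs I) g f =
      Fintype.card (Rt cs I) - 4 * cs.length (σ u * x * u⁻¹) := by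
    rintro f u ⟨hu, h⟩
    have hy := hym u hu
    rw [← cs.length_inv, ← count_len cs _ _ (inv_mem hy) rfl]
    unfold DD
    rw [Ph, Finset.sum_image (fun a _ b _ hab => Subtype.ext (io_inj cs hf a.2 b.2 hab))]
    conv_rhs => rw [← Equiv.sum_comp e0, ← Equiv.sum_comp (rperm cs hu)]
    refine Finset.sum_congr rfl fun v _ => ?_
    rw [hg, h v v.2, h _ (e v).2, he, he0]
    simp only [rperm, Equiv.coe_fn_mk]
    rw [tw_ep cs T (rt_rep cs hu v.2), tw_rep cs T (rt_supp cs v.2) u hu]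
    congr 2
    rw [← rep_mul, ← rep_mul]
    congr 2
    group
  have flow : ∀ f f' u, Corr cs I f u → Relation.ReflTransGen (AStep (Ph cs I) g) f f' →
      ∃ u', Corr cs I f' u' ∧
        Relation.ReflTransGen (TS cs I τ) (σ u * x * u⁻¹) (σ u' * x * u'⁻¹) := by
    intro f f' u h hr
    induction hr with
    | refl => exact ⟨u, h, Relation.ReflTransGen.refl⟩
    | tail _ hs ih =>
      obtain ⟨u1, h1, hr1⟩ := ih
      obtain ⟨hg1, hg2, hadj, hle⟩ := hs
      obtain ⟨u2, h2⟩ := exists_corr cs hf hg2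
      refine ⟨u2, h2, ?_⟩
      rcases corr_adj cs hf h1 h2 hadj with rfl | ⟨i, hi, rfl⟩
      · exact hr1
      · refine hr1.tail ⟨i, hi, ?_, ?_⟩
        · rw [T.smul i hi u1 h1.1, mul_inv_rev, cs.inv_simple]; group
        · rw [hDD _ _ h1, hDD _ _ h2] at hle
          have : (cs.length (σ (cs.simple i * u1) * x * (cs.simple i * u1)⁻¹) : ℝ) ≤
            cs.length (σ u1 * x * u1⁻¹) := by linarith
          exact_mod_cast this
  have mono : ∀ f f', Relation.ReflTransGen (AStep (Ph cs I) g) f f' →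
      DD (Ph cs I) g f ≤ DD (Ph cs I) g f' := by
    intro f f' hr
    induction hr with
    | refl => exact le_rfl
    | tail _ hs ih => exact ih.trans hs.2.2.2
  obtain ⟨f0, hg0, hc0⟩ := corr_exists cs (one_mem (parab cs I))
  obtain ⟨f1, hr1, hg1, hm1⟩ := hm f0 hg0
  obtain ⟨u1, hc1, ht⟩ := flow f0 f1 1 hc0 hr1
  refine ⟨σ u1 * x * u1⁻¹, hym u1 hc1.1, ?_, ?_⟩
  · simpa [T.one] using ht
  · intro u hu
    obtain ⟨f2, hg2, hc2⟩ := corr_exists cs hu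
    obtain ⟨f3, hr3, hg3, hm3⟩ := hm f2 hg2
    have := mono _ _ hr3
    rw [hm3, ← hm1, hDD _ _ hc1, hDD _ _ hc2] at this
    have h' : (cs.length (σ u1 * x * u1⁻¹) : ℝ) ≤ cs.length (σ u * x * u⁻¹) := by linarith
    exact_mod_cast h'

end GKP

section Final
variable {B : Type*} [Fintype B] [DecidableEq B] {W : Type*} [Group W] {M : CoxeterMatrix B}
  (cs : CoxeterSystem M W) {J J' : Set B} {δ : parab cs J ≃* parab cs J'}

lemma order_dvd {i j : B} (hij : i ≠ j) {n : ℕ} (h : (cs.simple i * cs.simple j) ^ n = 1) :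
    M i j ∣ n := by
  have h1 := rf_rot_pow M i j n 0
  have h2 : (rf M i * rf M j) ^ n = 1 := by
    rw [← rep_simple cs i, ← rep_simple cs j, ← map_mul, ← map_pow, h, map_one]
  rw [h2] at h1
  have hm1 := M.off_diagonal i j hij
  have a1 := congrFun h1 i
  have a2 := congrFun h1 j
  simp [hij, hij.symm, cc_zero, cc_one _ hm1] at a1 a2
  by_cases h0 : M i j = 0
  · rw [h0] at a2 ⊢
    simp [cc] at a2
    simp [a2]
  · have hs := sin_pos_of (M i j) (by omega)
    have hm : (M i j : ℝ) ≠ 0 := by exact_mod_cast h0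
    simp only [cc, if_neg h0] at a1 a2
    set t := Real.pi / (M i j : ℝ) with ht
    have b2 : Real.sin (((2 * n : ℕ) : ℝ) * t) = 0 := by
      rcases div_eq_zero_iff.1 a2.symm with h | h
      · exact h
      · exact absurd h hs.ne'
    have b1 : Real.sin (((2 * n + 1 : ℕ) : ℝ) * t) = Real.sin t := by
      field_simp at a1; linarith
    push_cast at b1 b2
    rw [add_mul, one_mul, Real.sin_add, b2, zero_mul, zero_add] at b1
    have b3 : Real.cos (2 * n * t) = 1 := by
      apply mul_right_cancel₀ hs.ne'
      rw [b1, one_mul]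
    obtain ⟨k, hk⟩ := (Real.cos_eq_one_iff _).1 b3
    have : (k : ℝ) * (M i j : ℝ) = n := by
      rw [ht] at hk
      field_simp at hk
      have hpi := Real.pi_pos
      nlinarith
    have h' : k * (M i j : ℤ) = n := by exact_mod_cast this
    exact Int.natCast_dvd_natCast.1 ⟨k, by rw [← h', mul_comm]⟩

lemma M_eq_of {i j i' j' : B} (hij : i ≠ j) (hij' : i' ≠ j')
    (h : ∀ n, (cs.simple i * cs.simple j) ^ n = 1 ↔ (cs.simple i' * cs.simple j') ^ n = 1) :
    M i' j' = M i j :=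
  Nat.dvd_antisymm (order_dvd cs hij' ((h _).1 (cs.simple_mul_simple_pow i j)))
    (order_dvd cs hij ((h _).2 (cs.simple_mul_simple_pow i' j')))

variable {d : B → B}

lemma letter_inj (hd : LetterMap cs J J' δ d) {i j : B} (hi : i ∈ J) (hj : j ∈ J)
    (h : d i = d j) : i = j := by
  have h1 := (hd i hi).2
  rw [h, ← (hd j hj).2] at h1
  have h2 := δ.injective (Subtype.ext h1)
  exact simple_inj cs (congrArg Subtype.val h2)

lemma letter_M (hd : LetterMap cs J J' δ d) {i j : B} (hi : i ∈ J) (hj : j ∈ J) (hij : i ≠ j)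
    (n : ℕ) : (cs.simple i * cs.simple j) ^ n = 1 ↔ (cs.simple (d i) * cs.simple (d j)) ^ n = 1 := by
  have e1 : ((sJ cs J i hi * sJ cs J j hj) ^ n = 1) ↔ (cs.simple i * cs.simple j) ^ n = 1 := by
    rw [Subtype.ext_iff]; rfl
  have e2 : (δ ((sJ cs J i hi * sJ cs J j hj) ^ n) = 1) ↔
      (cs.simple (d i) * cs.simple (d j)) ^ n = 1 := by
    rw [Subtype.ext_iff, map_pow, map_mul, ← (hd i hi).2, ← (hd j hj).2]; rfl
  rw [← e1, ← e2, map_eq_one_iff δ δ.injective]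

open Classical in
/-- Conjugated twist. -/
noncomputable def sgm (cs : CoxeterSystem M W) (J J' : Set B) (δ : parab cs J ≃* parab cs J')
    (a : W) (u : W) : W :=
  if h : u ∈ parab cs J then a⁻¹ * (δ ⟨u, h⟩ : W) * a else 1

lemma exists_tw (hd : LetterMap cs J J' δ d) (a : W) :
    ∃ τ, Tw cs (Iset cs J J' δ a) τ (sgm cs J J' δ a) ∧
      ∀ i ∈ Iset cs J J' δ a, cs.simple (d i) * a = a * cs.simple (τ i) := by
  classical
  have hs := Iset_special cs (J := J) (J' := J') (δ := δ) a
  have hJ : Iset cs J J' δ a ⊆ J := hs.1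
  have hf := fwd cs hd hs
  choose! τ h1 h2 using hf
  have e : ∀ i ∈ Iset cs J J' δ a, cs.simple (τ i) = a⁻¹ * cs.simple (d i) * a := by
    intro i hi; rw [mul_assoc, h2 i hi, inv_mul_cancel_left]
  refine ⟨τ, ⟨h1, ?_, ?_, ?_⟩, h2⟩
  · intro i hi j hj
    by_cases hij : i = j
    · rw [hij, M.diagonal, M.diagonal]
    · have hτ : τ i ≠ τ j := by
        intro h
        apply hij
        apply letter_inj cs hd (hJ hi) (hJ hj)
        apply simple_inj cs
        apply mul_right_cancel (b := a)
        rw [h2 i hi, h2 j hj, h]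
      apply M_eq_of cs hij hτ
      intro n
      rw [letter_M cs hd (hJ hi) (hJ hj) hij, e i hi, e j hj]
      have : a⁻¹ * cs.simple (d i) * a * (a⁻¹ * cs.simple (d j) * a) =
          a⁻¹ * (cs.simple (d i) * cs.simple (d j)) * a⁻¹⁻¹ := by group
      rw [this, conj_pow, conj_eq_one_iff]
  · rw [sgm, dif_pos (one_mem _)]
    have : (⟨1, one_mem _⟩ : parab cs J) = 1 := rfl
    rw [this, map_one]; simp
  · intro i hi u hu
    have hu' := parab_mono cs hJ hu
    rw [sgm, sgm, dif_pos hu', dif_pos (mul_mem (simple_mem cs (hJ hi)) hu')]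
    have : (⟨cs.simple i * u, mul_mem (simple_mem cs (hJ hi)) hu'⟩ : parab cs J) =
      sJ cs J i (hJ hi) * ⟨u, hu'⟩ := rfl
    rw [this, map_mul, Subgroup.coe_mul, (hd i (hJ hi)).2, e i hi]
    group

lemma toRel_orbit {v v' : W} (h : ToRel cs J J' δ v v') :
    ∃ u : parab cs J, v' = (δ u : W) * v * (u : W)⁻¹ := by
  induction h with
  | refl => exact ⟨1, by simp⟩
  | tail _ hs ih =>
    obtain ⟨u, rfl⟩ := ih
    obtain ⟨i, hi, e, _⟩ := hs
    refine ⟨sJ cs J i hi * u, ?_⟩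
    rw [e, map_mul, Subgroup.coe_mul, Subgroup.coe_mul, mul_inv_rev]
    have : ((sJ cs J i hi : parab cs J) : W)⁻¹ = cs.simple i := cs.inv_simple i
    rw [this]; group

lemma toRel_length {v v' : W} (h : ToRel cs J J' δ v v') : cs.length v' ≤ cs.length v := by
  induction h with
  | refl => exact le_rfl
  | tail _ hs ih => exact hs.choose_spec.choose_spec.2.trans ih

theorem main_aux (hd : LetterMap cs J J' δ d) (hfin : (parab cs J : Set W).Finite)
    (w w' : W) (hw' : IsMinRep cs J w') (hproj : w ∈ orbSet cs J J' δ (coset cs J J' δ w')) :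
    ∃ x ∈ parab cs (Iset cs J J' δ w'), ToRel cs J J' δ w (w' * x) ∧
      ∀ y ∈ orbitOf cs J J' δ w, cs.length (w' * x) ≤ cs.length y := by
  have hJ : Iset cs J J' δ w' ⊆ J := (Iset_special cs w').1
  have hle := parab_mono cs hJ
  obtain ⟨u0, _, ⟨v0, hv0, rfl⟩, ew⟩ := hproj
  obtain ⟨a, x0, ha, hx0, hr0⟩ := part1 cs hd w
  obtain ⟨u1, e1⟩ := toRel_orbit cs hr0
  obtain ⟨rfl, -⟩ := part2 cs hd hw' ha _ (u1 * u0) v0 x0 rfl hv0 hx0 (by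
    rw [e1, ew, map_mul, Subgroup.coe_mul, Subgroup.coe_mul]; group)
  obtain ⟨τ, T, hτ⟩ := exists_tw cs hd a
  obtain ⟨x, hx, hrx, hmin⟩ := gkp cs (hfin.subset hle) T hx0
  refine ⟨x, hx, ?_, ?_⟩
  · refine hr0.trans ?_
    have lift : ∀ z, Relation.ReflTransGen (TS cs (Iset cs J J' δ a) τ) x0 z →
        z ∈ parab cs (Iset cs J J' δ a) ∧ ToRel cs J J' δ (a * x0) (a * z) := by
      intro z hz
      induction hz with
      | refl => exact ⟨hx0, Relation.ReflTransGen.refl⟩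
      | @tail y z _ hs ih =>
        obtain ⟨i, hi, e, hl⟩ := hs
        have hz : z ∈ parab cs (Iset cs J J' δ a) := by
          rw [e]
          exact mul_mem (mul_mem (simple_mem cs (T.map i hi)) ih.1) (simple_mem cs hi)
        refine ⟨hz, ih.2.tail (step_of cs hd (hJ hi) ?_ ?_)⟩
        · rw [e, ← mul_assoc, ← mul_assoc, ← mul_assoc, hτ i hi]
        · rw [length_add cs ha (hle hz), length_add cs ha (hle ih.1)]; omega
    exact (lift x hrx).2
  · rintro y ⟨u, v, hv, ey⟩
    rw [Set.mem_singleton_iff] at hv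
    subst hv
    obtain ⟨a', x', ha', hx', hr'⟩ := part1 cs hd y
    obtain ⟨u2, e2⟩ := toRel_orbit cs hr'
    obtain ⟨rfl, r, hr, e⟩ := part2 cs hd ha ha' _ (u2 * u * u1⁻¹) x0 x' rfl hx0 hx' (by
      rw [mul_assoc _ a x0, e1, e2, ey]
      simp only [map_mul, map_inv, Subgroup.coe_mul, Subgroup.coe_inv]
      group)
    refine le_trans ?_ (toRel_length cs hr')
    rw [length_add cs ha (hle hx), length_add cs ha (hle hx')]
    have h1 := hmin r hr
    have h2 : sgm cs J J' δ a' r * x0 * (r : W)⁻¹ = x' := by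
      rw [sgm, dif_pos r.2]
      have : (δ ⟨(r : W), r.2⟩ : W) = δ r := rfl
      rw [this]
      have e3 : a'⁻¹ * ((δ r : W) * a' * x0) * (r : W)⁻¹ = x' := by rw [e]; group
      rw [← e3]; group
    rw [h2] at h1
    omega

end Final

/-- Assume `W_J` is finite. If `w' = π_{J,δ}(w)`, then
`w →_{J,δ} w' x` for some `x ∈ W_{I(J,w',δ)}` such that `w' x` has minimal
length in the `δ`-twisted `W_J`-conjugacy class of `w`. -/
theorem stmt6 (hδ : MapsSimples cs J J' δ)
    (hfin : (parab cs J : Set W).Finite)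
    (w w' : W) (hw' : IsMinRep cs J w')
    (hproj : w ∈ orbSet cs J J' δ (coset cs J J' δ w')) :
    ∃ x ∈ parab cs (Iset cs J J' δ w'), ToRel cs J J' δ w (w' * x) ∧
      ∀ y ∈ orbitOf cs J J' δ w, cs.length (w' * x) ≤ cs.length y := by
  classical
  cases nonempty_fintype B
  obtain ⟨d, hd⟩ := exists_letterMap cs hδ
  exact main_aux cs hd hfin w w' hw' hproj


end PartialConjugation
end

section
/- Assume that W_J is finite. Then every orbit O of the δ-twisted partial conjugation action of W_J on W contains an element v with ℓ(v) ≤ ℓ(v') for all v' ∈ O and such that v = w x for some w ∈ W^J and x ∈ W_{I(J,w,δ)}. -/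
open CoxeterSystem

variable {B : Type*} [Finite B] {W : Type*} [Group W] {M : CoxeterMatrix B}

namespace PartialConjugation

variable (cs : CoxeterSystem M W) (J J' : Set B) (δ : parab cs J ≃* parab cs J')

section helpers
variable {B : Type*} {W : Type*} [Group W] {M : CoxeterMatrix B}
theorem end_mul_apply {α : Type*} (f g : Function.End α) (x : α) : (f * g) x = f (g x) := rfl

open Classical in
/-- generator action on reflections with sign -/
noncomputable def eta (cs : CoxeterSystem M W) (i : B) : Function.End (W × ZMod 2) :=
  fun p => (cs.simple i * p.1 * cs.simple i, p.2 + if p.1 = cs.simple i then 1 else 0)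

open Classical in
theorem eta_pair_pow (cs : CoxeterSystem M W) (i i' : B) (m : ℕ) (p : W × ZMod 2) :
    ((eta cs i * eta cs i') ^ m) p =
      ((cs.simple i * cs.simple i') ^ m * p.1 * ((cs.simple i * cs.simple i') ^ m)⁻¹,
        p.2 + ∑ n ∈ Finset.range (2 * m),
          if p.1 = ((cs.simple i * cs.simple i') ^ n)⁻¹ * cs.simple i' then 1 else 0) := by
  induction m with
  | zero => simp [Function.End.one_def]
  | succ m ih =>
    rw [pow_succ', end_mul_apply, ih, end_mul_apply]
    have key : ∀ k : ℕ, cs.simple i' * (cs.simple i * cs.simple i') ^ k =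
        ((cs.simple i * cs.simple i') ^ k)⁻¹ * cs.simple i' := by
      intro k
      have : cs.simple i' * (cs.simple i * cs.simple i') ^ k * (cs.simple i')⁻¹ =
        ((cs.simple i * cs.simple i') ^ k)⁻¹ := by
        rw [← conj_pow, ← inv_pow]
        simp [mul_assoc]
      rw [← this]; simp
    set r := cs.simple i * cs.simple i' with hr
    have hri : r⁻¹ = cs.simple i' * cs.simple i := by simp [hr]
    simp only [eta]
    refine Prod.ext ?_ ?_
    · simp only [pow_succ', mul_inv_rev, hri]
      simp [hr, mul_assoc]
    · simp only
      rw [show 2 * (m + 1) = 2 * m + 1 + 1 by ring, Finset.sum_range_succ, Finset.sum_range_succ,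
        add_assoc, add_assoc, add_assoc]
      congr 2
      congr 1
      · congr 1
        rw [mul_inv_eq_iff_eq_mul, key, ← eq_inv_mul_iff_mul_eq.symm.symm, two_mul, pow_add]
        simp [mul_assoc]
      · congr 1
        have e1 : cs.simple i' * (r ^ m * p.1 * (r ^ m)⁻¹) * cs.simple i' = cs.simple i ↔
          p.1 = (r^m)⁻¹ * (cs.simple i' * cs.simple i * cs.simple i') * r^m := by
          constructor
          · intro h
            rw [← h]; simp [mul_assoc]
          · intro h
            rw [h]; simp [mul_assoc]
        rw [e1, ← hri, mul_assoc, mul_assoc, key,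
          show 2 * m + 1 = m + (1 + m) by ring, pow_add, pow_add, pow_one]
        simp [mul_assoc]

theorem eta_liftable (cs : CoxeterSystem M W) : M.IsLiftable (eta cs) := by
  classical
  intro i i'
  funext p
  rw [eta_pair_pow]
  have h : (cs.simple i * cs.simple i') ^ M i i' = 1 := cs.simple_mul_simple_pow i i'
  rw [h, two_mul, Finset.sum_range_add]
  simp only [pow_add, h, one_mul]
  rw [CharTwo.add_self_eq_zero]
  simp [Function.End.one_def]

open Classical in
theorem eta_word (cs : CoxeterSystem M W) (ω : List B) (t : W) (e : ZMod 2) :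
    (ω.map (eta cs)).prod (t, e) =
      (cs.wordProd ω * t * (cs.wordProd ω)⁻¹, e + ((cs.rightInvSeq ω).count t : ZMod 2)) := by
  induction ω with
  | nil => simp [Function.End.one_def]
  | cons i ω ih =>
    rw [List.map_cons, List.prod_cons, end_mul_apply, ih]
    simp only [eta, cs.wordProd_cons, CoxeterSystem.rightInvSeq, List.count_cons]
    refine Prod.ext ?_ ?_
    · simp [mul_assoc]
    · simp only [Nat.cast_add, add_assoc]
      congr 2
      push_cast
      simp only [beq_iff_eq]
      congr 1
      rw [eq_iff_iff]
      constructor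
      · intro h; rw [← h]; simp [mul_assoc]
      · intro h; rw [← h]; simp [mul_assoc]

open Classical in
theorem count_parity (cs : CoxeterSystem M W) (ω ω' : List B) (h : cs.wordProd ω = cs.wordProd ω')
    (t : W) : ((cs.rightInvSeq ω).count t : ZMod 2) = ((cs.rightInvSeq ω').count t : ZMod 2) := by
  have key : ∀ ω : List B, cs.lift ⟨eta cs, eta_liftable cs⟩ (cs.wordProd ω) =
      (ω.map (eta cs)).prod := by
    intro ω
    rw [CoxeterSystem.wordProd, map_list_prod, List.map_map]
    congr 2
    funext i
    simp
  have := congrArg (fun f => (f (t, 0)).2) ((key ω).symm.trans ((congrArg _ h).trans (key ω')))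
  simpa [eta_word] using this

theorem exch (cs : CoxeterSystem M W) (ω : List B) (b : B)
    (hb : cs.length (cs.wordProd ω * cs.simple b) < cs.length (cs.wordProd ω)) :
    ∃ j < ω.length, cs.wordProd ω * cs.simple b = cs.wordProd (ω.eraseIdx j) := by
  classical
  have hmem : cs.simple b ∈ cs.rightInvSeq ω := by
    by_contra hn
    obtain ⟨ω', hr, he⟩ := cs.exists_isReduced (cs.wordProd ω * cs.simple b)
    have h1 : cs.wordProd (ω' ++ [b]) = cs.wordProd ω := by
      rw [cs.wordProd_append, ← he]; simp
    have h2 := count_parity cs _ _ h1 (cs.simple b)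
    rw [List.count_eq_zero_of_not_mem hn, ← List.concat_eq_append,
      CoxeterSystem.rightInvSeq_concat, List.concat_eq_append, List.count_append] at h2
    have h3 : cs.simple b ∈ cs.rightInvSeq ω' := by
      by_contra hn'
      rw [List.count_eq_zero_of_not_mem] at h2
      · simp at h2
      · intro hh
        obtain ⟨x, hx, hxe⟩ := List.mem_map.1 hh
        apply hn'
        have : x = cs.simple b := by
          have := congrArg (fun y => cs.simple b * y * cs.simple b) hxe
          simpa [MulAut.conj_apply, mul_assoc] using this
        rwa [← this]
    have h4 := (cs.isRightInversion_of_mem_rightInvSeq hr h3).2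
    rw [← he] at h4
    simp at h4
    omega
  obtain ⟨j, hj, hje⟩ := List.getElem_of_mem hmem
  refine ⟨j, by simpa using hj, ?_⟩
  rw [← cs.wordProd_mul_getD_rightInvSeq, ← hje, List.getD_eq_getElem _ _ hj]

/-- words with letters in `A` -/
def AWord (cs : CoxeterSystem M W) (A : Set W) (L : List B) : Prop := ∀ b ∈ L, cs.simple b ∈ A

theorem AWord.mem {cs : CoxeterSystem M W} {A : Set W} {L : List B} (h : AWord cs A L) :
    cs.wordProd L ∈ Subgroup.closure A := by
  induction L with
  | nil => simp [one_mem]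
  | cons b L ih =>
    rw [cs.wordProd_cons]
    exact mul_mem (Subgroup.subset_closure (h b (by simp)))
      (ih (fun c hc => h c (by simp [hc])))

theorem exists_aword (cs : CoxeterSystem M W) {A : Set W} (hA : A ⊆ Set.range cs.simple) {y : W}
    (hy : y ∈ Subgroup.closure A) : ∃ L, AWord cs A L ∧ cs.wordProd L = y := by
  induction hy using Subgroup.closure_induction with
  | mem x hx =>
    obtain ⟨b, rfl⟩ := hA hx
    exact ⟨[b], by simpa [AWord] using hx, by simp⟩
  | one => exact ⟨[], by simp [AWord], by simp⟩
  | mul x y _ _ hx hy =>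
    obtain ⟨L, h1, rfl⟩ := hx
    obtain ⟨L', h2, rfl⟩ := hy
    refine ⟨L ++ L', ?_, cs.wordProd_append _ _⟩
    intro b hb
    rcases List.mem_append.1 hb with h | h
    · exact h1 b h
    · exact h2 b h
  | inv x _ hx =>
    obtain ⟨L, h1, rfl⟩ := hx
    exact ⟨L.reverse, fun b hb => h1 b (by simpa using hb), by simp⟩

/-- shortest words -/
def AShort (cs : CoxeterSystem M W) (A : Set W) (L : List B) : Prop :=
  AWord cs A L ∧ ∀ L', AWord cs A L' → cs.wordProd L' = cs.wordProd L → L.length ≤ L'.length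

theorem exists_ashort (cs : CoxeterSystem M W) {A : Set W} (hA : A ⊆ Set.range cs.simple) {y : W}
    (hy : y ∈ Subgroup.closure A) : ∃ L, AShort cs A L ∧ cs.wordProd L = y := by
  classical
  have hex : ∃ n, ∃ L, (AWord cs A L ∧ cs.wordProd L = y) ∧ L.length = n := by
    obtain ⟨L, hL⟩ := exists_aword cs hA hy
    exact ⟨_, L, hL, rfl⟩
  obtain ⟨L, ⟨h1, h2⟩, h3⟩ := Nat.find_spec hex
  refine ⟨L, ⟨h1, fun L' h1' h2' => ?_⟩, h2⟩
  rw [h3]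
  exact Nat.find_min' hex ⟨L', ⟨h1', h2'.trans h2⟩, rfl⟩

theorem length_min_mul (cs : CoxeterSystem M W) {A : Set W} {m : W}
    (hm : ∀ u ∈ Subgroup.closure A, cs.length m ≤ cs.length (m * u)) (L : List B)
    (hL : AShort cs A L) : cs.length (m * cs.wordProd L) = cs.length m + L.length := by
  induction L using List.reverseRecOn with
  | nil => simp
  | append_singleton L b ih =>
    have hb : cs.simple b ∈ A := hL.1 b (by simp)
    have hLw : AWord cs A L := fun c hc => hL.1 c (by simp [hc])
    have hL0 : AShort cs A L := by
      refine ⟨hLw, fun L' h1 h2 => ?_⟩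
      have := hL.2 (L' ++ [b]) (by
        intro c hc
        rcases List.mem_append.1 hc with h | h
        · exact h1 c h
        · rw [List.mem_singleton.1 h]; exact hb) (by
        rw [cs.wordProd_append, cs.wordProd_append, h2])
      simpa using this
    have ih := ih hL0
    rw [cs.wordProd_append, cs.wordProd_singleton, ← mul_assoc]
    rcases cs.length_mul_simple (m * cs.wordProd L) b with h | h
    · rw [h, ih]; simp [add_assoc]
    · exfalso
      obtain ⟨ω, hω, rfl⟩ := cs.exists_isReduced m
      obtain ⟨j, hj, he⟩ := exch cs (ω ++ L) b (by rw [cs.wordProd_append]; omega)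
      rw [cs.wordProd_append] at he
      by_cases hjω : j < ω.length
      · rw [List.eraseIdx_append_of_lt_length hjω, cs.wordProd_append] at he
        have h1 : cs.wordProd (ω.eraseIdx j) =
            cs.wordProd ω * (cs.wordProd L * cs.simple b * (cs.wordProd L)⁻¹) := by
          rw [← mul_assoc, ← mul_assoc, he]; simp
        have h2 := hm _ (mul_mem (mul_mem hLw.mem (Subgroup.subset_closure hb)) (inv_mem hLw.mem))
        rw [← h1, hω.eq] at h2
        have h3 := cs.length_wordProd_le (ω.eraseIdx j)
        have h4 := List.length_eraseIdx_add_one hjω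
        omega
      · rw [List.eraseIdx_append_of_length_le (not_lt.1 hjω), cs.wordProd_append, mul_assoc] at he
        have h1 := mul_left_cancel he
        have h2 := hL.2 (L.eraseIdx (j - ω.length))
          (fun c hc => hLw c (List.mem_of_mem_eraseIdx hc))
          (by rw [← h1, cs.wordProd_append]; simp)
        have h3 := List.length_eraseIdx_le L (j - ω.length)
        simp at h2
        omega

/-- no right descents in `A` -/
def NoRD (cs : CoxeterSystem M W) (A : Set W) (w : W) : Prop :=
  ∀ a ∈ A, cs.length w ≤ cs.length (w * a)

theorem NoRD.min {cs : CoxeterSystem M W} {A : Set W} (hA : A ⊆ Set.range cs.simple) {w : W}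
    (hw : NoRD cs A w) : ∀ u ∈ Subgroup.closure A, cs.length w ≤ cs.length (w * u) := by
  classical
  have hex : ∃ n, ∃ u ∈ Subgroup.closure A, cs.length (w * u) = n := ⟨_, 1, one_mem _, rfl⟩
  obtain ⟨u, hu, hn⟩ := Nat.find_spec hex
  have hm : ∀ v ∈ Subgroup.closure A, cs.length (w * u) ≤ cs.length (w * u * v) := by
    intro v hv
    rw [hn]
    exact Nat.find_min' hex ⟨u * v, mul_mem hu hv, by rw [mul_assoc]⟩
  obtain ⟨L, hL, he⟩ := exists_ashort cs hA (inv_mem hu)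
  rcases List.eq_nil_or_concat L with rfl | ⟨L0, b, rfl⟩
  · have : u = 1 := by simpa using he.symm
    subst this
    simpa using hm
  · exfalso
    have h1 := length_min_mul cs hm _ hL
    rw [he] at h1
    have hb : cs.simple b ∈ A := hL.1 b (by simp)
    have h2 := hw _ hb
    have h3 : w * cs.simple b = w * u * cs.wordProd L0 := by
      rw [cs.wordProd_concat] at he
      have : cs.wordProd L0 = u⁻¹ * cs.simple b := by rw [← he]; simp
      rw [this]; simp [mul_assoc]
    rw [h3] at h2
    have h4 := cs.length_mul_le (w * u) (cs.wordProd L0)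
    have h5 := cs.length_wordProd_le L0
    simp at h1
    omega

theorem NoRD.word {cs : CoxeterSystem M W} {A : Set W} (hA : A ⊆ Set.range cs.simple) {w : W}
    (hw : NoRD cs A w) {y : W} (hy : y ∈ Subgroup.closure A) :
    ∃ L, AWord cs A L ∧ cs.wordProd L = y ∧ L.length = cs.length y ∧
      cs.length (w * y) = cs.length w + cs.length y := by
  obtain ⟨L, hL, rfl⟩ := exists_ashort cs hA hy
  have h1 := length_min_mul cs (hw.min hA) L hL
  have h2 := cs.length_mul_le w (cs.wordProd L)
  have h3 := cs.length_wordProd_le L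
  exact ⟨L, hL.1, rfl, by omega, by omega⟩

/-- no left descents in `A` -/
def NoLD (cs : CoxeterSystem M W) (A : Set W) (w : W) : Prop :=
  ∀ a ∈ A, cs.length w ≤ cs.length (a * w)

theorem NoLD.word {cs : CoxeterSystem M W} {A : Set W} (hA : A ⊆ Set.range cs.simple) {w : W}
    (hw : NoLD cs A w) {y : W} (hy : y ∈ Subgroup.closure A) :
    ∃ L, AWord cs A L ∧ cs.wordProd L = y ∧ L.length = cs.length y ∧
      cs.length (y * w) = cs.length y + cs.length w := by
  have h : NoRD cs A w⁻¹ := by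
    intro a ha
    obtain ⟨b, rfl⟩ := hA ha
    have := hw _ ha
    rw [← cs.length_inv, ← cs.length_inv (cs.simple b * w)] at this
    simpa using this
  obtain ⟨L, h1, h2, h3, h4⟩ := h.word hA (inv_mem hy)
  refine ⟨L.reverse, fun b hb => h1 b (by simpa using hb), by simp [h2], by simp [h3], ?_⟩
  rw [← mul_inv_rev, cs.length_inv, cs.length_inv, cs.length_inv] at h4
  omega

/-- decomposition along a double coset -/
theorem decomp (cs : CoxeterSystem M W) {A A' : Set W} (hA : A ⊆ Set.range cs.simple)
    (hA' : A' ⊆ Set.range cs.simple) (n : ℕ) : ∀ z : W, cs.length z = n →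
    ∃ L' w L, AWord cs A' L' ∧ AWord cs A L ∧ NoLD cs A' w ∧ NoRD cs A w ∧
      z = cs.wordProd L' * w * cs.wordProd L ∧ L'.length + cs.length w + L.length = n := by
  induction n using Nat.strong_induction_on with
  | _ n ih =>
  intro z hz
  by_cases h1 : NoRD cs A z
  · by_cases h2 : NoLD cs A' z
    · exact ⟨[], z, [], by simp [AWord], by simp [AWord], h2, h1, by simp, by simpa using hz⟩
    · simp only [NoLD, not_forall, not_le] at h2
      obtain ⟨a, ha, hlt⟩ := h2
      obtain ⟨b, rfl⟩ := hA' ha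
      obtain ⟨L', w, L, h3, h4, h5, h6, h7, h8⟩ := ih _ (hz ▸ hlt) _ rfl
      refine ⟨b :: L', w, L, ?_, h4, h5, h6, ?_, ?_⟩
      · intro c hc
        rcases List.mem_cons.1 hc with rfl | h
        · exact ha
        · exact h3 c h
      · rw [cs.wordProd_cons, mul_assoc, mul_assoc, ← mul_assoc _ w, ← h7]; simp
      · have := cs.length_simple_mul z b
        simp; omega
  · simp only [NoRD, not_forall, not_le] at h1
    obtain ⟨a, ha, hlt⟩ := h1
    obtain ⟨b, rfl⟩ := hA ha
    obtain ⟨L', w, L, h3, h4, h5, h6, h7, h8⟩ := ih _ (hz ▸ hlt) _ rfl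
    refine ⟨L', w, L ++ [b], h3, ?_, h5, h6, ?_, ?_⟩
    · intro c hc
      rcases List.mem_append.1 hc with h | h
      · exact h4 c h
      · rw [List.mem_singleton.1 h]; exact ha
    · rw [cs.wordProd_append, ← mul_assoc, ← h7]; simp
    · have := cs.length_mul_simple z b
      simp; omega

theorem noRD_mul {cs : CoxeterSystem M W} {A A' : Set W} (hA : A ⊆ Set.range cs.simple)
    (hA' : A' ⊆ Set.range cs.simple) {w0 w' : W} (hl : NoLD cs A' w0) (hr : NoRD cs A w0)
    (hw' : w' ∈ Subgroup.closure A')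
    (hmin : ∀ a ∈ A, w0 * a * w0⁻¹ ∈ A' → cs.length w' ≤ cs.length (w' * (w0 * a * w0⁻¹))) :
    NoRD cs A (w' * w0) := by
  intro a ha
  by_contra hlt
  obtain ⟨b, rfl⟩ := hA ha
  obtain ⟨L, h1, rfl, h3, h4⟩ := hl.word hA' hw'
  obtain ⟨ω, hω, rfl⟩ := cs.exists_isReduced w0
  obtain ⟨j, hj, he⟩ := exch cs (L ++ ω) b (by rw [cs.wordProd_append]; omega)
  rw [cs.wordProd_append] at he
  by_cases hjL : j < L.length
  · rw [List.eraseIdx_append_of_lt_length hjL, cs.wordProd_append] at he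
    have hL2 : AWord cs A' (L.eraseIdx j) := fun c hc => h1 c (List.mem_of_mem_eraseIdx hc)
    have e1 : cs.wordProd (L.eraseIdx j) =
        cs.wordProd L * (cs.wordProd ω * cs.simple b * (cs.wordProd ω)⁻¹) := by
      rw [← mul_assoc, ← mul_assoc, he]; simp
    have e2 : cs.wordProd ω * cs.simple b * (cs.wordProd ω)⁻¹ ∈ Subgroup.closure A' := by
      have := mul_mem (inv_mem h1.mem) hL2.mem
      rw [e1] at this
      simpa using this
    obtain ⟨L2, g1, g2, g3, g4⟩ := hl.word hA' e2
    have g5 := hr _ ha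
    have g6 := cs.length_mul_simple (cs.wordProd ω) b
    rw [inv_mul_cancel_right] at g4
    have g7 : L2.length = 1 := by omega
    obtain ⟨c, rfl⟩ := List.length_eq_one_iff.1 g7
    have g8 := g1 c (by simp)
    rw [cs.wordProd_singleton] at g2
    rw [g2] at g8
    have g9 := hmin _ ha g8
    rw [← e1] at g9
    have g10 := cs.length_wordProd_le (L.eraseIdx j)
    have := List.length_eraseIdx_add_one hjL
    omega
  · rw [List.eraseIdx_append_of_length_le (not_lt.1 hjL), cs.wordProd_append, mul_assoc] at he
    have e1 := mul_left_cancel he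
    have g5 := hr _ ha
    rw [e1] at g5
    have g10 := cs.length_wordProd_le (ω.eraseIdx (j - L.length))
    have g11 : j - L.length < ω.length := by
      simp at hj; omega
    have := List.length_eraseIdx_add_one g11
    have := hω.eq
    omega

/-- twisted conjugation step attached to a set of pairs -/
def DStep (D : Set (W × W)) (v v' : W) : Prop := ∃ p ∈ D, v' = p.2 * v * p.1

theorem conjR (cs : CoxeterSystem M W) {D : Set (W × W)}
    (hD : ∀ p ∈ D, p.1 ∈ Set.range cs.simple ∧ p.2 ∈ Set.range cs.simple) (L : List B)
    (hL : AWord cs (Prod.fst '' D) L) : ∀ v : W, ∃ L2, AWord cs (Prod.snd '' D) L2 ∧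
      L2.length = L.length ∧
      Relation.ReflTransGen (DStep D) (v * cs.wordProd L) (cs.wordProd L2 * v) := by
  induction L using List.reverseRecOn with
  | nil => intro v; exact ⟨[], by simp [AWord], rfl, by simpa using Relation.ReflTransGen.refl⟩
  | append_singleton L b ih =>
    intro v
    obtain ⟨p, hp, hpb⟩ := hL b (by simp)
    obtain ⟨c, hc⟩ := (hD p hp).2
    obtain ⟨L2, h1, h2, h3⟩ := ih (fun c hc => hL c (by simp [hc])) (cs.simple c * v)
    refine ⟨L2 ++ [c], ?_, by simp [h2], ?_⟩
    · intro d hd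
      rcases List.mem_append.1 hd with h | h
      · exact h1 d h
      · rw [List.mem_singleton.1 h]; exact ⟨p, hp, hc.symm⟩
    · rw [cs.wordProd_append, cs.wordProd_append, cs.wordProd_singleton, cs.wordProd_singleton]
      refine Relation.ReflTransGen.head ⟨p, hp, rfl⟩ ?_
      rw [hpb, ← hc]
      simpa [mul_assoc] using h3

theorem conjL (cs : CoxeterSystem M W) {D : Set (W × W)}
    (hD : ∀ p ∈ D, p.1 ∈ Set.range cs.simple ∧ p.2 ∈ Set.range cs.simple) (L : List B)
    (hL : AWord cs (Prod.snd '' D) L) : ∀ v : W, ∃ L2, AWord cs (Prod.fst '' D) L2 ∧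
      L2.length = L.length ∧
      Relation.ReflTransGen (DStep D) (cs.wordProd L * v) (v * cs.wordProd L2) := by
  induction L with
  | nil => intro v; exact ⟨[], by simp [AWord], rfl, by simpa using Relation.ReflTransGen.refl⟩
  | cons b L ih =>
    intro v
    obtain ⟨p, hp, hpb⟩ := hL b (by simp)
    obtain ⟨c, hc⟩ := (hD p hp).1
    obtain ⟨L2, h1, h2, h3⟩ := ih (fun c hc => hL c (by simp [hc])) (v * cs.simple c)
    refine ⟨c :: L2, ?_, by simp [h2], ?_⟩
    · intro d hd
      rcases List.mem_cons.1 hd with rfl | h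
      · exact ⟨p, hp, hc.symm⟩
      · exact h1 d h
    · rw [cs.wordProd_cons, cs.wordProd_cons]
      refine Relation.ReflTransGen.head ⟨p, hp, rfl⟩ ?_
      rw [hpb, ← hc]
      simpa [mul_assoc] using h3

theorem conj_closure {K K' : Set W} (g : W) (h : ∀ k ∈ K', g⁻¹ * k * g ∈ K) {y : W}
    (hy : y ∈ Subgroup.closure K') : g⁻¹ * y * g ∈ Subgroup.closure K := by
  induction hy using Subgroup.closure_induction with
  | mem k hk => exact Subgroup.subset_closure (h k hk)
  | one => simp [one_mem]
  | mul a b _ _ ha hb =>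
    have h := mul_mem ha hb
    simpa [mul_assoc] using h
  | inv a _ ha =>
    have h := inv_mem ha
    simpa [mul_assoc] using h

theorem main_aux_s7 (cs : CoxeterSystem M W) (n : ℕ) : ∀ D : Set (W × W), D.Finite → D.ncard = n →
    (∀ p ∈ D, p.1 ∈ Set.range cs.simple ∧ p.2 ∈ Set.range cs.simple) → ∀ z : W,
    ∃ v, Relation.ReflTransGen (DStep D) z v ∧ cs.length v ≤ cs.length z ∧
      ∃ w, NoRD cs (Prod.fst '' D) w ∧ ∃ K : Set W, K ⊆ Prod.fst '' D ∧
        (∀ k ∈ K, ∃ p ∈ D, p.1 ∈ K ∧ w * k * w⁻¹ = p.2) ∧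
        ∃ x ∈ Subgroup.closure K, v = w * x := by
  induction n using Nat.strong_induction_on with
  | _ n ih =>
  intro D hfin hcard hD z
  have hA : Prod.fst '' D ⊆ Set.range cs.simple := by
    rintro _ ⟨p, hp, rfl⟩; exact (hD p hp).1
  have hA' : Prod.snd '' D ⊆ Set.range cs.simple := by
    rintro _ ⟨p, hp, rfl⟩; exact (hD p hp).2
  obtain ⟨L', w0, L, hL', hL, hl, hr, hz, hlen⟩ := decomp cs hA hA' _ z rfl
  by_cases hcase : ∀ p ∈ D, w0 * p.1 * w0⁻¹ ∈ Prod.snd '' D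
  · obtain ⟨L2, h1, h2, h3⟩ := conjL cs hD L' hL' (w0 * cs.wordProd L)
    rw [← mul_assoc, ← hz] at h3
    refine ⟨_, h3, ?_, w0, hr, Prod.fst '' D, subset_rfl, ?_,
      cs.wordProd L * cs.wordProd L2, mul_mem hL.mem h1.mem, by rw [mul_assoc]⟩
    · have := cs.length_mul_le (w0 * cs.wordProd L) (cs.wordProd L2)
      have := cs.length_mul_le w0 (cs.wordProd L)
      have := cs.length_wordProd_le L
      have := cs.length_wordProd_le L2
      omega
    · rintro _ ⟨p, hp, rfl⟩
      obtain ⟨q, hq, hqe⟩ := hcase p hp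
      exact ⟨q, hq, ⟨q, hq, rfl⟩, hqe.symm⟩
  · obtain ⟨L2, h1, h2, h3⟩ := conjR cs hD L hL (cs.wordProd L' * w0)
    set D0 : Set (W × W) := {p ∈ D | w0 * p.1 * w0⁻¹ ∈ Prod.snd '' D} with hD0
    set D' : Set (W × W) := (fun p => (w0 * p.1 * w0⁻¹, p.2)) '' D0 with hD'
    have hD0f : D0.Finite := hfin.subset (fun p hp => hp.1)
    have hlt : D'.ncard < n := by
      refine (Set.ncard_image_le hD0f).trans_lt ?_
      rw [← hcard]
      refine Set.ncard_lt_ncard ?_ hfin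
      refine ⟨fun p hp => hp.1, fun h => hcase fun p hp => (h hp).2⟩
    have hD's : ∀ p ∈ D', p.1 ∈ Prod.snd '' D ∧ p.2 ∈ Prod.snd '' D := by
      rintro _ ⟨p, hp, rfl⟩
      exact ⟨hp.2, ⟨p, hp.1, rfl⟩⟩
    obtain ⟨x', hx1, hx2, w', hw', K', hK'1, hK'2, y, hy, rfl⟩ := ih _ hlt D' (hD0f.image _) rfl
      (fun p hp => ⟨hA' (hD's p hp).1, hA' (hD's p hp).2⟩) (cs.wordProd L2 * cs.wordProd L')
    have hlift : ∀ a b, Relation.ReflTransGen (DStep D') a b →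
        Relation.ReflTransGen (DStep D) (a * w0) (b * w0) := by
      intro a b hab
      induction hab with
      | refl => exact .refl
      | tail _ h ih =>
        refine ih.tail ?_
        obtain ⟨_, ⟨p, hp, rfl⟩, rfl⟩ := h
        exact ⟨p, hp.1, by simp [mul_assoc]⟩
    have hclos : ∀ a b, Relation.ReflTransGen (DStep D') a b →
        a ∈ Subgroup.closure (Prod.snd '' D) → b ∈ Subgroup.closure (Prod.snd '' D) := by
      intro a b hab ha
      induction hab with
      | refl => exact ha
      | tail _ h ih =>
        obtain ⟨p, hp, rfl⟩ := h
        exact mul_mem (mul_mem (Subgroup.subset_closure (hD's p hp).2) ih)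
          (Subgroup.subset_closure (hD's p hp).1)
    have hK'A : K' ⊆ Prod.snd '' D := by
      intro k hk
      obtain ⟨p, hp, rfl⟩ := hK'1 hk
      exact (hD's p hp).1
    have hw'y := hclos _ _ hx1 (mul_mem h1.mem hL'.mem)
    have hw'm : w' ∈ Subgroup.closure (Prod.snd '' D) := by
      have := mul_mem hw'y (inv_mem (Subgroup.closure_mono hK'A hy))
      simpa using this
    refine ⟨w' * y * w0, ?_, ?_, w' * w0, ?_, {k ∈ Prod.fst '' D | w0 * k * w0⁻¹ ∈ K'},
      fun k hk => hk.1, ?_, w0⁻¹ * y * w0, ?_, by simp [mul_assoc]⟩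
    · rw [hz]
      refine h3.trans ?_
      rw [← mul_assoc]
      exact hlift _ _ hx1
    · have := cs.length_mul_le (w' * y) w0
      have := cs.length_mul_le (cs.wordProd L2) (cs.wordProd L')
      have := cs.length_wordProd_le L'
      have := cs.length_wordProd_le L2
      omega
    · refine noRD_mul hA hA' hl hr hw'm ?_
      rintro _ ⟨p, hp, rfl⟩ hpA
      exact hw' _ ⟨_, ⟨p, ⟨hp, hpA⟩, rfl⟩, rfl⟩
    · rintro k ⟨hk, hkK⟩
      obtain ⟨_, ⟨p, hp, rfl⟩, hq1, hq2⟩ := hK'2 _ hkK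
      refine ⟨p, hp.1, ⟨⟨p, hp.1, rfl⟩, hq1⟩, ?_⟩
      simp only at hq2
      rw [← hq2]; simp [mul_assoc]
    · refine conj_closure w0 ?_ hy
      intro k hk
      refine ⟨?_, by simpa [mul_assoc] using hk⟩
      obtain ⟨_, ⟨p, hp, rfl⟩, rfl⟩ := hK'1 hk
      exact ⟨p, hp.1, by simp [mul_assoc]⟩

end helpers

theorem stmt7 (hδ : MapsSimples cs J J' δ)
    (hfin : (parab cs J : Set W).Finite) (z : W) :
    ∃ v ∈ orbitOf cs J J' δ z,
      (∀ v' ∈ orbitOf cs J J' δ z, cs.length v ≤ cs.length v') ∧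
      ∃ w : W, IsMinRep cs J w ∧
        ∃ x ∈ parab cs (Iset cs J J' δ w), v = w * x := by
  classical
  set D : Set (W × W) := Set.range fun j : J => (cs.simple j.1, (δ (sJ cs J j.1 j.2) : W)) with hDdef
  have hD : ∀ p ∈ D, p.1 ∈ Set.range cs.simple ∧ p.2 ∈ Set.range cs.simple := by
    rintro _ ⟨j, rfl⟩
    obtain ⟨j', _, h⟩ := hδ.1 j.1 j.2
    exact ⟨⟨j, rfl⟩, ⟨j', h.symm⟩⟩
  have hfst : Prod.fst '' D = cs.simple '' J := by
    ext x
    constructor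
    · rintro ⟨_, ⟨j, rfl⟩, rfl⟩
      exact ⟨j, j.2, rfl⟩
    · rintro ⟨j, hj, rfl⟩
      exact ⟨_, ⟨⟨j, hj⟩, rfl⟩, rfl⟩
  have hex : ∃ n, ∃ v ∈ orbitOf cs J J' δ z, cs.length v = n :=
    ⟨_, z, ⟨1, z, rfl, by simp⟩, rfl⟩
  obtain ⟨z0, hz0, hn⟩ := Nat.find_spec hex
  have hmin : ∀ v' ∈ orbitOf cs J J' δ z, cs.length z0 ≤ cs.length v' := by
    intro v' hv'
    rw [hn]
    exact Nat.find_min' hex ⟨v', hv', rfl⟩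
  obtain ⟨v, h1, h2, w, hw, K, hK1, hK2, x, hx, hv⟩ := main_aux_s7 cs _ D (Set.finite_range _) rfl hD z0
  have horb : v ∈ orbitOf cs J J' δ z := by
    clear h2 hv
    induction h1 with
    | refl => exact hz0
    | tail _ h ih =>
      obtain ⟨_, ⟨j, rfl⟩, rfl⟩ := h
      obtain ⟨u, _, rfl, rfl⟩ := ih
      refine ⟨sJ cs J j.1 j.2 * u, _, rfl, ?_⟩
      simp [sJ, mul_assoc]
  refine ⟨v, horb, fun v' hv' => h2.trans (hmin v' hv'), w, ?_, x, ?_, hv⟩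
  · intro u hu
    refine hw.min ?_ u ?_
    · rw [hfst]; exact Set.image_subset_range _ _
    · rw [hfst]; exact hu
  · refine Subgroup.closure_mono ?_ hx
    intro k hk
    obtain ⟨_, ⟨j, rfl⟩, rfl⟩ := hK1 hk
    refine ⟨j, ⟨{i ∈ J | cs.simple i ∈ K}, ⟨fun i hi => hi.1, ?_⟩, ⟨j.2, hk⟩⟩, rfl⟩
    rintro i ⟨_, hi⟩
    obtain ⟨_, ⟨l, rfl⟩, hl, he⟩ := hK2 _ hi
    exact ⟨l, l.2, ⟨l.2, hl⟩, he⟩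

end PartialConjugation
end
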